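/- arXiv:1104.0500 — 2 statements merged into one kernel-verified Lean document; each statement's English description precedes it below -/
import Mathlib

section
/- Let G be a finite group, k a field, and M a finitely generated non-projective kG-module. Then Ext_{kG}^n(M, M) ≠ 0 for infinitely many integers n ≥ 0. -/
/-!
Suppose that `Ext^i(M, M) = 0` for all large `i`; it has to be shown that `M` is projective.  By
Higman's criterion (`IsTr.projective`) this holds as soon as the identity of `M` is a trace
`∑ h θ h⁻¹` over a subgroup `H` of invertible index in `k`.  In characteristic zero `H = 1` will do.
In characteristic `p` it is shown, by induction on the order, that the identity is a trace from every
`p`-subgroup (`Syz.isTr`); a Sylow subgroup then finishes the proof.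

For the induction step let `χ` be a character of `H` onto the group `C` of order `p`, and assume that
the identity is a trace from its kernel.  Let `Γ = G × C` act through `G` on spaces of linear maps into
`M`, let `U = 1 × C`, and let `L` be the graph of `χ`, a copy of `H` that meets `U` trivially.  Let `x`
be the class of degree two of `C`, inflated to `Γ`.  The step has three ingredients.

* *A power of `x` agrees over `L` with a class `a` that vanishes over `U`*
  (`IsSplit.exists_scalar`).  The join of the boundaries of the simplices spanned by the `U`-orbits on
  `Γ ⧸ L` is a sphere on which `Γ` acts.  Let `e` be its Euler class (`exists_euler`).  Since `U` acts
  freely on the sphere, multiplication by `e` is onto over `U` in high degrees, so a power of `x` is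
  a multiple of a power of `e` over `U`.  Since `L` fixes a vertex, `e` vanishes over `L`.  Take `a` to
  be the difference; an even power of `e` large enough to kill its sign character is used.

* *A power of `a` kills the identity of `M`* (`Splice.isB_it`).  For syzygies `W i` and a projective
  resolution `X i` of `M`, the sequences `Hom(W i, M) → Hom(X i, M) → Hom(W (i + 1), M)` are exact, and
  the middle terms have no cohomology over `G`.  As `a` vanishes over `U`, which acts trivially, its
  action factors through a connecting map (`Splice.exists_connect`), and so moves a class one step
  along the sequence.  When `i` is large the vanishing of Ext makes `Hom(W i, M)` acyclic over `G`, so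
  that its even classes over `Γ` are powers of `x` times invariants; the invariants lift to
  `Hom(X i, M)`, and the connecting map is zero on these classes.

* *If a power of `x` kills the identity over `L`, then the identity is a trace from `L`*
  (`Splice.exists_trace`).  The class `x` comes from the exact sequence
  `V → Fun(C, V) → Fun(C, V) → V`.  For `V = Hom(W 0, M)` the trace from the kernel of `χ` makes
  `Fun(C, V)` acyclic over `L`, so `x` is a non-zero-divisor in positive degrees, and an invariant
  killed by `x` is the sum of the values of an `L`-invariant function on `C`, which is a trace.

Cohomology is computed with homogeneous cochains on `Γ` that are equivariant for a subgroup, and the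
simplicial chains of the sphere are realised in the exterior algebra on its vertices.
-/

open CategoryTheory Opposite

noncomputable section

set_option linter.unusedSectionVars false

namespace SelfExt

/-! ### Homogeneous cochains and cup products -/

universe u v w

section Cochains
variable {k : Type*} [Field k] {Γ : Type*} [Group Γ]
variable {V : Type*} [AddCommGroup V] [Module k V]
variable {Y : Type*} [AddCommGroup Y] [Module k Y]
variable {W : Type*} [AddCommGroup W] [Module k W]

/-- The `i`-th face map on sequences: the strictly increasing map `ℕ → ℕ` that misses `i`. -/
def skip (i j : ℕ) : ℕ := if j < i then j else j + 1

/-- The homogeneous coboundary in degree `n`.  A cochain of degree `n` is encoded as a function of an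
infinite sequence `g` which depends only on `g 0, …, g n` (see `IsC.dep`); in this way no casts
between degrees are needed. -/
def cobd (n : ℕ) (f : (ℕ → Γ) → V) (g : ℕ → Γ) : V :=
  ∑ i ∈ Finset.range (n + 2), (-1 : ℤ) ^ i • f (fun j => g (skip i j))

/-- `f` is a homogeneous `U`-equivariant cochain of degree `n` with values in `A`.  The cochains of a
subgroup `U` are again functions on sequences in the big group `Γ`, on which `U` acts freely: so
restriction to a smaller subgroup is an inclusion of sets of cochains. -/
structure IsC (ρ : Representation k Γ V) (U : Subgroup Γ) (n : ℕ) (A : Submodule k V)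
    (f : (ℕ → Γ) → V) : Prop where
  dep : ∀ g g' : ℕ → Γ, (∀ i ≤ n, g i = g' i) → f g = f g'
  eqv : ∀ u ∈ U, ∀ g : ℕ → Γ, f (fun j => u * g j) = ρ u (f g)
  mem : ∀ g, f g ∈ A

lemma cobd_add (n : ℕ) (f f' : (ℕ → Γ) → V) : cobd n (f + f') = cobd n f + cobd n f' := by
  funext g; simp [cobd, Finset.sum_add_distrib]

lemma cobd_sub (n : ℕ) (f f' : (ℕ → Γ) → V) : cobd n (f - f') = cobd n f - cobd n f' := by
  funext g; simp [cobd, smul_sub]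

lemma cobd_zero (n : ℕ) : cobd n (0 : (ℕ → Γ) → V) = 0 := by
  funext g; simp [cobd]

lemma cobd_neg (n : ℕ) (f : (ℕ → Γ) → V) : cobd n (-f) = - cobd n f := by
  funext g; simp [cobd]

lemma cobd_map (n : ℕ) (f : (ℕ → Γ) → V) (φ : V →ₗ[k] Y) :
    cobd n (fun g => φ (f g)) = fun g => φ (cobd n f g) := by
  funext g; simp [cobd, map_sum, map_zsmul]

lemma cobd_smul (n : ℕ) (f : (ℕ → Γ) → V) (c : k) : cobd n (c • f) = c • cobd n f := by
  funext g
  simp only [cobd, Pi.smul_apply, Finset.smul_sum]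
  exact Finset.sum_congr rfl fun i _ => smul_comm _ _ _

lemma cobd_sum {ι : Type*} (s : Finset ι) (n : ℕ) (f : ι → (ℕ → Γ) → V) :
    cobd n (fun g => ∑ r ∈ s, f r g) = fun g => ∑ r ∈ s, cobd n (f r) g := by
  funext g
  simp only [cobd, Finset.smul_sum]
  exact Finset.sum_comm

lemma skip_skip {i j : ℕ} (h : j ≤ i) (l : ℕ) :
    skip j (skip i l) = skip (i + 1) (skip j l) := by
  unfold skip; split_ifs <;> omega

lemma cobd_cobd (n : ℕ) (f : (ℕ → Γ) → V) : cobd (n + 1) (cobd n f) = 0 := by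
  funext g
  simp only [cobd, Finset.smul_sum, Pi.zero_apply, smul_smul, ← pow_add]
  -- the pair `(i, j)` with `j < i` cancels against `(j, i - 1)`
  rw [← Finset.sum_product' (f := fun i j => (-1 : ℤ) ^ (i + j) •
    f (fun l => g (skip i (skip j l))))]
  refine Finset.sum_involution
    (fun p _ => if p.2 < p.1 then (p.2, p.1 - 1) else (p.2 + 1, p.1)) ?_ ?_ ?_ ?_
  · rintro ⟨i, j⟩ _
    dsimp only
    by_cases h : j < i
    · rw [if_pos h]
      obtain ⟨i, rfl⟩ : ∃ i', i = i' + 1 := ⟨i - 1, by omega⟩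
      have : (fun l => g (skip (i + 1) (skip j l))) = fun l => g (skip j (skip i l)) := by
        funext l; exact congrArg g (skip_skip (by omega) l).symm
      simp only [Nat.add_sub_cancel]
      rw [this, ← add_smul]
      have : (-1 : ℤ) ^ (i + 1 + j) + (-1) ^ (j + i) = 0 := by ring
      rw [this, zero_smul]
    · rw [if_neg h]
      have : (fun l => g (skip (j + 1) (skip i l))) = fun l => g (skip i (skip j l)) := by
        funext l; exact congrArg g (skip_skip (by omega) l).symm
      simp only [Nat.add_sub_cancel]
      rw [this, ← add_smul]
      have : (-1 : ℤ) ^ (i + j) + (-1) ^ (j + 1 + i) = 0 := by ring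
      rw [this, zero_smul]
  · rintro ⟨i, j⟩ _ _
    dsimp only
    split_ifs <;> simp only [ne_eq, Prod.mk.injEq] <;> omega
  · rintro ⟨i, j⟩ h
    simp only [Finset.mem_product, Finset.mem_range] at h
    dsimp only
    split_ifs <;> simp only [Finset.mem_product, Finset.mem_range] <;> omega
  · rintro ⟨i, j⟩ h
    dsimp only
    split_ifs <;> simp_all <;> omega

variable {ρ : Representation k Γ V} {U : Subgroup Γ} {n : ℕ} {A : Submodule k V}

lemma IsC.cobd {f : (ℕ → Γ) → V} (h : IsC ρ U n A f) : IsC ρ U (n + 1) A (cobd n f) where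
  dep g g' hg := by
    refine Finset.sum_congr rfl fun i hi => ?_
    rw [h.dep _ (fun j => g' (skip i j))]
    intro j hj
    apply hg
    unfold skip; split_ifs <;> omega
  eqv u hu g := by
    simp only [SelfExt.cobd, map_sum, map_zsmul]
    refine Finset.sum_congr rfl fun i hi => ?_
    rw [← h.eqv u hu]
  mem g := Submodule.sum_mem _ fun i _ => zsmul_mem (h.mem _) _

lemma IsC.add {f f' : (ℕ → Γ) → V} (h : IsC ρ U n A f) (h' : IsC ρ U n A f') :
    IsC ρ U n A (f + f') where
  dep g g' hg := by simp [h.dep g g' hg, h'.dep g g' hg]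
  eqv u hu g := by simp [h.eqv u hu, h'.eqv u hu]
  mem g := A.add_mem (h.mem g) (h'.mem g)

lemma IsC.sub {f f' : (ℕ → Γ) → V} (h : IsC ρ U n A f) (h' : IsC ρ U n A f') :
    IsC ρ U n A (f - f') where
  dep g g' hg := by simp [h.dep g g' hg, h'.dep g g' hg]
  eqv u hu g := by simp [h.eqv u hu, h'.eqv u hu]
  mem g := A.sub_mem (h.mem g) (h'.mem g)

lemma IsC.smul {f : (ℕ → Γ) → V} (h : IsC ρ U n A f) (c : k) : IsC ρ U n A (c • f) where
  dep g g' hg := by simp [h.dep g g' hg]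
  eqv u hu g := by simp [h.eqv u hu]
  mem g := A.smul_mem c (h.mem g)

lemma IsC.zero : IsC ρ U n A 0 where
  dep g g' hg := rfl
  eqv u hu g := by simp
  mem g := A.zero_mem

lemma IsC.map {σ : Representation k Γ Y} {B : Submodule k Y} {f : (ℕ → Γ) → V}
    (h : IsC ρ U n A f) (φ : V →ₗ[k] Y) (hφ : ∀ u ∈ U, ∀ x ∈ A, φ (ρ u x) = σ u (φ x))
    (hm : ∀ x ∈ A, φ x ∈ B) : IsC σ U n B (fun g => φ (f g)) where
  dep g g' hg := by rw [h.dep g g' hg]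
  eqv u hu g := by rw [h.eqv u hu, hφ u hu _ (h.mem g)]
  mem g := hm _ (h.mem g)

lemma IsC.mono {f : (ℕ → Γ) → V} (h : IsC ρ U n A f) {U' : Subgroup Γ} (hU : U' ≤ U) :
    IsC ρ U' n A f := ⟨h.dep, fun u hu => h.eqv u (hU hu), h.mem⟩

/-- Non-equivariantly, every cocycle of positive degree is a coboundary. -/
lemma exists_cobd_eq {f : (ℕ → Γ) → V} (h : IsC ρ ⊥ (n + 1) A f) (hf : cobd (n + 1) f = 0) :
    ∃ z, IsC ρ ⊥ n A z ∧ cobd n z = f := by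
  refine ⟨fun g => f (fun j => Nat.casesOn j 1 g), ⟨?_, ?_, fun g => h.mem _⟩, ?_⟩
  · intro g g' hg
    apply h.dep
    rintro (_ | i) hi
    · rfl
    · exact hg i (by omega)
  · intro u hu g
    obtain rfl := Subgroup.mem_bot.1 hu
    simp
  · funext g
    have := congrFun hf (fun j => Nat.casesOn j 1 g)
    simp only [cobd, Pi.zero_apply] at this
    rw [Finset.sum_range_succ'] at this
    rw [add_comm, add_eq_zero_iff_eq_neg] at this
    simp only [pow_zero, one_smul] at this
    have h0 : (fun j => (Nat.casesOn (skip 0 j) 1 g : Γ)) = g := by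
      funext j; simp [skip]
    rw [h0] at this
    rw [this, cobd, ← Finset.sum_neg_distrib]
    refine Finset.sum_congr rfl fun i _ => ?_
    rw [pow_succ, mul_neg_one, neg_smul, neg_neg]
    congr 2
    funext j
    rcases j with _ | j
    · simp [skip]
    · simp only [skip, Nat.add_lt_add_iff_right]
      split_ifs <;> rfl

/-- The averaging argument: let `R` commute with `U`, and let the identity of `A` be the trace over
`R` of an endomorphism `θ` that commutes with `U`.  Then an `R`-equivariant cocycle that is the
coboundary of a `U`-equivariant cochain is the coboundary of a cochain equivariant for both. -/
lemma transfer (R : Subgroup Γ) [Fintype R] (hRU : ∀ r ∈ R, ∀ u ∈ U, r * u = u * r)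
    (hA : ∀ r ∈ R, ∀ x ∈ A, ρ r x ∈ A) (θ : V →ₗ[k] V) (hθA : ∀ x ∈ A, θ x ∈ A)
    (hθU : ∀ u ∈ U, ∀ x, θ (ρ u x) = ρ u (θ x))
    (htr : ∀ x ∈ A, ∑ r : R, ρ (r : Γ) (θ (ρ (r : Γ)⁻¹ x)) = x)
    {f z : (ℕ → Γ) → V} (hf : IsC ρ R (n + 1) A f) (hz : IsC ρ U n A z) (hzf : cobd n z = f) :
    ∃ z', IsC ρ U n A z' ∧ IsC ρ R n A z' ∧ cobd n z' = f := by
  have hdep : ∀ g g' : ℕ → Γ, (∀ i ≤ n, g i = g' i) →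
      ∑ r : R, ρ (r : Γ) (θ (z (fun j => (r : Γ)⁻¹ * g j))) =
        ∑ r : R, ρ (r : Γ) (θ (z (fun j => (r : Γ)⁻¹ * g' j))) := by
    intro g g' hg
    refine Finset.sum_congr rfl fun r _ => ?_
    rw [hz.dep _ (fun j => (r : Γ)⁻¹ * g' j)]
    intro i hi
    rw [hg i hi]
  have hmem : ∀ g : ℕ → Γ, ∑ r : R, ρ (r : Γ) (θ (z (fun j => (r : Γ)⁻¹ * g j))) ∈ A :=
    fun g => Submodule.sum_mem _ fun r _ => hA _ r.2 _ (hθA _ (hz.mem _))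
  refine ⟨fun g => ∑ r : R, ρ (r : Γ) (θ (z (fun j => (r : Γ)⁻¹ * g j))),
    ⟨hdep, ?_, hmem⟩, ⟨hdep, ?_, hmem⟩, ?_⟩
  · intro u hu g
    rw [map_sum]
    refine Finset.sum_congr rfl fun r _ => ?_
    have : (fun j => (r : Γ)⁻¹ * (u * g j)) = fun j => u * ((r : Γ)⁻¹ * g j) := by
      funext j
      rw [← mul_assoc, hRU _ (R.inv_mem r.2) u hu, mul_assoc]
    rw [this, hz.eqv u hu, hθU u hu, ← Module.End.mul_apply, ← map_mul, hRU _ r.2 u hu, map_mul,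
      Module.End.mul_apply]
  · intro u hu g
    rw [map_sum]
    refine Fintype.sum_equiv (Equiv.mulLeft (⟨u, hu⟩ : R)⁻¹) _ _ fun r => ?_
    simp only [Equiv.coe_mulLeft, Subgroup.coe_mul, Subgroup.coe_inv, ← Module.End.mul_apply,
      ← map_mul]
    simp [mul_assoc]
  · rw [cobd_sum]
    funext g
    have : ∀ r : R, cobd n (fun g => ρ (r : Γ) (θ (z (fun j => (r : Γ)⁻¹ * g j)))) g =
        ρ (r : Γ) (θ (ρ (r : Γ)⁻¹ (f g))) := by
      intro r
      rw [← hf.eqv _ (R.inv_mem r.2), ← hzf]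
      simp [cobd, map_sum]
    simp only [this]
    exact htr _ (hf.mem g)

/-- Equivariant cochains lift along equivariant maps, since `U` acts freely on sequences. -/
lemma lift {σ : Representation k Γ Y} {B : Submodule k Y} (hA : ∀ r ∈ U, ∀ x ∈ A, ρ r x ∈ A)
    (φ : V →ₗ[k] Y) (hφ : ∀ u ∈ U, ∀ x, φ (ρ u x) = σ u (φ x))
    {f : (ℕ → Γ) → Y} (hf : IsC σ U n B f) (hs : ∀ g, ∃ x ∈ A, φ x = f g) :
    ∃ z, IsC ρ U n A z ∧ (fun g => φ (z g)) = f := by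
  classical
  -- `t` picks, equivariantly, the `U`-component of an element of `Γ`
  obtain ⟨t, htU, ht⟩ : ∃ t : Γ → Γ, (∀ g, t g ∈ U) ∧ ∀ u ∈ U, ∀ g, t (u * g) = u * t g := by
    have hq : ∀ g : Γ, ∃ u ∈ U, ∃ r : Γ, g = u * r ∧
        r = (Quotient.mk (QuotientGroup.rightRel U) g).out := by
      intro g
      have h2 : (QuotientGroup.rightRel U) (Quotient.mk (QuotientGroup.rightRel U) g).out g :=
        Quotient.mk_out (s := QuotientGroup.rightRel U) g
      rw [QuotientGroup.rightRel_apply] at h2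
      exact ⟨_, h2, _, by group, rfl⟩
    choose t ht r hr hr' using hq
    refine ⟨t, ht, fun u hu g => ?_⟩
    have h1 : r (u * g) = r g := by
      rw [hr', hr']
      congr 1
      apply Quotient.sound
      change (QuotientGroup.rightRel U) (u * g) g
      rw [QuotientGroup.rightRel_apply]
      simpa using hu
    have h2 := hr (u * g)
    rw [h1] at h2
    have h3 := hr g
    calc t (u * g) = (u * g) * (r g)⁻¹ := by rw [eq_mul_inv_iff_mul_eq]; exact h2.symm
      _ = u * t g := by rw [mul_assoc]; congr 1; rw [mul_inv_eq_iff_eq_mul]; exact h3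
  choose s hsA hs using hs
  have key : ∀ u ∈ U, ∀ g, ∃ x ∈ A, φ x = σ u (f g) := fun u hu g =>
    ⟨ρ u (s g), hA u hu _ (hsA g), by rw [hφ u hu, hs]⟩
  let sec : Y → V := fun y => if h : ∃ x ∈ A, φ x = y then h.choose else 0
  have hsec : ∀ y, (∃ x ∈ A, φ x = y) → sec y ∈ A ∧ φ (sec y) = y := by
    intro y h
    simp only [sec, dif_pos h]
    exact h.choose_spec
  refine ⟨fun g => ρ (t (g 0)) (sec (σ (t (g 0))⁻¹ (f g))), ⟨?_, ?_, ?_⟩, ?_⟩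
  · intro g g' hg
    rw [hf.dep g g' hg, hg 0 (by omega)]
  · intro u hu g
    simp only
    rw [ht u hu, hf.eqv u hu, ← Module.End.mul_apply (σ _), ← map_mul, map_mul,
      Module.End.mul_apply]
    simp
  · intro g
    exact hA _ (htU _) _ (hsec _ (key _ (U.inv_mem (htU _)) g)).1
  · funext g
    rw [hφ _ (htU _), (hsec _ (key _ (U.inv_mem (htU _)) g)).2, ← Module.End.mul_apply, ← map_mul]
    simp

/-- The cup product of a cochain `z` of degree `m` with `b`, along a bilinear map. -/
def cup (B : W →ₗ[k] V →ₗ[k] Y) (m : ℕ) (z : (ℕ → Γ) → W) (b : (ℕ → Γ) → V) (g : ℕ → Γ) : Y :=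
  B (z g) (b (fun j => g (m + j)))

lemma cobd_cup (B : W →ₗ[k] V →ₗ[k] Y) (m n : ℕ) {z : (ℕ → Γ) → W}
    (hz : ∀ g g' : ℕ → Γ, (∀ i ≤ m, g i = g' i) → z g = z g') (b : (ℕ → Γ) → V) :
    cobd (m + n) (cup B m z b) = cup B (m + 1) (cobd m z) b +
      (-1 : ℤ) ^ m • cup B m z (cobd n b) := by
  funext g
  simp only [cobd, cup, Pi.add_apply, Pi.smul_apply, map_sum, LinearMap.sum_apply, map_zsmul,
    LinearMap.smul_apply]
  have e1 : m + n + 2 = (m + 1) + (n + 1) := by ring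
  rw [e1, Finset.sum_range_add, Finset.sum_range_succ (n := m + 1),
    Finset.sum_range_succ' (n := n + 1)]
  have hA : ∀ i ∈ Finset.range (m + 1), (-1 : ℤ) ^ i • B (z fun j => g (skip i j))
      (b fun j => g (skip i (m + j))) = (-1 : ℤ) ^ i • B (z fun j => g (skip i j))
      (b fun j => g (m + 1 + j)) := by
    intro i hi
    rw [Finset.mem_range] at hi
    congr 3
    funext j
    congr 1
    unfold skip; split_ifs <;> omega
  rw [Finset.sum_congr rfl hA]
  have hB : ∀ i ∈ Finset.range (n + 1), (-1 : ℤ) ^ (m + 1 + i) • B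
      (z fun j => g (skip (m + 1 + i) j)) (b fun j => g (skip (m + 1 + i) (m + j))) =
      (-1 : ℤ) ^ m • (-1 : ℤ) ^ (i + 1) • B (z g) (b fun j => g (m + skip (i + 1) j)) := by
    intro i hi
    rw [smul_smul, ← pow_add]
    have h1 : z (fun j => g (skip (m + 1 + i) j)) = z g := by
      apply hz
      intro l hl
      unfold skip; rw [if_pos (by omega)]
    have h2 : (fun j => g (skip (m + 1 + i) (m + j))) = fun j => g (m + skip (i + 1) j) := by
      funext j
      congr 1
      unfold skip; split_ifs <;> omega
    rw [h1, h2]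
    congr 2
    ring
  rw [Finset.sum_congr rfl hB, ← Finset.smul_sum, smul_add]
  have hC : z (fun j => g (skip (m + 1) j)) = z g := by
    apply hz
    intro l hl
    unfold skip; rw [if_pos (by omega)]
  have hD : (fun j => g (m + skip 0 j)) = fun j => g (m + 1 + j) := by
    funext j
    congr 1
    unfold skip; split_ifs <;> omega
  rw [hC, hD, pow_succ]
  simp only [pow_zero, one_smul, mul_neg_one, neg_smul]
  abel

lemma IsC.cup {ρW : Representation k Γ W} {ρV : Representation k Γ V} {ρY : Representation k Γ Y}
    {AW : Submodule k W} {AV : Submodule k V} {AY : Submodule k Y} {m n : ℕ}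
    (B : W →ₗ[k] V →ₗ[k] Y) (hB : ∀ u ∈ U, ∀ x y, B (ρW u x) (ρV u y) = ρY u (B x y))
    (hm : ∀ x ∈ AW, ∀ y ∈ AV, B x y ∈ AY) {z : (ℕ → Γ) → W} {b : (ℕ → Γ) → V}
    (hz : IsC ρW U m AW z) (hb : IsC ρV U n AV b) : IsC ρY U (m + n) AY (cup B m z b) where
  dep g g' hg := by
    simp only [SelfExt.cup]
    rw [hz.dep g g' (fun i hi => hg i (by omega)), hb.dep _ (fun j => g' (m + j))
      (fun i hi => hg _ (by omega))]
  eqv u hu g := by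
    simp only [SelfExt.cup]
    rw [hz.eqv u hu, ← hB u hu, ← hb.eqv u hu]
  mem g := hm _ (hz.mem _) _ (hb.mem _)

end Cochains

/-! ### Acyclic modules and towers -/

section Towers
variable {k : Type*} [Field k] {Γ : Type*} [Group Γ]
variable {V : Type*} [AddCommGroup V] [Module k V]
variable {Y : Type*} [AddCommGroup Y] [Module k Y]
variable {W : Type*} [AddCommGroup W] [Module k W]

/-- `A` has no `U`-cohomology in positive degrees. -/
def Acyc (ρ : Representation k Γ V) (U : Subgroup Γ) (A : Submodule k V) : Prop :=
  ∀ n (f : (ℕ → Γ) → V), IsC ρ U (n + 1) A f → cobd (n + 1) f = 0 →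
    ∃ z, IsC ρ U n A z ∧ cobd n z = f

/-- If the identity of `A` is the trace from `U` of an endomorphism, then `A` is acyclic. -/
lemma acyc_of_trace {ρ : Representation k Γ V} {U : Subgroup Γ} [Fintype U] {A : Submodule k V}
    (hA : ∀ r ∈ U, ∀ x ∈ A, ρ r x ∈ A) (θ : V →ₗ[k] V) (hθA : ∀ x ∈ A, θ x ∈ A)
    (htr : ∀ x ∈ A, ∑ r : U, ρ (r : Γ) (θ (ρ (r : Γ)⁻¹ x)) = x) : Acyc ρ U A := by
  intro n f hf hd
  obtain ⟨z, hz, hzf⟩ := exists_cobd_eq (hf.mono bot_le) hd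
  obtain ⟨z', -, h, hd⟩ := transfer U (fun r _ u hu => by simp [Subgroup.mem_bot.1 hu]) hA θ hθA
    (fun u hu x => by simp [Subgroup.mem_bot.1 hu]) htr hf hz hzf
  exact ⟨z', h, hd⟩

/-- A finite equivariant exact sequence `0 → A (m+1) → A m → ⋯ → A 0 → Y → 0`, with all terms but the
last realised inside one ambient representation `W`; the maps are `s m, …, s 0, ψ`. -/
structure Tower (ρ : Representation k Γ W) (τ : Representation k Γ Y) (m : ℕ)
    (A : ℕ → Submodule k W) (s : ℕ → W →ₗ[k] W) (ψ : W →ₗ[k] Y) : Prop where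
  stab : ∀ j γ, ∀ x ∈ A j, ρ γ x ∈ A j
  s_mem : ∀ j ≤ m, ∀ x ∈ A (j + 1), s j x ∈ A j
  s_eqv : ∀ j γ x, s j (ρ γ x) = ρ γ (s j x)
  s_s : ∀ j < m, ∀ x ∈ A (j + 2), s j (s (j + 1) x) = 0
  exact : ∀ j < m, ∀ x ∈ A (j + 1), s j x = 0 → ∃ y ∈ A (j + 2), s (j + 1) y = x
  inj : ∀ x ∈ A (m + 1), s m x = 0 → x = 0
  ψ_s : ∀ x ∈ A 1, ψ (s 0 x) = 0
  ψ_ker : ∀ x ∈ A 0, ψ x = 0 → ∃ y ∈ A 1, s 0 y = x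
  ψ_surj : ∀ y, ∃ x ∈ A 0, ψ x = y
  ψ_eqv : ∀ γ x, ψ (ρ γ x) = τ γ (ψ x)

/-- A zigzag `y = ψ w₀`, `d wᵢ = s wᵢ₊₁` through the tower, which exhibits the cocycle `w (m+1)` of
degree `n + m + 1` as the iterated connecting homomorphism applied to the degree-`n` cocycle `y`. -/
structure IsChain (ρ : Representation k Γ W) (U : Subgroup Γ) (m : ℕ) (A : ℕ → Submodule k W)
    (s : ℕ → W →ₗ[k] W) (ψ : W →ₗ[k] Y) (n : ℕ) (y : (ℕ → Γ) → Y)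
    (w : ℕ → (ℕ → Γ) → W) : Prop where
  isC : ∀ i ≤ m + 1, IsC ρ U (n + i) (A i) (w i)
  bot : ∀ g, ψ (w 0 g) = y g
  step : ∀ i ≤ m, cobd (n + i) (w i) = fun g => s i (w (i + 1) g)
  top : cobd (n + (m + 1)) (w (m + 1)) = 0

variable {ρ : Representation k Γ W} {τ : Representation k Γ Y} {m : ℕ} {A : ℕ → Submodule k W}
  {s : ℕ → W →ₗ[k] W} {ψ : W →ₗ[k] Y} {U : Subgroup Γ} {n : ℕ}

lemma Tower.exists_chain (t : Tower ρ τ m A s ψ) {y : (ℕ → Γ) → Y} (hy : IsC τ U n ⊤ y)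
    (hdy : cobd n y = 0) : ∃ w, IsChain ρ U m A s ψ n y w := by
  classical
  let Good : ℕ → ((ℕ → Γ) → W) → Prop := fun i z => i ≤ m + 1 → IsC ρ U (n + i) (A i) z ∧
    (i ≤ m → ∀ g, ∃ x ∈ A (i + 1), s i x = cobd (n + i) z g)
  obtain ⟨w0, hw0, hw0y⟩ := lift (U := U) (fun r _ x hx => t.stab 0 r x hx) ψ
    (fun u _ x => t.ψ_eqv u x) hy (fun g => t.ψ_surj (y g))
  have good0 : Good 0 w0 := by
    refine fun _ => ⟨hw0, fun _ g => t.ψ_ker _ (hw0.cobd.mem g) ?_⟩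
    have := congrFun (cobd_map n w0 ψ) g
    rw [hw0y, hdy] at this
    exact this.symm
  have step : ∀ i z, Good i z → ∃ z', Good (i + 1) z' ∧
      (i ≤ m → cobd (n + i) z = fun g => s i (z' g)) := by
    intro i z hz
    by_cases him : i ≤ m
    · obtain ⟨h1, h2⟩ := hz (by omega)
      obtain ⟨z', hz', hz'z⟩ := lift (U := U) (fun r _ x hx => t.stab (i + 1) r x hx) (s i)
        (fun u _ x => t.s_eqv i u x) h1.cobd (h2 him)
      refine ⟨z', fun _ => ⟨hz', fun h g => ?_⟩, fun _ => hz'z.symm⟩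
      refine t.exact i (by omega) _ (hz'.cobd.mem g) ?_
      have := congrFun (cobd_map (n + (i + 1)) z' (s i)) g
      rw [hz'z] at this
      rw [← add_assoc, cobd_cobd] at this
      exact this.symm
    · exact ⟨0, fun h => absurd h (by omega), fun h => absurd h him⟩
  choose! nx hnx hnx' using step
  let w : ℕ → (ℕ → Γ) → W := fun i => Nat.rec w0 nx i
  have hw : ∀ i, Good i (w i) := by
    intro i
    induction i with
    | zero => exact good0
    | succ i ih => exact hnx i _ ih
  have hstep : ∀ i ≤ m, cobd (n + i) (w i) = fun g => s i (w (i + 1) g) :=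
    fun i hi => hnx' i _ (hw i) hi
  refine ⟨w, fun i hi => (hw i hi).1, congrFun hw0y, hstep, ?_⟩
  funext g
  refine t.inj _ ((hw (m + 1) le_rfl).1.cobd.mem g) ?_
  have := congrFun (cobd_map (n + (m + 1)) (w (m + 1)) (s m)) g
  rw [← hstep m le_rfl] at this
  rw [← add_assoc, cobd_cobd] at this
  exact this.symm

/-- A chain starting at zero ends in a coboundary. -/
lemma Tower.chain_zero (t : Tower ρ τ m A s ψ) {w : ℕ → (ℕ → Γ) → W}
    (h : IsChain ρ U m A s ψ n 0 w) :
    ∃ r, IsC ρ U (n + m) (A (m + 1)) r ∧ cobd (n + m) r = w (m + 1) := by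
  have key : ∀ i ≤ m, ∃ r, IsC ρ U (n + i) (A (i + 1)) r ∧
      ∀ g, s i (w (i + 1) g - cobd (n + i) r g) = 0 := by
    intro i
    induction i with
    | zero =>
      intro _
      obtain ⟨r, hr, hr'⟩ := lift (U := U) (fun r _ x hx => t.stab 1 r x hx) (s 0)
        (fun u _ x => t.s_eqv 0 u x) (h.isC 0 (by omega))
        (fun g => t.ψ_ker _ ((h.isC 0 (by omega)).mem g) (h.bot g))
      refine ⟨r, hr, fun g => ?_⟩
      have h1 := congrFun (cobd_map (n + 0) r (s 0)) g
      rw [hr', h.step 0 (by omega)] at h1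
      rw [map_sub, ← h1, sub_self]
    | succ i ih =>
      intro hi
      obtain ⟨r, hr, hr'⟩ := ih (by omega)
      have hc : IsC ρ U (n + (i + 1)) (A (i + 1)) (w (i + 1) - cobd (n + i) r) :=
        (h.isC (i + 1) (by omega)).sub hr.cobd
      obtain ⟨q, hq, hq'⟩ := lift (U := U) (fun r _ x hx => t.stab (i + 2) r x hx) (s (i + 1))
        (fun u _ x => t.s_eqv (i + 1) u x) hc
        (fun g => t.exact i (by omega) _ (hc.mem g) (hr' g))
      refine ⟨q, hq, fun g => ?_⟩
      have h1 := congrFun (cobd_map (n + (i + 1)) q (s (i + 1))) g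
      rw [hq', cobd_sub, h.step (i + 1) hi, ← add_assoc, cobd_cobd, sub_zero] at h1
      rw [map_sub, ← add_assoc, ← h1, sub_self]
  obtain ⟨r, hr, hr'⟩ := key m le_rfl
  refine ⟨r, hr, ?_⟩
  funext g
  have := t.inj _ (sub_mem ((h.isC (m + 1) le_rfl).mem g) (hr.cobd.mem g)) (hr' g)
  exact (sub_eq_zero.1 this).symm

lemma IsChain.sub {y y' : (ℕ → Γ) → Y} {w w' : ℕ → (ℕ → Γ) → W} (h : IsChain ρ U m A s ψ n y w)
    (h' : IsChain ρ U m A s ψ n y' w') : IsChain ρ U m A s ψ n (y - y') (w - w') where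
  isC i hi := (h.isC i hi).sub (h'.isC i hi)
  bot g := by simp [h.bot, h'.bot]
  step i hi := by
    funext g
    simp [cobd_sub, h.step i hi, h'.step i hi]
  top := by
    have := cobd_sub (n + (m + 1)) (w (m + 1)) (w' (m + 1))
    rw [h.top, h'.top, sub_zero] at this
    exact this

/-- If the intermediate terms are acyclic, every cocycle of degree `> m` with values in the first
term is the end of a chain. -/
lemma Tower.exists_chain_top (t : Tower ρ τ m A s ψ) (hac : ∀ j ≤ m, Acyc ρ U (A j))
    {f : (ℕ → Γ) → W} (hf : IsC ρ U (n + (m + 1)) (A (m + 1)) f)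
    (hdf : cobd (n + (m + 1)) f = 0) :
    ∃ y w, IsC τ U n ⊤ y ∧ cobd n y = 0 ∧ IsChain ρ U m A s ψ n y w ∧ w (m + 1) = f := by
  classical
  have key : ∀ j ≤ m + 1, ∃ w : ℕ → (ℕ → Γ) → W, w (m + 1) = f ∧
      (∀ i ≤ m + 1, m + 1 - j ≤ i → IsC ρ U (n + i) (A i) (w i)) ∧
      (∀ i ≤ m, m + 1 - j ≤ i → cobd (n + i) (w i) = fun g => s i (w (i + 1) g)) := by
    intro j
    induction j with
    | zero =>
      intro _
      refine ⟨fun _ => f, rfl, ?_, ?_⟩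
      · intro i h1 h2
        obtain rfl : i = m + 1 := by omega
        exact hf
      · intro i h1 h2; omega
    | succ j ih =>
      intro hj
      obtain ⟨w, hw, hw1, hw2⟩ := ih (by omega)
      obtain ⟨q, hq⟩ : ∃ q, m - j = q := ⟨_, rfl⟩
      have hC := hw1 (q + 1) (by omega) (by omega)
      have hsC : IsC ρ U (n + q + 1) (A q) (fun g => s q (w (q + 1) g)) :=
        hC.map (s q) (fun u _ x _ => t.s_eqv q u x) (t.s_mem q (by omega))
      obtain ⟨z, hz, hz'⟩ := hac q (by omega) (n + q) _ hsC (by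
        rw [add_assoc, cobd_map]
        funext g
        by_cases hqm : q = m
        · subst hqm
          rw [hw, hdf]; simp
        · rw [hw2 (q + 1) (by omega) (by omega)]
          exact t.s_s q (by omega) _ ((hw1 (q + 2) (by omega) (by omega)).mem g))
      refine ⟨Function.update w q z, ?_, ?_, ?_⟩
      · rw [Function.update_of_ne (by omega), hw]
      · intro i h1 h2
        by_cases hi : i = q
        · subst hi; rwa [Function.update_self]
        · rw [Function.update_of_ne hi]
          exact hw1 i h1 (by omega)
      · intro i h1 h2
        by_cases hi : i = q
        · subst hi
          rw [Function.update_self, Function.update_of_ne (by omega), hz']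
        · rw [Function.update_of_ne hi, Function.update_of_ne (by omega)]
          exact hw2 i h1 (by omega)
  obtain ⟨w, hw, hw1, hw2⟩ := key (m + 1) le_rfl
  refine ⟨fun g => ψ (w 0 g), w, (hw1 0 (by omega) (by omega)).map ψ (fun u _ x _ => t.ψ_eqv u x)
    (fun _ _ => trivial), ?_, ⟨fun i hi => hw1 i hi (by omega), fun _ => rfl,
    fun i hi => hw2 i hi (by omega), by rw [hw, hdf]⟩, hw⟩
  rw [cobd_map]
  funext g
  have := hw2 0 (by omega) (by omega)
  rw [add_zero] at this
  rw [this]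
  exact t.ψ_s _ ((hw1 1 (by omega) (by omega)).mem g)

/-- If the end of a chain is a coboundary, then its start lifts to a cocycle in the last term. -/
lemma Tower.lift_of_top (t : Tower ρ τ m A s ψ) (hac : ∀ j ≤ m, Acyc ρ U (A j))
    {y : (ℕ → Γ) → Y} {w : ℕ → (ℕ → Γ) → W} (h : IsChain ρ U m A s ψ n y w)
    {r : (ℕ → Γ) → W} (hr : IsC ρ U (n + m) (A (m + 1)) r) (hrw : cobd (n + m) r = w (m + 1)) :
    ∃ f, IsC ρ U n (A 0) f ∧ cobd n f = 0 ∧ ∀ g, ψ (f g) = y g := by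
  have key : ∀ j ≤ m, ∃ r, IsC ρ U (n + (m - j)) (A (m - j + 1)) r ∧
      cobd (n + (m - j)) (w (m - j) - fun g => s (m - j) (r g)) = 0 := by
    intro j
    induction j with
    | zero =>
      intro _
      refine ⟨r, hr, ?_⟩
      rw [cobd_sub, cobd_map]
      simp only [Nat.sub_zero]
      rw [hrw, h.step m le_rfl, sub_self]
    | succ j ih =>
      intro hj
      obtain ⟨r, hr, hr'⟩ := ih (by omega)
      obtain ⟨q, hq⟩ : ∃ q, m - (j + 1) = q := ⟨_, rfl⟩
      have hq' : m - j = q + 1 := by omega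
      rw [hq'] at hr hr'
      rw [hq]
      have hsC : IsC ρ U (n + (q + 1)) (A (q + 1)) (fun g => s (q + 1) (r g)) :=
        hr.map (s (q + 1)) (fun u _ x _ => t.s_eqv (q + 1) u x) (t.s_mem (q + 1) (by omega))
      obtain ⟨z, hz, hz'⟩ := hac (q + 1) (by omega) (n + q) _
        ((h.isC (q + 1) (by omega)).sub hsC) hr'
      refine ⟨z, hz, ?_⟩
      rw [cobd_sub, cobd_map, hz', h.step q (by omega)]
      funext g
      simp only [Pi.sub_apply, map_sub, Pi.zero_apply]
      rw [t.s_s q (by omega) _ (hr.mem g)]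
      simp
  obtain ⟨r, hr, hr'⟩ := key m le_rfl
  simp only [Nat.sub_self] at hr hr'
  have hsC : IsC ρ U n (A 0) (fun g => s 0 (r g)) :=
    hr.map (s 0) (fun u _ x _ => t.s_eqv 0 u x) (t.s_mem 0 (by omega))
  refine ⟨_, (h.isC 0 (by omega)).sub hsC, hr', fun g => ?_⟩
  simp only [Pi.sub_apply, map_sub, h.bot]
  have := t.ψ_s _ (hr.mem g)
  rw [this, sub_zero]

/-- The cup product of a chain for the unit cocycle with a cocycle. -/
lemma IsChain.cup {W' : Type*} [AddCommGroup W'] [Module k W'] {ρ' : Representation k Γ W'}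
    {ρV : Representation k Γ V}
    {A' : ℕ → Submodule k W'} {s' : ℕ → W' →ₗ[k] W'} {ψ' : W' →ₗ[k] k}
    {w : ℕ → (ℕ → Γ) → W'} (h : IsChain ρ' U m A' s' ψ' 0 (fun _ => 1) w)
    {ψ : W →ₗ[k] V}
    (B : W' →ₗ[k] V →ₗ[k] W) (hB : ∀ u ∈ U, ∀ x y, B (ρ' u x) (ρV u y) = ρ u (B x y))
    (hm : ∀ i, ∀ x ∈ A' i, ∀ y, B x y ∈ A i) (hs : ∀ i x y, B (s' i x) y = s i (B x y))
    (hψ : ∀ x y, ψ (B x y) = ψ' x • y)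
    {b : (ℕ → Γ) → V} (hb : IsC ρV U n ⊤ b) (hdb : cobd n b = 0) :
    IsChain ρ U m A s ψ n b (fun i => SelfExt.cup B i (w i) b) where
  isC i hi := by
    have := IsC.cup B hB (fun x hx y (_ : y ∈ (⊤ : Submodule k V)) => hm i x hx y)
      (h.isC i hi) hb
    rw [zero_add, add_comm] at this
    exact this
  bot g := by
    simp only [SelfExt.cup, hψ, h.bot, one_smul, zero_add]
  step i hi := by
    have hC := (h.isC i (by omega)).dep
    have hst := h.step i hi
    rw [zero_add] at hC hst
    rw [add_comm, cobd_cup B i n hC b, hdb, hst]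
    funext g
    simp [SelfExt.cup, hs]
  top := by
    have hC := (h.isC (m + 1) le_rfl).dep
    have hst := h.top
    rw [zero_add] at hC hst
    rw [add_comm, cobd_cup B (m + 1) n hC b, hdb, hst]
    funext g
    simp [SelfExt.cup]

end Towers

/-! ### Cup product with the class of a tower, and the tower of a cyclic group -/

section Pairing
variable {k : Type*} [Field k] {Γ : Type*} [Group Γ]
variable {V : Type*} [AddCommGroup V] [Module k V]
variable {W' : Type*} [AddCommGroup W'] [Module k W']
variable {W : Type*} [AddCommGroup W] [Module k W]

/-- The cup product of a scalar cochain of degree `m` with a cochain. -/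
abbrev act (m : ℕ) (z : (ℕ → Γ) → k) (b : (ℕ → Γ) → V) : (ℕ → Γ) → V :=
  cup (LinearMap.lsmul k V) m z b

/-- The tower `A` for `V` is a module over the tower `A'` for the trivial representation, and
`e` is the scalar cocycle at the end of the chain `w` of the unit cocycle in `A'`. -/
structure Pairing (ρ' : Representation k Γ W') (ρ : Representation k Γ W)
    (ρV : Representation k Γ V) (U : Subgroup Γ) (m : ℕ)
    (A' : ℕ → Submodule k W') (s' : ℕ → W' →ₗ[k] W') (ψ' : W' →ₗ[k] k)
    (A : ℕ → Submodule k W) (s : ℕ → W →ₗ[k] W) (ψ : W →ₗ[k] V)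
    (w : ℕ → (ℕ → Γ) → W') (B : W' →ₗ[k] V →ₗ[k] W) (ι : V →ₗ[k] W) (π : W →ₗ[k] V)
    (e : (ℕ → Γ) → k) : Prop where
  chain : IsChain ρ' U m A' s' ψ' 0 (fun _ => 1) w
  tower : Tower ρ ρV m A s ψ
  B_eqv : ∀ u ∈ U, ∀ x y, B (ρ' u x) (ρV u y) = ρ u (B x y)
  B_mem : ∀ i, ∀ x ∈ A' i, ∀ y, B x y ∈ A i
  B_s : ∀ i x y, B (s' i x) y = s i (B x y)
  B_ψ : ∀ x y, ψ (B x y) = ψ' x • y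
  π_ι : ∀ v, π (ι v) = v
  ι_mem : ∀ v, ι v ∈ A (m + 1)
  ι_π : ∀ x ∈ A (m + 1), ι (π x) = x
  ι_eqv : ∀ u ∈ U, ∀ v, ι (ρV u v) = ρ u (ι v)
  B_e : ∀ g v, B (w (m + 1) g) v = ι (e g • v)

variable {ρ' : Representation k Γ W'} {ρ : Representation k Γ W}
    {ρV : Representation k Γ V} {U : Subgroup Γ} {m : ℕ}
    {A' : ℕ → Submodule k W'} {s' : ℕ → W' →ₗ[k] W'} {ψ' : W' →ₗ[k] k}
    {A : ℕ → Submodule k W} {s : ℕ → W →ₗ[k] W} {ψ : W →ₗ[k] V}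
    {w : ℕ → (ℕ → Γ) → W'} {B : W' →ₗ[k] V →ₗ[k] W} {ι : V →ₗ[k] W} {π : W →ₗ[k] V}
    {e : (ℕ → Γ) → k} {n : ℕ}

lemma Pairing.π_eqv (P : Pairing ρ' ρ ρV U m A' s' ψ' A s ψ w B ι π e) :
    ∀ u ∈ U, ∀ x ∈ A (m + 1), π (ρ u x) = ρV u (π x) := by
  intro u hu x hx
  conv_lhs => rw [← P.ι_π x hx, ← P.ι_eqv u hu, P.π_ι]

lemma Pairing.act_eq (P : Pairing ρ' ρ ρV U m A' s' ψ' A s ψ w B ι π e)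
    (b : (ℕ → Γ) → V) :
    (fun g => ι (act (m + 1) e b g)) = cup B (m + 1) (w (m + 1)) b := by
  funext g
  simp [cup, P.B_e]

/-- Cup product with `e` is onto in cohomology of degree `> m`. -/
lemma Pairing.exists_eq_act (P : Pairing ρ' ρ ρV U m A' s' ψ' A s ψ w B ι π e)
    (hac : ∀ j ≤ m, Acyc ρ U (A j)) {y : (ℕ → Γ) → V} (hy : IsC ρV U (n + (m + 1)) ⊤ y)
    (hdy : cobd (n + (m + 1)) y = 0) :
    ∃ c r, IsC ρV U n ⊤ c ∧ cobd n c = 0 ∧ IsC ρV U (n + m) ⊤ r ∧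
      act (m + 1) e c + cobd (n + m) r = y := by
  obtain ⟨c, v, hc, hdc, hv, hvy⟩ := P.tower.exists_chain_top (n := n) hac
    (hy.map (B := A (m + 1)) ι (fun u hu x _ => P.ι_eqv u hu x) (fun v _ => P.ι_mem v))
    (by rw [cobd_map, hdy]; funext g; simp)
  have h2 := hv.sub (P.chain.cup B P.B_eqv P.B_mem P.B_s P.B_ψ hc hdc)
  rw [sub_self] at h2
  obtain ⟨r, hr, hr'⟩ := P.tower.chain_zero h2
  refine ⟨c, fun g => π (r g), hc, hdc, hr.map π P.π_eqv (fun _ _ => trivial), ?_⟩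
  rw [cobd_map, hr']
  funext g
  have := congrFun (P.act_eq c) g
  simp only [Pi.add_apply, Pi.sub_apply, map_sub, ← this, hvy, P.π_ι]
  abel

/-- A cocycle annihilated by `e` lifts to the last term of the tower. -/
lemma Pairing.lift_of_act (P : Pairing ρ' ρ ρV U m A' s' ψ' A s ψ w B ι π e)
    (hac : ∀ j ≤ m, Acyc ρ U (A j)) {b r : (ℕ → Γ) → V} (hb : IsC ρV U n ⊤ b)
    (hdb : cobd n b = 0) (hr : IsC ρV U (n + m) ⊤ r)
    (hbr : cobd (n + m) r = act (m + 1) e b) :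
    ∃ f, IsC ρ U n (A 0) f ∧ cobd n f = 0 ∧ ∀ g, ψ (f g) = b g := by
  refine P.tower.lift_of_top hac (P.chain.cup B P.B_eqv P.B_mem P.B_s P.B_ψ hb hdb)
    (hr.map ι (fun u hu x _ => P.ι_eqv u hu x) (fun v _ => P.ι_mem v)) ?_
  rw [cobd_map, hbr]
  exact P.act_eq b

end Pairing

section XTower
variable (p : ℕ) [Fact p.Prime]
variable {k : Type*} [Field k] {Γ : Type*} [Group Γ] (pr : Γ →* Multiplicative (ZMod p))
variable {V : Type*} [AddCommGroup V] [Module k V] (ρ : Representation k Γ V)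

/-- The representation on functions `C → V`, where `C` is the cyclic group of order `p`. -/
def xRep : Representation k Γ (ZMod p → V) where
  toFun γ :=
    { toFun := fun f c => ρ γ (f (c - (pr γ).toAdd))
      map_add' := fun f g => by funext c; simp
      map_smul' := fun a f => by funext c; simp }
  map_one' := by refine LinearMap.ext fun f => ?_; funext c; simp
  map_mul' γ δ := by
    refine LinearMap.ext fun f => ?_
    funext c
    simp [sub_sub]

lemma xRep_apply (γ : Γ) (f : ZMod p → V) (c : ZMod p) :
    xRep p pr ρ γ f c = ρ γ (f (c - (pr γ).toAdd)) := rfl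

variable (k V)

/-- The constant functions. -/
def xConst : V →ₗ[k] (ZMod p → V) where
  toFun v _ := v
  map_add' _ _ := rfl
  map_smul' _ _ := rfl

/-- The terms `V → Fun(C, V) → Fun(C, V)` of the tower of a cyclic group. -/
def xA (j : ℕ) : Submodule k (ZMod p → V) := if j ≤ 1 then ⊤ else LinearMap.range (xConst p k V)

/-- The maps of the tower of a cyclic group: difference along a generator, and inclusion. -/
def xs (j : ℕ) : (ZMod p → V) →ₗ[k] (ZMod p → V) :=
  if j = 0 then
    { toFun := fun f c => f (c + 1) - f c
      map_add' := fun f g => by funext c; simp; abel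
      map_smul' := fun a f => by funext c; simp [smul_sub] }
  else LinearMap.id

/-- The last map of the tower of a cyclic group: summation. -/
def xψ : (ZMod p → V) →ₗ[k] V where
  toFun f := ∑ c, f c
  map_add' f g := by simp [Finset.sum_add_distrib]
  map_smul' a f := by simp [Finset.smul_sum]

variable {k V}

lemma eq_of_shift {f : ZMod p → V} (h : ∀ c, f (c + 1) = f c) (c : ZMod p) : f c = f 0 := by
  obtain ⟨n, rfl⟩ := ZMod.natCast_zmod_surjective c
  induction n with
  | zero => simp
  | succ n ih => rw [Nat.cast_succ, h, ih]

lemma exists_of_sum_eq_zero {f : ZMod p → V} (h : ∑ c, f c = 0) :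
    ∃ e : ZMod p → V, ∀ c, e (c + 1) - e c = f c := by
  have hp : p.Prime := Fact.out
  have hsum : ∑ j ∈ Finset.range p, f (j : ZMod p) = 0 := by
    rw [← h]
    refine Finset.sum_nbij' (fun j => (j : ZMod p)) (fun c => c.val) ?_ ?_ ?_ ?_ ?_
    · simp
    · intro c _; simpa using ZMod.val_lt c
    · intro j hj; exact ZMod.val_cast_of_lt (Finset.mem_range.1 hj)
    · intro c _; simp
    · simp
  refine ⟨fun c => ∑ j ∈ Finset.range c.val, f (j : ZMod p), fun c => ?_⟩
  dsimp only
  by_cases hc : c.val + 1 < p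
  · have : (c + 1).val = c.val + 1 := by
      rw [ZMod.val_add_of_lt]
      · rw [ZMod.val_one'' hp.one_lt.ne']
      · rwa [ZMod.val_one'' hp.one_lt.ne']
    rw [this, Finset.sum_range_succ]
    simp
  · have hv : c.val + 1 = p := by have := ZMod.val_lt c; omega
    have h1 : c + 1 = 0 := by
      have : ((c.val + 1 : ℕ) : ZMod p) = 0 := by rw [hv]; simp
      simpa using this
    have hr : Finset.range p = Finset.range (c.val + 1) := by rw [hv]
    rw [hr, Finset.sum_range_succ] at hsum
    rw [h1]
    simp only [ZMod.val_zero, Finset.range_zero, Finset.sum_empty, zero_sub]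
    rw [eq_comm, ← add_eq_zero_iff_eq_neg, add_comm]
    simpa using hsum

lemma xTower : Tower (xRep p pr ρ) ρ 1 (xA p k V) (xs p k V) (xψ p k V) where
  stab j γ x hx := by
    by_cases hj : j ≤ 1
    · simp [xA, hj]
    · simp only [xA, if_neg hj] at hx ⊢
      obtain ⟨v, rfl⟩ := hx
      exact ⟨ρ γ v, rfl⟩
  s_mem j hj x hx := by simp [xA, hj]
  s_eqv j γ x := by
    by_cases hj : j = 0
    · subst hj
      funext c
      simp only [xs, if_true, LinearMap.coe_mk, AddHom.coe_mk, xRep_apply, map_sub]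
      congr 3
      ring
    · simp [xs, hj]
  s_s j hj x hx := by
    obtain rfl : j = 0 := by omega
    simp only [xA] at hx
    obtain ⟨v, rfl⟩ := hx
    funext c
    simp [xs, xConst]
  exact j hj x hx h := by
    obtain rfl : j = 0 := by omega
    refine ⟨x, ⟨x 0, ?_⟩, by simp [xs]⟩
    funext c
    refine (eq_of_shift p (fun c => ?_) c).symm
    have := congrFun h c
    simpa [xs, sub_eq_zero] using this
  inj x hx h := by simpa [xs] using h
  ψ_s x hx := by
    simp only [xs, xψ, if_true, LinearMap.coe_mk, AddHom.coe_mk, Finset.sum_sub_distrib]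
    rw [sub_eq_zero]
    exact Fintype.sum_equiv (Equiv.addRight 1) _ _ fun c => rfl
  ψ_ker x hx h := by
    obtain ⟨e, he⟩ := exists_of_sum_eq_zero p h
    exact ⟨e, by simp [xA], by funext c; simpa [xs] using he c⟩
  ψ_surj y := ⟨Pi.single 0 y, by simp [xA], by simp [xψ]⟩
  ψ_eqv γ x := by
    simp only [xψ, LinearMap.coe_mk, AddHom.coe_mk, xRep_apply, map_sum]
    exact Fintype.sum_equiv (Equiv.subRight _) _ _ fun c => rfl

variable (k)

/-- The chain of the unit cocycle in the tower of a cyclic group. -/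
def xChain : ℕ → (ℕ → Γ) → ZMod p → k :=
  ((xTower p pr (Representation.trivial k Γ k)).exists_chain (U := ⊤) (n := 0)
    (y := fun _ => 1) ⟨fun _ _ _ => rfl, fun _ _ _ => rfl, fun _ => trivial⟩ (by
      funext g; simp [cobd, Finset.sum_range_succ])).choose

lemma xChain_spec : IsChain (xRep p pr (Representation.trivial k Γ k)) ⊤ 1 (xA p k k) (xs p k k)
    (xψ p k k) 0 (fun _ => 1) (xChain p k pr) :=
  ((xTower p pr (Representation.trivial k Γ k)).exists_chain (U := ⊤) (n := 0)
    (y := fun _ => 1) ⟨fun _ _ _ => rfl, fun _ _ _ => rfl, fun _ => trivial⟩ (by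
      funext g; simp [cobd, Finset.sum_range_succ])).choose_spec

/-- The class `x`: the cocycle of degree two of the cyclic group of order `p`, the periodicity
generator, inflated to `Γ` along `pr`. -/
def xC (g : ℕ → Γ) : k := xChain p k pr 2 g 0

lemma xChain_two (g : ℕ → Γ) (c : ZMod p) : xChain p k pr 2 g c = xC p k pr g := by
  have := ((xChain_spec p k pr).isC 2 le_rfl).mem g
  simp only [xA] at this
  obtain ⟨v, hv⟩ := this
  rw [xC, ← hv]; rfl

lemma xC_isC : IsC (Representation.trivial k Γ k) ⊤ 2 ⊤ (xC p k pr) where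
  dep g g' h := congrFun (((xChain_spec p k pr).isC 2 le_rfl).dep g g' h) 0
  eqv u hu g := by
    have := congrFun (((xChain_spec p k pr).isC 2 le_rfl).eqv u hu g) 0
    rw [xRep_apply, xChain_two, xChain_two] at this
    exact this
  mem g := trivial

lemma xC_cobd : cobd 2 (xC p k pr) = 0 := by
  have := cobd_map 2 (xChain p k pr 2) (LinearMap.proj (R := k) (φ := fun _ : ZMod p => k) 0)
  have h2 := (xChain_spec p k pr).top
  rw [zero_add] at h2
  rw [h2] at this
  exact this

lemma xPairing (U : Subgroup Γ) : ∃ B ι π, Pairing (xRep p pr (Representation.trivial k Γ k))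
    (xRep p pr ρ) ρ U 1 (xA p k k) (xs p k k) (xψ p k k) (xA p k V) (xs p k V) (xψ p k V)
    (xChain p k pr) B ι π (xC p k pr) := by
  refine ⟨LinearMap.mk₂ k (fun f v c => f c • v) ?_ ?_ ?_ ?_, xConst p k V, LinearMap.proj 0,
    ?_, xTower p pr ρ, ?_, ?_, ?_, ?_, ?_, ?_, ?_, ?_, ?_⟩
  · intros; funext c; simp [add_smul]
  · intros; funext c; simp [mul_smul]
  · intros; funext c; simp
  · intros; funext c; exact smul_comm _ _ _
  · have := xChain_spec p k pr
    exact ⟨fun i hi => (this.isC i hi).mono le_top, this.bot, this.step, this.top⟩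
  · intro u hu x y; funext c
    simp [xRep_apply]
  · intro i x hx y
    by_cases hi : i ≤ 1
    · simp [xA, hi]
    · simp only [xA, if_neg hi] at hx ⊢
      obtain ⟨v, rfl⟩ := hx
      exact ⟨v • y, rfl⟩
  · intro i x y; funext c
    by_cases hi : i = 0
    · simp [xs, hi, sub_smul]
    · simp [xs, hi]
  · intro x y
    simp [xψ, Finset.sum_smul]
  · intro v; rfl
  · intro v; exact ⟨v, rfl⟩
  · intro x hx
    simp only [xA] at hx
    obtain ⟨v, rfl⟩ := hx; rfl
  · intro u hu v; rfl
  · intro g v; funext c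
    simp [xChain_two, xConst]

end XTower

/-! ### Simplicial chains on a join of spheres in the exterior algebra -/

section Exterior
variable (k : Type*) [Field k] {T : Type*} [DecidableEq T]

/-- The generator of the exterior algebra on `T` given by a vertex. -/
def eE (t : T) : ExteriorAlgebra k (T →₀ k) := ExteriorAlgebra.ι k (Finsupp.single t 1)

/-- The monomial of a list of vertices: an oriented simplex. -/
def eM (l : List T) : ExteriorAlgebra k (T →₀ k) := (l.map (eE k)).prod

/-- The augmented simplicial boundary map. -/
def eδ : ExteriorAlgebra k (T →₀ k) →ₗ[k] ExteriorAlgebra k (T →₀ k) :=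
  CliffordAlgebra.contractLeft (Finsupp.linearCombination k (fun _ : T => (1 : k)))

/-- Contraction with the coordinate of a vertex. -/
def eC (t : T) : ExteriorAlgebra k (T →₀ k) →ₗ[k] ExteriorAlgebra k (T →₀ k) :=
  CliffordAlgebra.contractLeft (Finsupp.lapply t)

lemma eδ_mul (t : T) (y) : eδ k (eE k t * y) = y - eE k t * eδ k y := by
  unfold eδ eE
  rw [ExteriorAlgebra.ι, CliffordAlgebra.contractLeft_ι_mul]
  simp

lemma eC_ι_mul (s : T) (v : T →₀ k) (y) : eC k s (ExteriorAlgebra.ι k v * y) =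
    v s • y - ExteriorAlgebra.ι k v * eC k s y := by
  unfold eC
  rw [ExteriorAlgebra.ι, CliffordAlgebra.contractLeft_ι_mul]
  simp

lemma eC_mul (s t : T) (y) : eC k s (eE k t * y) =
    (if t = s then y else 0) - eE k t * eC k s y := by
  unfold eE
  rw [eC_ι_mul, Finsupp.single_apply]
  split_ifs <;> simp

lemma eE_sq (t : T) : eE k t * eE k t = 0 := ExteriorAlgebra.ι_sq_zero _

lemma eE_swap (s t : T) : eE k s * eE k t = - (eE k t * eE k s) :=
  eq_neg_of_add_eq_zero_left (ExteriorAlgebra.ι_add_mul_swap _ _)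

lemma eM_nil : eM k ([] : List T) = 1 := rfl

lemma eM_cons (t : T) (l : List T) : eM k (t :: l) = eE k t * eM k l := by simp [eM]

lemma eδ_one : eδ k (1 : ExteriorAlgebra k (T →₀ k)) = 0 := by
  unfold eδ; exact CliffordAlgebra.contractLeft_one _ _

lemma eC_one (t : T) : eC k t (1 : ExteriorAlgebra k (T →₀ k)) = 0 := by
  unfold eC; exact CliffordAlgebra.contractLeft_one _ _

lemma eδ_eδ (x : ExteriorAlgebra k (T →₀ k)) : eδ k (eδ k x) = 0 := by
  unfold eδ; exact CliffordAlgebra.contractLeft_contractLeft _ _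

lemma eδ_eC (t : T) (x : ExteriorAlgebra k (T →₀ k)) : eδ k (eC k t x) = - eC k t (eδ k x) := by
  unfold eδ eC; exact CliffordAlgebra.contractLeft_comm _ _ _

lemma span_eM : Submodule.span k (Set.range (eM k (T := T))) = ⊤ := by
  have hmul : ∀ (t : T) (x), x ∈ Submodule.span k (Set.range (eM k (T := T))) →
      eE k t * x ∈ Submodule.span k (Set.range (eM k (T := T))) := by
    intro t x hx
    induction hx using Submodule.span_induction with
    | mem x hx =>
      obtain ⟨l, rfl⟩ := hx
      exact Submodule.subset_span ⟨t :: l, eM_cons k t l⟩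
    | zero => simp
    | add x y _ _ hx hy => rw [mul_add]; exact add_mem hx hy
    | smul a x _ hx => rw [mul_smul_comm]; exact Submodule.smul_mem _ _ hx
  rw [eq_top_iff]
  rintro x -
  induction x using CliffordAlgebra.left_induction with
  | algebraMap r =>
    rw [Algebra.algebraMap_eq_smul_one]
    exact Submodule.smul_mem _ _ (Submodule.subset_span ⟨[], rfl⟩)
  | add x y hx hy => exact add_mem hx hy
  | ι_mul x v hx =>
    induction v using Finsupp.induction_linear with
    | zero => simp
    | add v w hv hw => rw [map_add, add_mul]; exact add_mem hv hw
    | single t a =>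
      have : Finsupp.single t a = a • Finsupp.single t (1 : k) := by simp
      rw [this, map_smul, smul_mul_assoc]
      exact Submodule.smul_mem _ _ (hmul t x hx)

lemma eE_mul_eM {t : T} {l : List T} (h : t ∈ l) : eE k t * eM k l = 0 := by
  induction l with
  | nil => simp at h
  | cons s l ih =>
    rw [eM_cons, ← mul_assoc]
    by_cases hs : t = s
    · subst hs; rw [eE_sq, zero_mul]
    · rw [eE_swap, neg_mul, mul_assoc, ih (by simpa [hs] using h)]; simp

lemma eM_eq_zero {l : List T} (h : ¬ l.Nodup) : eM k l = 0 := by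
  induction l with
  | nil => simp at h
  | cons s l ih =>
    rw [eM_cons]
    by_cases hs : s ∈ l
    · exact eE_mul_eM k hs
    · rw [ih (fun h' => h (List.nodup_cons.2 ⟨hs, h'⟩)), mul_zero]

lemma eC_eM_of_notMem {t : T} {l : List T} (h : t ∉ l) : eC k t (eM k l) = 0 := by
  induction l with
  | nil => exact eC_one k t
  | cons s l ih =>
    simp only [List.mem_cons, not_or] at h
    rw [eM_cons, eC_mul, ih h.2, if_neg (Ne.symm h.1)]; simp

/-- The number operator of a vertex is diagonal on monomials. -/
lemma eE_eC_eM (t : T) (l : List T) :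
    eE k t * eC k t (eM k l) = if t ∈ l then eM k l else 0 := by
  induction l with
  | nil => simp [eM_nil, eC_one]
  | cons s l ih =>
    rw [eM_cons, eC_mul, mul_sub, ← mul_assoc]
    by_cases hs : s = t
    · subst hs; simp [eE_sq]
    · rw [if_neg hs, eE_swap, neg_mul, mul_assoc, ih]
      simp only [mul_zero, zero_sub, neg_neg, List.mem_cons, Ne.symm hs, false_or]
      split_ifs <;> simp

variable (β : T → T)

/-- A list of vertices is a simplex if it does not contain a whole block, the blocks being the
fibres of `β`.  The simplicial complex is thus the join of the boundaries of the blocks, which is a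
sphere. -/
def NF (l : List T) : Prop := ∀ b, ∃ t, β t = β b ∧ t ∉ l

/-- The chains spanned by the simplices with `q` vertices. -/
def eS (q : ℕ) : Submodule k (ExteriorAlgebra k (T →₀ k)) :=
  Submodule.span k {x | ∃ l, NF β l ∧ l.length = q ∧ eM k l = x}

variable {β}

lemma eS_le {q : ℕ} {B : Submodule k (ExteriorAlgebra k (T →₀ k))}
    (φ : ExteriorAlgebra k (T →₀ k) →ₗ[k] ExteriorAlgebra k (T →₀ k))
    (h : ∀ l : List T, l.Nodup → NF β l → l.length = q → φ (eM k l) ∈ B) :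
    ∀ x ∈ eS k β q, φ x ∈ B := by
  intro x hx
  induction hx using Submodule.span_induction with
  | mem x hx =>
    obtain ⟨l, h1, h2, rfl⟩ := hx
    by_cases hl : l.Nodup
    · exact h l hl h1 h2
    · rw [eM_eq_zero k hl]; simp
  | zero => simp
  | add x y _ _ hx hy => rw [map_add]; exact add_mem hx hy
  | smul a x _ hx => rw [map_smul]; exact Submodule.smul_mem _ _ hx

lemma eM_mem_eS {q : ℕ} {l : List T} (h : NF β l) (hq : l.length = q) : eM k l ∈ eS k β q :=
  Submodule.subset_span ⟨l, h, hq, rfl⟩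

/-- Contractions of a monomial are combinations of smaller monomials. -/
lemma contract_eM (φ : ExteriorAlgebra k (T →₀ k) →ₗ[k] ExteriorAlgebra k (T →₀ k))
    (h1 : φ 1 = 0) (h : ∀ t y, ∃ a : k, φ (eE k t * y) = a • y - eE k t * φ y) (l : List T) :
    φ (eM k l) ∈ Submodule.span k {x | ∃ l', l' ⊆ l ∧ l'.length + 1 = l.length ∧ eM k l' = x} := by
  induction l with
  | nil => rw [eM_nil, h1]; simp
  | cons t l ih =>
    obtain ⟨a, ha⟩ := h t (eM k l)
    rw [eM_cons, ha]
    refine sub_mem (Submodule.smul_mem _ _ (Submodule.subset_span ⟨l, by simp, by simp, rfl⟩)) ?_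
    generalize φ (eM k l) = y at ih
    induction ih using Submodule.span_induction with
    | mem x hx =>
      obtain ⟨l', h1, h2, rfl⟩ := hx
      exact Submodule.subset_span ⟨t :: l', List.cons_subset_cons _ h1, by simp [h2], eM_cons k t l'⟩
    | zero => simp
    | add x y _ _ hx hy => rw [mul_add]; exact add_mem hx hy
    | smul a x _ hx => rw [mul_smul_comm]; exact Submodule.smul_mem _ _ hx

lemma contract_eS (φ : ExteriorAlgebra k (T →₀ k) →ₗ[k] ExteriorAlgebra k (T →₀ k))
    (h1 : φ 1 = 0) (h : ∀ t y, ∃ a : k, φ (eE k t * y) = a • y - eE k t * φ y) (q : ℕ) :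
    ∀ x ∈ eS k β (q + 1), φ x ∈ eS k β q := by
  refine eS_le k φ fun l _ hl hq => ?_
  refine Submodule.span_mono ?_ (contract_eM k φ h1 h l)
  rintro x ⟨l', h1, h2, rfl⟩
  refine ⟨l', fun b => ?_, by omega, rfl⟩
  obtain ⟨t, ht, ht'⟩ := hl b
  exact ⟨t, ht, fun h => ht' (h1 h)⟩

lemma eδ_eS (q : ℕ) : ∀ x ∈ eS k β (q + 1), eδ k x ∈ eS k β q :=
  contract_eS k _ (eδ_one k) (fun t y => ⟨1, by rw [eδ_mul, one_smul]⟩) q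

lemma eC_eS (t : T) (q : ℕ) : ∀ x ∈ eS k β (q + 1), eC k t x ∈ eS k β q :=
  contract_eS k _ (eC_one k t) (fun s y => ⟨if s = t then 1 else 0, by
    rw [eC_mul]; split_ifs <;> simp⟩) q

lemma eS_zero : ∀ x ∈ eS k β 0, ∃ a : k, x = a • 1 := by
  intro x hx
  have : eS k β 0 ≤ Submodule.span k {1} := by
    refine Submodule.span_mono ?_
    rintro x ⟨l, _, h2, rfl⟩
    rw [List.length_eq_zero_iff] at h2
    subst h2; rfl
  obtain ⟨a, ha⟩ := Submodule.mem_span_singleton.1 (this hx)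
  exact ⟨a, ha.symm⟩

/-- The edge vector from the base point of a block. -/
def eF (β : T → T) (t : T) : ExteriorAlgebra k (T →₀ k) :=
  ExteriorAlgebra.ι k (Finsupp.single t 1 - Finsupp.single (β t) 1)

lemma eF_eq (t : T) : eF k β t = eE k t - eE k (β t) := by simp [eF, eE]

lemma eδ_eF_mul (t : T) (y) : eδ k (eF k β t * y) = - (eF k β t * eδ k y) := by
  rw [eF_eq, sub_mul, map_sub, eδ_mul, eδ_mul, sub_mul]; abel

/-- Iterated contraction. -/
def eAl : List T → ExteriorAlgebra k (T →₀ k) →ₗ[k] ExteriorAlgebra k (T →₀ k)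
  | [] => LinearMap.id
  | t :: l => eC k t ∘ₗ eAl l

lemma eAl_eS (l : List T) : ∀ q, ∀ x ∈ eS k β (q + l.length), eAl k l x ∈ eS k β q := by
  induction l with
  | nil => intro q x hx; exact hx
  | cons t l ih =>
    intro q x hx
    exact eC_eS k t q _ (ih (q + 1) x (by rwa [List.length_cons, ← add_assoc, add_right_comm] at hx))

lemma eAl_eq_zero (l : List T) : ∀ q < l.length, ∀ x ∈ eS k β q, eAl k l x = 0 := by
  induction l with
  | nil => intro q hq; simp at hq
  | cons t l ih =>
    intro q hq x hx
    simp only [eAl, LinearMap.comp_apply]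
    rw [List.length_cons] at hq
    by_cases h : q < l.length
    · rw [ih q h x hx, map_zero]
    · obtain rfl : q = 0 + l.length := by omega
      obtain ⟨a, ha⟩ := eS_zero k _ (eAl_eS k l 0 x hx)
      rw [ha, map_smul, eC_one, smul_zero]

lemma eAl_ι_mul (l : List T) (v : T →₀ k) (hv : ∀ t ∈ l, v t = 0) (y) :
    eAl k l (ExteriorAlgebra.ι k v * y) =
      (-1 : k) ^ l.length • (ExteriorAlgebra.ι k v * eAl k l y) := by
  induction l with
  | nil => simp [eAl]
  | cons t l ih =>
    simp only [eAl, LinearMap.comp_apply]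
    rw [ih (fun s hs => hv s (by simp [hs])), map_smul, eC_ι_mul, hv t (by simp), zero_smul,
      zero_sub, List.length_cons, pow_succ]
    simp

lemma eAl_prod (g : T → T →₀ k) (l : List T) (hl : l.Nodup)
    (hg : ∀ s ∈ l, ∀ t ∈ l, g s t = if s = t then 1 else 0) :
    ∃ n : ℕ, eAl k l ((l.map (fun t => ExteriorAlgebra.ι k (g t))).prod) = (-1 : k) ^ n • 1 := by
  induction l with
  | nil => exact ⟨0, by simp [eAl]⟩
  | cons t l ih =>
    obtain ⟨n, hn⟩ := ih (List.nodup_cons.1 hl).2 (fun s hs r hr => hg s (by simp [hs]) r (by simp [hr]))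
    refine ⟨l.length + n, ?_⟩
    rw [List.map_cons, List.prod_cons]
    simp only [eAl, LinearMap.comp_apply]
    rw [eAl_ι_mul, hn, mul_smul_comm, smul_smul, map_smul, eC_ι_mul, eC_one,
      hg t (by simp) t (by simp)]
    · simp [pow_add]
    · intro s hs
      rw [hg t (by simp) s (by simp [hs]), if_neg]
      rintro rfl
      exact (List.nodup_cons.1 hl).1 hs

lemma eC_prod_mul (t : T) (l : List T) (h : ∀ s ∈ l, s ≠ t ∧ β s ≠ t) (y) :
    eC k t ((l.map (eF k β)).prod * y) =
      (-1 : k) ^ l.length • ((l.map (eF k β)).prod * eC k t y) := by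
  induction l with
  | nil => simp
  | cons s l ih =>
    rw [List.map_cons, List.prod_cons, mul_assoc, eF, eC_ι_mul, ih (fun s hs => h s (by simp [hs])),
      List.length_cons, pow_succ]
    have := h s (by simp)
    simp [this.1, this.2, mul_assoc]

lemma NF.sub {l l' : List T} (h : NF β l) (h' : l' ⊆ l) : NF β l' := fun b => by
  obtain ⟨t, ht, ht'⟩ := h b
  exact ⟨t, ht, fun hh => ht' (h' hh)⟩

lemma NF.cons {l : List T} (h : NF β l) {t : T} (ht : t ∉ l) (hβ : ∀ t, β (β t) = β t)
    (hb : β t ≠ t) : NF β (β t :: l) := by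
  intro b
  by_cases hbt : β t = β b
  · exact ⟨t, hbt, by simp [ht, hb.symm]⟩
  · obtain ⟨s, hs, hs'⟩ := h b
    refine ⟨s, hs, ?_⟩
    simp only [List.mem_cons, hs', or_false]
    rintro rfl
    rw [hβ] at hs
    exact hbt hs

/-- Contracting the part `l` of the join onto the base points: a homotopy from the identity to a
projection onto the multiples of `∏ eF`. -/
lemma exists_homotopy (hβ : ∀ t, β (β t) = β t) (l : List T) (hl : l.Nodup)
    (hb : ∀ t ∈ l, β t ≠ t) :
    ∃ H P : ExteriorAlgebra k (T →₀ k) →ₗ[k] ExteriorAlgebra k (T →₀ k),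
      (∀ q, ∀ x ∈ eS k β q, H x ∈ eS k β (q + 1)) ∧ (∀ q, ∀ x ∈ eS k β q, P x ∈ eS k β q) ∧
      (∀ x, eδ k (H x) + H (eδ k x) = x - P x) ∧ (∀ x, P (eδ k x) = eδ k (P x)) ∧
      ∃ n : ℕ, ∀ x, P x = (-1 : k) ^ n • ((l.map (eF k β)).prod * eAl k l x) := by
  induction l with
  | nil =>
    exact ⟨0, LinearMap.id, by simp, by simp, by simp, by simp, 0, by simp [eAl]⟩
  | cons t l ih =>
    obtain ⟨H, P, hH, hP, hHP, hPδ, n, hn⟩ := ih (List.nodup_cons.1 hl).2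
      (fun s hs => hb s (by simp [hs]))
    have hbt := hb t (by simp)
    -- the projection onto the simplices through `t`, moved to `t` minus its base point
    let N : ExteriorAlgebra k (T →₀ k) →ₗ[k] ExteriorAlgebra k (T →₀ k) :=
      LinearMap.mulLeft k (eF k β t) ∘ₗ eC k t
    let h : ExteriorAlgebra k (T →₀ k) →ₗ[k] ExteriorAlgebra k (T →₀ k) :=
      LinearMap.mulLeft k (eE k (β t)) ∘ₗ (LinearMap.id - N)
    have hN : ∀ x, N x = eF k β t * eC k t x := fun x => rfl
    have hh : ∀ x, h x = eE k (β t) * (x - N x) := fun x => rfl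
    have hNδ : ∀ x, N (eδ k x) = eδ k (N x) := by
      intro x
      rw [hN, hN, eδ_eF_mul, eδ_eC]; simp
    have hhδ : ∀ x, eδ k (h x) + h (eδ k x) = x - N x := by
      intro x
      rw [hh, hh, eδ_mul, hNδ, map_sub]; abel
    have hNS : ∀ q, ∀ x ∈ eS k β q, N x ∈ eS k β q := by
      intro q
      refine eS_le k N fun l' hl' hnf hq => ?_
      by_cases htl : t ∈ l'
      · obtain ⟨l1, l2, rfl⟩ := List.append_of_mem htl
        have hnd := hl'
        rw [List.nodup_middle, List.nodup_cons] at hnd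
        rw [hN, eF_eq, sub_mul, eE_eC_eM, if_pos htl]
        refine sub_mem (eM_mem_eS k hnf hq) ?_
        have key : eE k (β t) * eC k t (eM k (l1 ++ t :: l2)) ∈
            Submodule.span k {eM k (β t :: (l1 ++ l2))} := by
          have h1 : ∀ l1 l2 : List T, t ∉ l1 → t ∉ l2 → eC k t (eM k (l1 ++ t :: l2)) ∈
              Submodule.span k {eM k (l1 ++ l2)} := by
            intro l1 l2 h1 h2
            induction l1 with
            | nil =>
              simp only [List.nil_append]
              rw [eM_cons, eC_mul, if_pos rfl, eC_eM_of_notMem k h2]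
              simp
            | cons s l1 ih =>
              simp only [List.mem_cons, not_or] at h1
              simp only [List.cons_append]
              rw [eM_cons, eM_cons, eC_mul, if_neg (Ne.symm h1.1)]
              obtain ⟨a, ha⟩ := Submodule.mem_span_singleton.1 (ih h1.2)
              rw [← ha]
              refine Submodule.mem_span_singleton.2 ⟨-a, ?_⟩
              simp
          have hnd1 := hnd.1
          simp only [List.mem_append, not_or] at hnd1
          obtain ⟨a, ha⟩ := Submodule.mem_span_singleton.1 (h1 l1 l2 hnd1.1 hnd1.2)
          rw [← ha]
          refine Submodule.mem_span_singleton.2 ⟨a, ?_⟩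
          rw [eM_cons]; simp
        refine (Submodule.span_singleton_le_iff_mem _ _).2 ?_ key
        refine eM_mem_eS k ?_ ?_
        · refine NF.cons (hnf.sub ?_) hnd.1 hβ hbt
          intro x hx
          simp only [List.mem_append, List.mem_cons] at hx ⊢
          tauto
        · rw [← hq]; simp; omega
      · rw [hN, eC_eM_of_notMem k htl]; simp
    have hhS : ∀ q, ∀ x ∈ eS k β q, h x ∈ eS k β (q + 1) := by
      intro q
      refine eS_le k h fun l' hl' hnf hq => ?_
      have e : h (eM k l') = eE k (β t) * (eM k l' - eE k t * eC k t (eM k l')) := by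
        rw [hh, hN, eF_eq, sub_mul, mul_sub, mul_sub, mul_sub, ← mul_assoc (eE k (β t)) (eE k (β t)),
          eE_sq]
        simp
      rw [e, eE_eC_eM]
      by_cases htl : t ∈ l'
      · simp [htl]
      · rw [if_neg htl, sub_zero, ← eM_cons]
        exact eM_mem_eS k (NF.cons hnf htl hβ hbt) (by simp [hq])
    refine ⟨h ∘ₗ P + H, N ∘ₗ P, ?_, ?_, ?_, ?_, n + l.length, ?_⟩
    · intro q x hx
      exact add_mem (hhS q _ (hP q x hx)) (hH q x hx)
    · intro q x hx
      exact hNS q _ (hP q x hx)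
    · intro x
      have h1 := hhδ (P x)
      have h2 := hHP x
      simp only [LinearMap.add_apply, LinearMap.comp_apply, map_add, hPδ]
      calc _ = (eδ k (h (P x)) + h (eδ k (P x))) + (eδ k (H x) + H (eδ k x)) := by abel
        _ = _ := by rw [h1, h2]; abel
    · intro x
      simp only [LinearMap.comp_apply, hPδ, hNδ]
    · intro x
      simp only [LinearMap.comp_apply, hN, hn, map_smul, eAl]
      rw [eC_prod_mul k t l]
      · simp only [List.map_cons, List.prod_cons, mul_smul_comm, smul_smul, ← pow_add, mul_assoc]
      · intro s hs
        refine ⟨?_, ?_⟩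
        · rintro rfl; exact (List.nodup_cons.1 hl).1 hs
        · rintro rfl; exact hbt (hβ s)

end Exterior

/-! ### The tower of a sphere -/

section ETower
variable (k : Type*) [Field k] {T : Type*} [DecidableEq T] [Fintype T]
variable {Γ : Type*} [Group Γ] [MulAction Γ T]

/-- The action on the exterior algebra of a permutation representation. -/
def eRep : Representation k Γ (ExteriorAlgebra k (T →₀ k)) where
  toFun γ := (ExteriorAlgebra.map (Finsupp.lmapDomain k k (fun t : T => γ • t))).toLinearMap
  map_one' := by
    refine LinearMap.ext fun x => ?_
    have : (Finsupp.lmapDomain k k (fun t : T => (1 : Γ) • t)) = LinearMap.id := by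
      ext; simp
    simp only [this, ExteriorAlgebra.map_id]; rfl
  map_mul' γ δ := by
    refine LinearMap.ext fun x => ?_
    have : (Finsupp.lmapDomain k k (fun t : T => (γ * δ) • t)) =
        (Finsupp.lmapDomain k k (fun t : T => γ • t)) ∘ₗ
          (Finsupp.lmapDomain k k (fun t : T => δ • t)) := by
      refine Finsupp.lhom_ext fun t a => ?_
      simp [Finsupp.mapDomain_single, mul_smul]
    simp only [this, ← ExteriorAlgebra.map_comp_map]; rfl

lemma eRep_mul (γ : Γ) (x y : ExteriorAlgebra k (T →₀ k)) :
    eRep k γ (x * y) = eRep k γ x * eRep k γ y :=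
  map_mul (ExteriorAlgebra.map (Finsupp.lmapDomain k k (fun t : T => γ • t))) x y

lemma eRep_one (γ : Γ) : eRep k γ (1 : ExteriorAlgebra k (T →₀ k)) = 1 :=
  map_one (ExteriorAlgebra.map (Finsupp.lmapDomain k k (fun t : T => γ • t)))

lemma eRep_eE (γ : Γ) (t : T) : eRep k γ (eE k t) = eE k (γ • t) := by
  change ExteriorAlgebra.map (Finsupp.lmapDomain k k (fun t : T => γ • t))
    (ExteriorAlgebra.ι k (Finsupp.single t 1)) = _
  rw [ExteriorAlgebra.map_apply_ι]
  simp [eE, Finsupp.mapDomain_single]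

lemma eRep_eM (γ : Γ) (l : List T) : eRep k γ (eM k l) = eM k (l.map (fun t => γ • t)) := by
  induction l with
  | nil => simp [eM_nil, eRep_one]
  | cons t l ih => rw [eM_cons, eRep_mul, ih, eRep_eE, List.map_cons, eM_cons]

omit [Fintype T] in
lemma ext_eM {V : Type*} [AddCommGroup V] [Module k V]
    {φ φ' : ExteriorAlgebra k (T →₀ k) →ₗ[k] V} (h : ∀ l, φ (eM k l) = φ' (eM k l)) (x) :
    φ x = φ' x := by
  have hx : x ∈ Submodule.span k (Set.range (eM k (T := T))) := by rw [span_eM]; trivial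
  exact LinearMap.eqOn_span (by rintro _ ⟨l, rfl⟩; exact h l) hx

lemma eδ_eRep (γ : Γ) (x : ExteriorAlgebra k (T →₀ k)) :
    eδ k (eRep k γ x) = eRep k γ (eδ k x) := by
  refine ext_eM k (φ := eδ k ∘ₗ eRep k γ) (φ' := eRep k γ ∘ₗ eδ k) (fun l => ?_) x
  simp only [LinearMap.comp_apply]
  induction l with
  | nil => simp [eM_nil, eRep_one, eδ_one]
  | cons t l ih =>
    rw [eM_cons, eRep_mul, eRep_eE, eδ_mul, eδ_mul, map_sub, eRep_mul, ih, eRep_eE]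

/-- The augmentation in degree zero. -/
def eψ : ExteriorAlgebra k (T →₀ k) →ₗ[k] k :=
  (ExteriorAlgebra.algebraMapInv (R := k) (M := T →₀ k)).toLinearMap ∘ₗ eδ k

omit [Fintype T] [DecidableEq T] in
lemma algebraMapInv_one : ExteriorAlgebra.algebraMapInv (1 : ExteriorAlgebra k (T →₀ k)) = 1 :=
  map_one _

lemma eψ_eRep (γ : Γ) (x : ExteriorAlgebra k (T →₀ k)) : eψ k (eRep k γ x) = eψ k x := by
  have h : ∀ y : ExteriorAlgebra k (T →₀ k),
      ExteriorAlgebra.algebraMapInv (eRep k γ y) = ExteriorAlgebra.algebraMapInv y := by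
    intro y
    refine ext_eM k (φ := (ExteriorAlgebra.algebraMapInv).toLinearMap ∘ₗ eRep k γ)
      (φ' := (ExteriorAlgebra.algebraMapInv).toLinearMap) (fun l => ?_) y
    simp only [LinearMap.comp_apply, eRep_eM]
    cases l with
    | nil => rfl
    | cons t l =>
      simp [eM_cons, eE, ExteriorAlgebra.algebraMapInv]
  simp only [eψ, LinearMap.comp_apply, eδ_eRep, AlgHom.toLinearMap_apply, h]

lemma eψ_eE (t : T) : eψ k (eE k t) = 1 := by
  have := eδ_mul k t (1 : ExteriorAlgebra k (T →₀ k))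
  rw [mul_one, eδ_one, mul_zero, sub_zero] at this
  simp [eψ, this]

variable (β : T → T)

/-- The terms of the tower: simplicial chains on the sphere, and finally its top-dimensional
cycles. -/
def eA (m j : ℕ) : Submodule k (ExteriorAlgebra k (T →₀ k)) :=
  if j ≤ m then eS k β (j + 1) else eS k β (m + 1) ⊓ LinearMap.ker (eδ k)

/-- The maps of the tower: the simplicial boundary, and finally an inclusion. -/
def es (m j : ℕ) : ExteriorAlgebra k (T →₀ k) →ₗ[k] ExteriorAlgebra k (T →₀ k) :=
  if j < m then eδ k else LinearMap.id

variable {β}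

/-- The vertices that are not base points. -/
def offBase (β : T → T) : List T := (Finset.univ.filter (fun t => β t ≠ t)).toList

lemma eS_eq_zero (_hβ : ∀ t, β (β t) = β t) {x : ExteriorAlgebra k (T →₀ k)}
    (hx : x ∈ eS k β ((offBase β).length + 1)) : x = 0 := by
  refine (Submodule.mem_bot k).1 (eS_le k (B := ⊥) LinearMap.id (fun l hl hnf hq => ?_) x hx)
  exfalso
  choose f hf hf' using hnf
  have h1 : (Finset.univ.filter (fun t => β t = t)).card ≤ (Finset.univ \ l.toFinset).card := by
    refine Finset.card_le_card_of_injOn f ?_ ?_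
    · intro b _; simpa using hf' b
    · intro b hb b' hb' h
      simp only [Finset.coe_filter, Set.mem_ofPred_eq, Finset.mem_univ, true_and] at hb hb'
      rw [← hb, ← hb', ← hf b, ← hf b', h]
  have h2 := Finset.card_sdiff_add_card_eq_card (Finset.subset_univ l.toFinset)
  have h3 := Finset.card_filter_add_card_filter_not (s := (Finset.univ : Finset T)) (fun t => β t = t)
  rw [List.toFinset_card_of_nodup hl, hq] at h2
  simp only [offBase, Finset.length_toList] at h2
  simp only [ne_eq] at h2
  omega

lemma NF_offBase (hβ : ∀ t, β (β t) = β t) : NF β (offBase β) := fun b =>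
  ⟨β b, hβ b, by simp [offBase, hβ]⟩

lemma eA_stab (hγ : ∀ (γ : Γ) s t, β s = β t → β (γ • s) = β (γ • t)) (m j : ℕ) (γ : Γ) :
    ∀ x ∈ eA k β m j, eRep k γ x ∈ eA k β m j := by
  have hS : ∀ q, ∀ x ∈ eS k β q, eRep k γ x ∈ eS k β q := by
    intro q
    refine eS_le k _ fun l _ hnf hq => ?_
    rw [eRep_eM]
    refine eM_mem_eS k (fun b => ?_) (by simp [hq])
    obtain ⟨t, ht, ht'⟩ := hnf (γ⁻¹ • b)
    refine ⟨γ • t, by simpa using hγ γ _ _ ht, ?_⟩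
    simpa using ht'
  intro x hx
  unfold eA at hx ⊢
  split_ifs at hx ⊢ with h
  · exact hS _ x hx
  · refine ⟨hS _ x hx.1, ?_⟩
    have : eδ k x = 0 := hx.2
    change eδ k (eRep k γ x) = 0
    rw [eδ_eRep, this, map_zero]

/-- The fundamental cycle of the sphere. -/
def eτ (β : T → T) : ExteriorAlgebra k (T →₀ k) := ((offBase β).map (eF k β)).prod

lemma mem_offBase {t : T} : t ∈ offBase β ↔ β t ≠ t := by simp [offBase]

lemma nodup_offBase : (offBase β).Nodup := Finset.nodup_toList _

lemma eδ_eτ : eδ k (eτ k β) = 0 := by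
  unfold eτ
  induction offBase β with
  | nil => exact eδ_one k
  | cons t l ih => rw [List.map_cons, List.prod_cons, eδ_eF_mul, ih]; simp

lemma eτ_ne_zero (hβ : ∀ t, β (β t) = β t) : eτ k β ≠ 0 := by
  obtain ⟨n, hn⟩ := eAl_prod k (fun t => Finsupp.single t 1 - Finsupp.single (β t) 1) (offBase β)
    nodup_offBase (by
      intro s hs t ht
      have : β s ≠ t := by
        rintro rfl; exact (mem_offBase.1 ht) (hβ s)
      simp [Finsupp.single_apply, this])
  intro h
  change eAl k (offBase β) (eτ k β) = _ at hn
  rw [h, map_zero] at hn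
  have := congrArg ExteriorAlgebra.algebraMapInv hn
  rw [map_smul, algebraMapInv_one, map_zero, smul_eq_mul, mul_one] at this
  exact pow_ne_zero n (neg_ne_zero.2 one_ne_zero) this.symm

lemma eτ_mem (hβ : ∀ t, β (β t) = β t) : eτ k β ∈ eS k β (offBase β).length := by
  obtain ⟨H, P, -, hP, -, -, n, hn⟩ := exists_homotopy k hβ (offBase β) nodup_offBase
    (fun t ht => mem_offBase.1 ht)
  have h := hP _ _ (eM_mem_eS k (NF_offBase hβ) rfl)
  obtain ⟨n', hn'⟩ := eAl_prod k (fun t => Finsupp.single t 1) (offBase β)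
    nodup_offBase (by
      intro s hs t ht
      simp [Finsupp.single_apply])
  change eAl k (offBase β) (eM k (offBase β)) = _ at hn'
  rw [hn, hn', mul_smul_comm, mul_one, smul_smul, ← pow_add] at h
  have h2 := Submodule.smul_mem _ ((-1 : k) ^ (n + n')) h
  rw [smul_smul, ← mul_pow, neg_one_mul, neg_neg, one_pow, one_smul] at h2
  exact h2

variable {m : ℕ}

lemma eA_top (hβ : ∀ t, β (β t) = β t) (hm : (offBase β).length = m + 1)
    {x : ExteriorAlgebra k (T →₀ k)} : x ∈ eA k β m (m + 1) ↔ ∃ a : k, x = a • eτ k β := by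
  simp only [eA, if_neg (show ¬ (m + 1 ≤ m) by omega)]
  constructor
  · rintro ⟨h1, h2⟩
    obtain ⟨H, P, hH, -, hHP, -, n, hn⟩ := exists_homotopy k hβ (offBase β) nodup_offBase
      (fun t ht => mem_offBase.1 ht)
    have h3 := hHP x
    have h2' : eδ k x = 0 := h2
    have hz : H x = 0 := eS_eq_zero k hβ (by rw [hm]; exact hH _ _ h1)
    rw [h2', map_zero, hz, map_zero, add_zero, eq_comm, sub_eq_zero, hn] at h3
    obtain ⟨a, ha⟩ := eS_zero k _ (eAl_eS k (offBase β) 0 x (by rwa [zero_add, hm]))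
    rw [ha, mul_smul_comm, mul_one, smul_smul] at h3
    exact ⟨_, h3⟩
  · rintro ⟨a, rfl⟩
    refine ⟨Submodule.smul_mem _ _ ?_, ?_⟩
    · rw [← hm]; exact eτ_mem k hβ
    · change eδ k (a • eτ k β) = 0
      rw [map_smul, eδ_eτ, smul_zero]

lemma eTower [Nonempty T] (hβ : ∀ t, β (β t) = β t)
    (hγ : ∀ (γ : Γ) s t, β s = β t → β (γ • s) = β (γ • t)) (hm : (offBase β).length = m + 1)
    (hblock : ∀ t : T, ∃ s, β s = β t ∧ s ≠ t) :
    Tower (eRep k) (Representation.trivial k Γ k) m (eA k β m) (es k m) (eψ k) := by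
  have hlow : ∀ q ≤ m, ∀ x ∈ eS k β q, eδ k x = 0 → ∃ y ∈ eS k β (q + 1), eδ k y = x := by
    intro q hq x hx hd
    obtain ⟨H, P, hH, -, hHP, -, n, hn⟩ := exists_homotopy k hβ (offBase β) nodup_offBase
      (fun t ht => mem_offBase.1 ht)
    refine ⟨H x, hH q x hx, ?_⟩
    have h3 := hHP x
    rwa [hd, map_zero, add_zero, hn, eAl_eq_zero k (offBase β) q (by omega) x hx, mul_zero,
      smul_zero, sub_zero] at h3
  have hA : ∀ j, j ≤ m → eA k β m j = eS k β (j + 1) := fun j hj => if_pos hj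
  have hA' : ∀ j, ¬ j ≤ m → eA k β m j = eS k β (m + 1) ⊓ LinearMap.ker (eδ k) :=
    fun j hj => if_neg hj
  refine ⟨fun j γ => eA_stab k hγ m j γ, ?_, ?_, ?_, ?_, ?_, ?_, ?_, ?_, ?_⟩
  · intro j hj x hx
    rw [hA j hj]
    by_cases h : j < m
    · rw [hA (j + 1) h] at hx
      simp only [es, if_pos h]
      exact eδ_eS k _ x hx
    · obtain rfl : j = m := by omega
      rw [hA' _ (by omega)] at hx
      simp only [es, if_neg h]
      exact hx.1
  · intro j γ x
    unfold es; split_ifs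
    · exact eδ_eRep k γ x
    · rfl
  · intro j hj x hx
    simp only [es, if_pos hj]
    by_cases h : j + 1 < m
    · rw [if_pos h, eδ_eδ]
    · rw [if_neg h]
      rw [hA' _ (by omega)] at hx
      exact hx.2
  · intro j hj x hx h0
    simp only [es, if_pos hj] at h0
    rw [hA (j + 1) hj] at hx
    by_cases h : j + 1 < m
    · rw [hA (j + 2) h]
      simp only [es, if_pos h]
      exact hlow (j + 2) (by omega) x hx h0
    · rw [hA' (j + 2) (by omega)]
      obtain rfl : m = j + 1 := by omega
      exact ⟨x, ⟨hx, h0⟩, by simp [es]⟩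
  · intro x hx h0
    simpa [es] using h0
  · intro x hx
    by_cases h : 0 < m
    · simp [es, if_pos h, eψ, eδ_eδ]
    · rw [hA' 1 (by omega)] at hx
      have : eδ k x = 0 := hx.2
      simp [es, if_neg h, eψ, this]
  · intro x hx h0
    rw [hA 0 (by omega)] at hx
    have hd : eδ k x = 0 := by
      obtain ⟨a, ha⟩ := eS_zero k _ (eδ_eS k 0 x hx)
      simp only [eψ, LinearMap.comp_apply, ha, AlgHom.toLinearMap_apply, map_smul,
        algebraMapInv_one] at h0
      rw [ha]
      simp only [smul_eq_mul, mul_one] at h0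
      rw [h0, zero_smul]
    by_cases h : 0 < m
    · rw [hA 1 h]
      simp only [es, if_pos h]
      exact hlow 1 h x hx hd
    · rw [hA' _ (by omega)]
      obtain rfl : m = 0 := by omega
      exact ⟨x, ⟨hx, hd⟩, by simp [es]⟩
  · intro a
    obtain ⟨t⟩ := ‹Nonempty T›
    refine ⟨a • eE k t, Submodule.smul_mem _ _ ?_, by rw [map_smul, eψ_eE]; simp⟩
    rw [hA 0 (by omega)]
    have : eM k [t] = eE k t := by simp [eM]
    rw [← this]
    refine eM_mem_eS k (fun b => ?_) rfl
    by_cases hb : β t = β b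
    · obtain ⟨s, hs, hs'⟩ := hblock t
      exact ⟨s, hs.trans hb, by simpa using hs'⟩
    · exact ⟨b, rfl, by rintro h; simp at h; exact hb (by rw [h])⟩
  · intro γ x
    simp [eψ_eRep]

end ETower

/-! ### Acyclicity over a free action, and the Euler class -/

section EAcyclic
open Pointwise
variable (k : Type*) [Field k] {T : Type*} [DecidableEq T] [Fintype T]

/-- The product of the projections `N t` (for `t ∈ S`) and `1 - N t` (for `t ∉ S`), where `N t` is the
projection onto the monomials containing `t`. -/
def eProj (S : Finset T) (L : List T) : Module.End k (ExteriorAlgebra k (T →₀ k)) :=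
  (L.map (fun t => if t ∈ S then LinearMap.mulLeft k (eE k t) ∘ₗ eC k t
    else LinearMap.id - LinearMap.mulLeft k (eE k t) ∘ₗ eC k t)).prod

lemma eProj_eM (S : Finset T) (L l : List T) :
    eProj k S L (eM k l) = if ∀ t ∈ L, (t ∈ S ↔ t ∈ l) then eM k l else 0 := by
  induction L with
  | nil => simp [eProj]
  | cons t L ih =>
    have h1 : eProj k S (t :: L) = (if t ∈ S then LinearMap.mulLeft k (eE k t) ∘ₗ eC k t
      else LinearMap.id - LinearMap.mulLeft k (eE k t) ∘ₗ eC k t) * eProj k S L := by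
      simp [eProj]
    rw [h1, Module.End.mul_apply, ih]
    by_cases h : ∀ t ∈ L, (t ∈ S ↔ t ∈ l)
    · rw [if_pos h]
      by_cases hS : t ∈ S
      · rw [if_pos hS]
        simp only [LinearMap.comp_apply, LinearMap.mulLeft_apply, eE_eC_eM]
        by_cases hl : t ∈ l
        · rw [if_pos hl, if_pos]
          simpa [hS, hl] using h
        · rw [if_neg hl, if_neg]
          simp [hS, hl]
      · rw [if_neg hS]
        simp only [LinearMap.sub_apply, LinearMap.comp_apply, LinearMap.mulLeft_apply, eE_eC_eM,
          LinearMap.id_apply]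
        by_cases hl : t ∈ l
        · rw [if_pos hl, if_neg, sub_self]
          simp [hS, hl]
        · rw [if_neg hl, if_pos, sub_zero]
          simpa [hS, hl] using h
    · rw [if_neg h, map_zero]
      · rw [if_neg]
        intro h'
        exact h fun t ht => h' t (by simp [ht])

/-- The operator that is diagonal in the monomials, with prescribed eigenvalues. -/
lemma exists_diag (θ : Finset T → k) : ∃ Θ : Module.End k (ExteriorAlgebra k (T →₀ k)),
    ∀ l, Θ (eM k l) = θ l.toFinset • eM k l := by
  refine ⟨∑ S : Finset T, θ S • eProj k S Finset.univ.toList, fun l => ?_⟩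
  rw [LinearMap.sum_apply, Finset.sum_eq_single l.toFinset]
  · rw [LinearMap.smul_apply, eProj_eM, if_pos]
    simp
  · intro S _ hS
    rw [LinearMap.smul_apply, eProj_eM, if_neg, smul_zero]
    intro h
    apply hS
    ext t
    simpa using h t (by simp)
  · simp

variable {Γ : Type*} [Group Γ] [MulAction Γ T] {β : T → T} {U : Subgroup Γ} {p : ℕ} [Fact p.Prime]

/-- A nonempty set of vertices that contains no block has trivial stabiliser in `U`. -/
lemma stab_simplex (hU : Nat.card U = p) (hβU : ∀ s t, β s = β t → ∃ u ∈ U, u • s = t)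
    {S : Finset T} (hS : S.Nonempty) (hS' : ∀ b, ∃ t, β t = β b ∧ t ∉ S)
    {u : U} (hu : u • S = S) : u = 1 := by
  have : Fact (Nat.card U).Prime := by rw [hU]; infer_instance
  rcases (MulAction.stabilizer U S).eq_bot_or_eq_top_of_prime_card with h | h
  · have : u ∈ MulAction.stabilizer U S := hu
    rw [h] at this
    exact Subgroup.mem_bot.1 this
  · exfalso
    obtain ⟨b, hb⟩ := hS
    obtain ⟨t, ht, ht'⟩ := hS' b
    obtain ⟨v, hv, rfl⟩ := hβU b t ht.symm
    have h2 : (⟨v, hv⟩ : U) ∈ MulAction.stabilizer U S := by rw [h]; trivial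
    have h3 : (⟨v, hv⟩ : U) • S = S := h2
    apply ht'
    rw [← h3]
    exact Finset.smul_mem_smul_finset (a := (⟨v, hv⟩ : U)) hb

lemma acyc_eA [Finite U] (hU : Nat.card U = p)
    (hβU : ∀ s t, β s = β t → ∃ u ∈ U, u • s = t)
    (hγ : ∀ (γ : Γ) s t, β s = β t → β (γ • s) = β (γ • t)) (m j : ℕ) (hj : j ≤ m) :
    Acyc (eRep k) U (eA k β m j) := by
  classical
  have : Fintype U := Fintype.ofFinite U
  let rep : Finset T → Finset T := fun S => (Quotient.mk (MulAction.orbitRel U (Finset T)) S).out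
  obtain ⟨Θ, hΘ⟩ := exists_diag k (fun S : Finset T => if rep S = S then (1 : k) else 0)
  have hA : eA k β m j = eS k β (j + 1) := if_pos hj
  have hst := fun r (_ : r ∈ U) => eA_stab k hγ m j r
  rw [hA] at hst ⊢
  refine acyc_of_trace hst Θ ?_ ?_
  · refine eS_le k Θ fun l _ hnf hq => ?_
    rw [hΘ]
    exact Submodule.smul_mem _ _ (eM_mem_eS k hnf hq)
  · intro x hx
    have h0 : ∀ x ∈ eS k β (j + 1), ((∑ r : U, (eRep k (r : Γ)) ∘ₗ Θ ∘ₗ (eRep k (r : Γ)⁻¹)) -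
        LinearMap.id : Module.End k _) x ∈ (⊥ : Submodule k (ExteriorAlgebra k (T →₀ k))) := by
      refine eS_le k _ fun l hl hnf hq => ?_
      rw [Submodule.mem_bot, LinearMap.sub_apply, sub_eq_zero, LinearMap.sum_apply,
        LinearMap.id_apply]
      have h1 : ∀ r : U, ((eRep k (r : Γ)) ∘ₗ Θ ∘ₗ (eRep k (r : Γ)⁻¹)) (eM k l) =
          (if rep l.toFinset = r⁻¹ • l.toFinset then (1 : k) else 0) • eM k l := by
        intro r
        have h2 : (l.map (fun t => (r : Γ)⁻¹ • t)).toFinset = r⁻¹ • l.toFinset := by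
          ext t
          simp only [List.mem_toFinset, List.mem_map, Finset.mem_smul_finset]
          rfl
        have h3 : rep (r⁻¹ • l.toFinset) = rep l.toFinset := by
          simp only [rep]
          congr 1
          exact Quotient.sound ⟨r⁻¹, rfl⟩
        simp only [LinearMap.comp_apply]
        rw [eRep_eM, hΘ, map_smul, eRep_eM, h2, h3]
        simp [Function.comp_def]
      rw [Finset.sum_congr rfl fun r _ => h1 r, ← Finset.sum_smul]
      obtain ⟨r, hr⟩ : ∃ r : U, r • l.toFinset = rep l.toFinset :=
        Quotient.mk_out (s := MulAction.orbitRel U (Finset T)) l.toFinset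
      rw [Finset.sum_eq_single r⁻¹, if_pos (by rw [inv_inv, hr]), one_smul]
      · intro s _ hs
        rw [if_neg]
        intro h
        apply hs
        have h4 : (r⁻¹ * s⁻¹) • l.toFinset = l.toFinset := by
          rw [mul_smul, ← h, ← hr, inv_smul_smul]
        have h5 := stab_simplex hU hβU (S := l.toFinset)
          (by rw [List.toFinset_nonempty_iff]; rintro rfl; simp at hq)
          (fun b => by simpa using hnf b) h4
        rw [mul_eq_one_iff_eq_inv, inv_inv] at h5
        exact h5.symm
      · simp
    have h6 := h0 x hx
    rw [Submodule.mem_bot, LinearMap.sub_apply, sub_eq_zero, LinearMap.sum_apply,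
      LinearMap.id_apply] at h6
    exact h6

end EAcyclic

section EClass
variable {k : Type*} [Field k] {p : ℕ} [Fact p.Prime] [CharP k p]

lemma eq_one_of_pow {x : k} {n : ℕ} (h : x ^ p ^ n = 1) : x = 1 := by
  have := (ExpChar.pow_prime_pow_mul_eq_one_iff p n 1 x).1 (by rwa [mul_one])
  rwa [pow_one] at this

/-- The class `e`: the Euler class of a sphere with `Γ`-action.  Let `U ≤ Γ` be a normal
subgroup of order `p` that acts freely on `T`, and let the `p`-subgroup `L` fix a point of `T`.  There
is a cocycle `e` of degree `m + 1`, equivariant up to a sign character `ε`, whose restriction to `L`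
is a coboundary, and such that multiplication by `e` is onto in high degrees over `U`. -/
theorem exists_euler {Γ T : Type*} [Group Γ] [Finite Γ] [Fintype T] [MulAction Γ T]
    (U L : Subgroup Γ) [U.Normal] (hU : Nat.card U = p)
    (hfree : ∀ u ∈ U, ∀ t : T, u • t = t → u = 1) (hLp : IsPGroup p L) (t₀ : T)
    (hL : ∀ l ∈ L, l • t₀ = t₀) :
    ∃ (m : ℕ) (e : (ℕ → Γ) → k) (ε : Γ → k),
      IsC (Representation.trivial k Γ k) U (m + 1) ⊤ e ∧
      (∀ γ g, e (fun j => γ * g j) = ε γ * e g) ∧ (∀ γ, ε γ ^ Nat.card Γ = 1) ∧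
      cobd (m + 1) e = 0 ∧
      (∃ r, IsC (Representation.trivial k Γ k) L m ⊤ r ∧ cobd m r = e) ∧
      ∀ n (y : (ℕ → Γ) → k), IsC (Representation.trivial k Γ k) U (n + (m + 1)) ⊤ y →
        cobd (n + (m + 1)) y = 0 →
        ∃ c r, IsC (Representation.trivial k Γ k) U n ⊤ c ∧ cobd n c = 0 ∧
          IsC (Representation.trivial k Γ k) U (n + m) ⊤ r ∧
          act (m + 1) e c + cobd (n + m) r = y := by
  classical
  have hp : p.Prime := Fact.out
  -- base points of the `U`-orbits
  let β : T → T := fun t => (Quotient.mk (MulAction.orbitRel U T) t).out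
  have hβ1 : ∀ t, ∃ u ∈ U, u • t = β t := fun t => by
    obtain ⟨u, hu⟩ := Quotient.mk_out (s := MulAction.orbitRel U T) t
    exact ⟨u, u.2, hu⟩
  have hβ2 : ∀ u ∈ U, ∀ t, β (u • t) = β t := fun u hu t => by
    simp only [β]
    congr 1
    exact Quotient.sound ⟨⟨u, hu⟩, rfl⟩
  have hβU : ∀ s t, β s = β t → ∃ u ∈ U, u • s = t := by
    intro s t h
    obtain ⟨u, hu, hu'⟩ := hβ1 s
    obtain ⟨v, hv, hv'⟩ := hβ1 t
    exact ⟨v⁻¹ * u, U.mul_mem (U.inv_mem hv) hu, by rw [mul_smul, hu', h, ← hv', inv_smul_smul]⟩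
  have hβ : ∀ t, β (β t) = β t := fun t => by
    obtain ⟨u, hu, hu'⟩ := hβ1 t
    rw [← hu', hβ2 u hu, hu']
  have hγ : ∀ (γ : Γ) s t, β s = β t → β (γ • s) = β (γ • t) := by
    intro γ s t h
    obtain ⟨u, hu, rfl⟩ := hβU s t h
    have : γ • u • s = (γ * u * γ⁻¹) • γ • s := by simp [mul_smul]
    rw [this, hβ2 _ (‹U.Normal›.conj_mem u hu γ)]
  have hblock : ∀ t : T, ∃ s, β s = β t ∧ s ≠ t := by
    intro t
    have : Nontrivial U := by
      rw [← Finite.one_lt_card_iff_nontrivial, hU]; exact hp.one_lt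
    obtain ⟨⟨u, hu⟩, hu1⟩ := exists_ne (1 : U)
    refine ⟨u • t, hβ2 u hu t, fun h => hu1 ?_⟩
    exact Subtype.ext (hfree u hu t h)
  have : Nonempty T := ⟨t₀⟩
  obtain ⟨m, hm⟩ : ∃ m, (offBase β).length = m + 1 := by
    obtain ⟨s, hs, hs'⟩ := hblock (β t₀)
    have : s ∈ offBase β := mem_offBase.2 fun h => hs' (by rw [← h, hs, hβ])
    exact ⟨_, (Nat.sub_add_cancel (List.length_pos_of_mem this)).symm⟩
  have tw := eTower k hβ hγ hm hblock
  obtain ⟨w, hw⟩ := tw.exists_chain (U := ⊤) (n := 0) (y := fun _ => 1)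
    ⟨fun _ _ _ => rfl, fun _ _ _ => rfl, fun _ => trivial⟩
    (by funext g; simp [cobd, Finset.sum_range_succ])
  have htop : ∀ x, x ∈ eA k β m (m + 1) ↔ ∃ a : k, x = a • eτ k β := fun x => eA_top k hβ hm
  have hwC := hw.isC (m + 1) le_rfl
  rw [zero_add] at hwC
  have hwt := hw.top
  rw [zero_add] at hwt
  choose e he using fun g => (htop _).1 (hwC.mem g)
  have hτ := eτ_ne_zero k hβ
  choose ε hε using fun γ => (htop _).1 (tw.stab (m + 1) γ (eτ k β) ((htop _).2 ⟨1, by simp⟩))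
  obtain ⟨π, hπ⟩ := Module.Projective.exists_dual_eq_one k hτ
  have heq : ∀ g, π (w (m + 1) g) = e g := fun g => by rw [he, map_smul, hπ]; simp
  have hπε : ∀ γ, π (eRep k γ (eτ k β)) = ε γ := fun γ => by rw [hε, map_smul, hπ]; simp
  have hεpow : ∀ γ n, ε (γ ^ n) = ε γ ^ n := by
    intro γ n
    induction n with
    | zero => rw [pow_zero, pow_zero, ← hπε]; simp [hπ]
    | succ n ih =>
      rw [pow_succ', ← hπε, map_mul, Module.End.mul_apply, hε (γ ^ n), map_smul, hε, map_smul,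
        map_smul, hπ, ih]
      simp [pow_succ]
  have hε1 : ε 1 = 1 := by rw [← hπε]; simp [hπ]
  have hεU : ∀ u ∈ U, ε u = 1 := by
    intro u hu
    refine eq_one_of_pow (p := p) (n := 1) ?_
    have h1 : (⟨u, hu⟩ : U) ^ p = 1 := by rw [← hU]; exact pow_card_eq_one'
    rw [pow_one, ← hεpow, ← hε1]
    congr 1
    exact congrArg Subtype.val h1
  have hεL : ∀ l ∈ L, ε l = 1 := by
    intro l hl
    obtain ⟨n, hn⟩ := hLp ⟨l, hl⟩
    refine eq_one_of_pow (p := p) (n := n) ?_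
    rw [← hεpow, ← hε1]
    congr 1
    exact congrArg Subtype.val hn
  have hee : ∀ γ g, e (fun j => γ * g j) = ε γ * e g := by
    intro γ g
    rw [← heq, hwC.eqv γ trivial, he, map_smul, hε, map_smul, map_smul, hπ]
    simp [mul_comm]
  have heU : ∀ U' : Subgroup Γ, (∀ u ∈ U', ε u = 1) →
      IsC (Representation.trivial k Γ k) U' (m + 1) ⊤ e := fun U' hU' =>
    ⟨fun g g' h => by rw [← heq, ← heq, hwC.dep g g' h],
      fun u hu g => by rw [hee, hU' u hu, one_mul]; rfl, fun _ => trivial⟩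
  refine ⟨m, e, ε, heU U hεU, hee, fun γ => ?_, ?_, ?_, ?_⟩
  · rw [← hεpow, pow_card_eq_one', hε1]
  · have := cobd_map (m + 1) (w (m + 1)) π
    rw [hwt] at this
    simp only [heq] at this
    rw [this]; funext g; simp
  · have hwL : IsChain (eRep k) L m (eA k β m) (es k m) (eψ k) 0 (fun _ => 1) w :=
      ⟨fun i hi => (hw.isC i hi).mono le_top, hw.bot, hw.step, hw.top⟩
    have hct : ∀ n, cobd (n + 1) (0 : (ℕ → Γ) → ExteriorAlgebra k (T →₀ k)) = 0 :=
      fun n => cobd_zero _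
    -- over `L` there is a second chain, which starts with the constant `t₀` and ends in zero
    have hwL' : IsChain (eRep k) L m (eA k β m) (es k m) (eψ k) 0 (fun _ => 1)
        (fun i _ => if i = 0 then eE k t₀ else 0) := by
      refine ⟨?_, ?_, ?_, ?_⟩
      · rintro (_ | i) hi
        · refine ⟨fun _ _ _ => rfl, fun l hl g => ?_, fun g => ?_⟩
          · simp [eRep_eE, hL l hl]
          · simp only [if_true, eA, if_pos (Nat.zero_le m)]
            have : eM k [t₀] = eE k t₀ := by simp [eM]
            rw [← this]
            refine eM_mem_eS k (fun b => ?_) rfl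
            by_cases hb : β t₀ = β b
            · obtain ⟨s, hs, hs'⟩ := hblock t₀
              exact ⟨s, hs.trans hb, by simpa using hs'⟩
            · exact ⟨b, rfl, by rintro h; simp at h; exact hb (by rw [h])⟩
        · simpa using! IsC.zero
      · intro g; simp [eψ_eE]
      · rintro (_ | i) hi
        · funext g; simp [cobd, Finset.sum_range_succ]
        · funext g; simp [cobd]
      · funext g; simp [cobd]
    have h2 := hwL.sub hwL'
    rw [sub_self] at h2
    obtain ⟨r, hr, hr'⟩ := tw.chain_zero h2
    rw [zero_add] at hr hr'
    refine ⟨fun g => π (r g), hr.map π ?_ (fun _ _ => trivial), ?_⟩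
    · intro l hl x hx
      obtain ⟨a, rfl⟩ := (htop x).1 hx
      rw [map_smul, hε, hεL l hl, one_smul]; rfl
    · rw [cobd_map, hr']
      funext g
      simp [heq]
  · intro n y hy hdy
    have P : Pairing (eRep k) (eRep k) (Representation.trivial k Γ k) U m (eA k β m) (es k m)
        (eψ k) (eA k β m) (es k m) (eψ k) w
        ((LinearMap.lsmul k (ExteriorAlgebra k (T →₀ k))).flip)
        (LinearMap.toSpanSingleton k _ (eτ k β)) π e := by
      refine ⟨⟨fun i hi => (hw.isC i hi).mono le_top, hw.bot, hw.step, hw.top⟩, tw,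
        ?_, ?_, ?_, ?_, ?_, ?_, ?_, ?_, ?_⟩
      · intro u hu x y; simp
      · intro i x hx y; exact Submodule.smul_mem _ _ hx
      · intro i x y; simp
      · intro x y; simp [mul_comm]
      · intro v; simp [hπ]
      · intro v; exact (htop _).2 ⟨v, rfl⟩
      · intro x hx
        obtain ⟨a, rfl⟩ := (htop x).1 hx
        simp [hπ]
      · intro u hu v; simp [hε, hεU u hu]
      · intro g v
        simp [he, smul_smul, mul_comm]
    exact P.exists_eq_act (fun j hj => acyc_eA k hU hβU hγ m j hj) hy hdy

end EClass

/-! ### Cocycles modulo coboundaries and iterated products -/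

section Classes
variable {k : Type*} [Field k] {Γ : Type*} [Group Γ]
variable {V : Type*} [AddCommGroup V] [Module k V]
variable {Y : Type*} [AddCommGroup Y] [Module k Y]
variable {ρ : Representation k Γ V} {σ : Representation k Γ Y} {U : Subgroup Γ} {m n : ℕ}

/-- `f` is a `U`-equivariant cocycle of degree `n`. -/
structure IsZ (ρ : Representation k Γ V) (U : Subgroup Γ) (n : ℕ) (f : (ℕ → Γ) → V) : Prop where
  isC : IsC ρ U n ⊤ f
  cobd_eq : cobd n f = 0

/-- `f` is a `U`-equivariant coboundary of degree `n`. -/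
def IsB (ρ : Representation k Γ V) (U : Subgroup Γ) (n : ℕ) (f : (ℕ → Γ) → V) : Prop :=
  f = 0 ∨ ∃ i s, i + 1 = n ∧ IsC ρ U i ⊤ s ∧ cobd i s = f

lemma IsB.exists_eq {f : (ℕ → Γ) → V} (h : IsB ρ U (n + 1) f) :
    ∃ s, IsC ρ U n ⊤ s ∧ cobd n s = f := by
  rcases h with rfl | ⟨i, s, hi, hs, rfl⟩
  · exact ⟨0, IsC.zero, cobd_zero n⟩
  · obtain rfl : i = n := by omega
    exact ⟨s, hs, rfl⟩

lemma IsB.mk {s : (ℕ → Γ) → V} (hs : IsC ρ U n ⊤ s) : IsB ρ U (n + 1) (cobd n s) :=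
  Or.inr ⟨n, s, rfl, hs, rfl⟩

lemma IsB.add {f f' : (ℕ → Γ) → V} (h : IsB ρ U n f) (h' : IsB ρ U n f') : IsB ρ U n (f + f') := by
  rcases h with rfl | ⟨i, s, rfl, hs, rfl⟩
  · rwa [zero_add]
  · obtain ⟨s', hs', rfl⟩ := h'.exists_eq
    rw [← cobd_add]
    exact IsB.mk (hs.add hs')

lemma IsB.neg {f : (ℕ → Γ) → V} (h : IsB ρ U n f) : IsB ρ U n (-f) := by
  rcases h with rfl | ⟨i, s, rfl, hs, rfl⟩
  · left; simp
  · rw [← cobd_neg]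
    refine IsB.mk ?_
    have := (IsC.zero (ρ := ρ) (U := U) (n := i) (A := ⊤)).sub hs
    rwa [zero_sub] at this

lemma IsB.sub {f f' : (ℕ → Γ) → V} (h : IsB ρ U n f) (h' : IsB ρ U n f') : IsB ρ U n (f - f') := by
  rw [sub_eq_add_neg]; exact h.add h'.neg

lemma IsB.mono {f : (ℕ → Γ) → V} (h : IsB ρ U n f) {U' : Subgroup Γ} (hU : U' ≤ U) :
    IsB ρ U' n f := by
  rcases h with rfl | ⟨i, s, rfl, hs, rfl⟩
  · exact Or.inl rfl
  · exact IsB.mk (hs.mono hU)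

lemma IsZ.mono {f : (ℕ → Γ) → V} (h : IsZ ρ U n f) {U' : Subgroup Γ} (hU : U' ≤ U) :
    IsZ ρ U' n f := ⟨h.isC.mono hU, h.cobd_eq⟩

lemma IsZ.sub {f f' : (ℕ → Γ) → V} (h : IsZ ρ U n f) (h' : IsZ ρ U n f') : IsZ ρ U n (f - f') :=
  ⟨h.isC.sub h'.isC, by rw [cobd_sub, h.cobd_eq, h'.cobd_eq, sub_zero]⟩

lemma IsZ.map {f : (ℕ → Γ) → V} (h : IsZ ρ U n f) (φ : V →ₗ[k] Y)
    (hφ : ∀ u ∈ U, ∀ x, φ (ρ u x) = σ u (φ x)) : IsZ σ U n (fun g => φ (f g)) :=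
  ⟨h.isC.map φ (fun u hu x _ => hφ u hu x) (fun _ _ => trivial), by
    rw [cobd_map, h.cobd_eq]; funext g; simp⟩

lemma IsZ.const {v : V} (hv : ∀ u ∈ U, ρ u v = v) : IsZ ρ U 0 (fun _ => v) :=
  ⟨⟨fun _ _ _ => rfl, fun u hu _ => (hv u hu).symm, fun _ => trivial⟩, by
    funext g; simp [cobd, Finset.sum_range_succ]⟩

/-- Cocycles of degree zero are invariant elements. -/
lemma IsZ.eq_const {f : (ℕ → Γ) → V} (h : IsZ ρ U 0 f) :
    ∃ v, (∀ u ∈ U, ρ u v = v) ∧ f = fun _ => v := by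
  have hc : ∀ g, f g = f (fun _ => 1) := by
    intro g
    have := congrFun h.cobd_eq (fun j => if j = 0 then g 0 else 1)
    simp only [cobd, Finset.sum_range_succ, Finset.range_zero, Finset.sum_empty, pow_zero,
      one_smul, zero_add, pow_one, neg_smul, Pi.zero_apply, ← sub_eq_add_neg, sub_eq_zero] at this
    rw [h.isC.dep g (fun j => (fun i => if i = 0 then g 0 else 1) (skip 1 j)), ← this]
    · apply h.isC.dep
      intro i hi
      obtain rfl : i = 0 := by omega
      simp [skip]
    · intro i hi
      obtain rfl : i = 0 := by omega
      simp [skip]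
  refine ⟨f (fun _ => 1), fun u hu => ?_, funext hc⟩
  rw [← h.isC.eqv u hu, hc]

lemma IsC.act {z : (ℕ → Γ) → k} {b : (ℕ → Γ) → V}
    (hz : IsC (Representation.trivial k Γ k) U m ⊤ z) (hb : IsC ρ U n ⊤ b) :
    IsC ρ U (m + n) ⊤ (act m z b) :=
  IsC.cup (AY := ⊤) _ (fun u hu x y => by simp) (fun _ _ _ _ => trivial) hz hb

lemma cobd_act {z : (ℕ → Γ) → k} (hz : IsZ (Representation.trivial k Γ k) U m z)
    (b : (ℕ → Γ) → V) : cobd (m + n) (act m z b) = (-1 : ℤ) ^ m • act m z (cobd n b) := by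
  rw [act, cobd_cup _ m n hz.isC.dep, hz.cobd_eq]
  funext g
  simp [cup]

lemma cobd_act' {z : (ℕ → Γ) → k} (hz : IsC (Representation.trivial k Γ k) U m ⊤ z)
    {b : (ℕ → Γ) → V} (hb : cobd n b = 0) : cobd (m + n) (act m z b) = act (m + 1) (cobd m z) b := by
  rw [act, cobd_cup _ m n hz.dep, hb]
  funext g
  simp [cup]

lemma IsZ.act {z : (ℕ → Γ) → k} {b : (ℕ → Γ) → V}
    (hz : IsZ (Representation.trivial k Γ k) U m z) (hb : IsZ ρ U n b) :
    IsZ ρ U (m + n) (act m z b) := by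
  refine ⟨hz.isC.act hb.isC, ?_⟩
  rw [cobd_act hz, hb.cobd_eq]
  funext g
  simp [cup]

lemma IsB.act_left {z : (ℕ → Γ) → k} {b : (ℕ → Γ) → V}
    (hz : IsZ (Representation.trivial k Γ k) U m z) (hb : IsB ρ U n b) :
    IsB ρ U (m + n) (act m z b) := by
  rcases hb with rfl | ⟨i, s, rfl, hs, rfl⟩
  · left; funext g; simp [cup]
  · have h := cobd_act (n := i) hz s
    have h2 := IsB.mk (hz.isC.act hs)
    rw [h] at h2
    rcases neg_one_pow_eq_or ℤ m with hm | hm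
    · rwa [hm, one_smul] at h2
    · rw [hm, neg_smul, one_smul] at h2
      have := h2.neg
      rwa [neg_neg] at this

lemma IsB.act_right {z : (ℕ → Γ) → k} {b : (ℕ → Γ) → V}
    (hz : IsB (Representation.trivial k Γ k) U m z) (hb : IsZ ρ U n b) :
    IsB ρ U (m + n) (act m z b) := by
  rcases hz with rfl | ⟨i, s, rfl, hs, rfl⟩
  · left; funext g; simp [cup]
  · rw [← cobd_act' hs hb.cobd_eq, show i + 1 + n = i + n + 1 by omega]
    exact IsB.mk (hs.act hb.isC)

/-- The iterated cup product `z ∪ (z ∪ ⋯ (z ∪ b))` with `j` factors `z`. -/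
def it (m : ℕ) (z : (ℕ → Γ) → k) : ℕ → ((ℕ → Γ) → V) → (ℕ → Γ) → V
  | 0, b => b
  | j + 1, b => act m z (it m z j b)

lemma it_act (z : (ℕ → Γ) → k) (j : ℕ) (b : (ℕ → Γ) → V) :
    it m z j (act m z b) = it m z (j + 1) b := by
  induction j with
  | zero => rfl
  | succ j ih => rw [it, ih, it]; rfl

lemma it_map (φ : V →ₗ[k] Y) (z : (ℕ → Γ) → k) (j : ℕ) (b : (ℕ → Γ) → V) :
    it m z j (fun g => φ (b g)) = fun g => φ (it m z j b g) := by
  induction j with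
  | zero => rfl
  | succ j ih => rw [it, ih]; funext g; simp [it, cup]

lemma it_zero (z : (ℕ → Γ) → k) (j : ℕ) : it m z j (0 : (ℕ → Γ) → V) = 0 := by
  induction j with
  | zero => rfl
  | succ j ih => rw [it, ih]; funext g; simp [cup]

lemma IsC.it {z : (ℕ → Γ) → k} {b : (ℕ → Γ) → V} (j : ℕ)
    (hz : IsC (Representation.trivial k Γ k) U m ⊤ z) (hb : IsC ρ U n ⊤ b) :
    IsC ρ U (j * m + n) ⊤ (it m z j b) := by
  induction j with
  | zero => rwa [zero_mul, zero_add]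
  | succ j ih => rw [show (j + 1) * m + n = m + (j * m + n) by ring]; exact hz.act ih

lemma IsZ.it {z : (ℕ → Γ) → k} {b : (ℕ → Γ) → V} (j : ℕ)
    (hz : IsZ (Representation.trivial k Γ k) U m z) (hb : IsZ ρ U n b) :
    IsZ ρ U (j * m + n) (it m z j b) := by
  induction j with
  | zero => rwa [zero_mul, zero_add]
  | succ j ih => rw [show (j + 1) * m + n = m + (j * m + n) by ring]; exact hz.act ih

lemma cobd_it {z : (ℕ → Γ) → k} (hz : IsZ (Representation.trivial k Γ k) U m z) (hm : Even m)
    (j : ℕ) (b : (ℕ → Γ) → V) : cobd (j * m + n) (it m z j b) = it m z j (cobd n b) := by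
  induction j with
  | zero => rw [zero_mul, zero_add]; rfl
  | succ j ih =>
    rw [show (j + 1) * m + n = m + (j * m + n) by ring, it, cobd_act hz, ih, hm.neg_one_pow,
      one_smul, it]

/-- If `z ∪ -` is onto modulo coboundaries, then so is its iterate. -/
lemma exists_it {z : (ℕ → Γ) → k} (hz : IsZ (Representation.trivial k Γ k) U m z)
    (h : ∀ n y, IsZ ρ U (n + m) y → ∃ c, IsZ ρ U n c ∧ IsB ρ U (n + m) (y - SelfExt.act m z c))
    (j : ℕ) : ∀ y, IsZ ρ U (j * m) y →
      ∃ v, (∀ u ∈ U, ρ u v = v) ∧ IsB ρ U (j * m) (y - it m z j (fun _ => v)) := by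
  induction j with
  | zero =>
    intro y hy
    rw [zero_mul] at hy
    obtain ⟨v, hv, rfl⟩ := hy.eq_const
    exact ⟨v, hv, Or.inl (by funext g; simp [it])⟩
  | succ j ih =>
    intro y hy
    rw [Nat.succ_mul] at hy ⊢
    obtain ⟨c, hc, hB⟩ := h _ y hy
    obtain ⟨v, hv, hB'⟩ := ih c hc
    refine ⟨v, hv, ?_⟩
    have := hB.add (by rw [add_comm]; exact IsB.act_left hz hB')
    convert this using 1
    funext g
    simp [it, cup, smul_sub]

/-- Cohomologous cocycles have cohomologous iterated products. -/
lemma it_sub {z z' : (ℕ → Γ) → k} (hz : IsZ (Representation.trivial k Γ k) U m z)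
    (hz' : IsZ (Representation.trivial k Γ k) U m z')
    (h : IsB (Representation.trivial k Γ k) U m (z - z')) {b : (ℕ → Γ) → V} (hb : IsZ ρ U n b)
    (j : ℕ) : IsB ρ U (j * m + n) (it m z j b - it m z' j b) := by
  induction j with
  | zero => left; simp [it]
  | succ j ih =>
    rw [show (j + 1) * m + n = m + (j * m + n) by ring]
    have := (IsB.act_left hz ih).add (h.act_right (hz'.it j hb))
    convert this using 1
    funext g
    simp [it, cup, smul_sub]

lemma act_it {z : (ℕ → Γ) → k} (b : (ℕ → Γ) → V) (j : ℕ) :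
    SelfExt.act (j * m) (it m z j (fun _ => (1 : k))) b = it m z j b := by
  induction j with
  | zero => funext g; simp [it, cup]
  | succ j ih =>
    rw [it, it, ← ih]
    funext g
    simp only [cup, LinearMap.lsmul_apply, smul_eq_mul, mul_smul]
    congr 3
    funext i
    congr 1
    ring

lemma it_it {z : (ℕ → Γ) → k} (b : (ℕ → Γ) → V) (j l : ℕ) :
    it (j * m) (it m z j (fun _ => (1 : k))) l b = it m z (l * j) b := by
  have h : ∀ i j, it m z (i + j) b = it m z i (it m z j b) := by
    intro i j
    induction i with
    | zero => rw [zero_add]; rfl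
    | succ i ih => rw [Nat.succ_add, it, ih]; rfl
  induction l with
  | zero => rw [zero_mul]; rfl
  | succ l ih => rw [it, ih, act_it, ← h, Nat.succ_mul, add_comm]

end Classes

/-! ### Functions on the cyclic group -/

section Functions
variable {k : Type*} [Field k] {Γ : Type*} [Group Γ]
variable {V : Type*} [AddCommGroup V] [Module k V]
variable {ρ : Representation k Γ V} {R U : Subgroup Γ} {n : ℕ}

lemma IsC.top_of_prod {A : Submodule k V} {f : (ℕ → Γ) → V}
    (hprod : ∀ γ : Γ, ∃ r ∈ R, ∃ u ∈ U, r * u = γ)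
    (h : IsC ρ R n A f) (h' : IsC ρ U n A f) : IsC ρ ⊤ n A f where
  dep := h.dep
  eqv γ _ g := by
    obtain ⟨r, hr, u, hu, rfl⟩ := hprod γ
    have : (fun j => r * u * g j) = fun j => r * (u * g j) := by funext j; rw [mul_assoc]
    rw [this, h.eqv r hr (fun j => u * g j), h'.eqv u hu, map_mul]
    rfl
  mem := h.mem

variable (p : ℕ) [Fact p.Prime] (pr : Γ →* Multiplicative (ZMod p))

/-- The endomorphism of `Fun(C, V)` which cuts off at `0` and then applies `Ψ`. -/
def xCut (Ψ : V →ₗ[k] V) : (ZMod p → V) →ₗ[k] (ZMod p → V) :=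
  LinearMap.single k (fun _ : ZMod p => V) 0 ∘ₗ Ψ ∘ₗ LinearMap.proj 0

lemma xCut_trace [Fintype U] (Ψ : V →ₗ[k] V)
    (h : ∀ c, ∀ x, (∑ l : U, if pr (l : Γ) = c then ρ (l : Γ) (Ψ (ρ (l : Γ)⁻¹ x)) else 0) = x)
    (f : ZMod p → V) :
    ∑ l : U, xRep p pr ρ (l : Γ) (xCut p Ψ (xRep p pr ρ (l : Γ)⁻¹ f)) = f := by
  funext c
  conv_rhs => rw [← h (Multiplicative.ofAdd c) (f c)]
  rw [Finset.sum_apply]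
  refine Finset.sum_congr rfl fun l _ => ?_
  rw [xRep_apply]
  simp only [xCut, LinearMap.comp_apply, LinearMap.proj_apply, xRep_apply, LinearMap.single_apply,
    map_inv, toAdd_inv, sub_neg_eq_add, zero_add]
  by_cases hc : pr (l : Γ) = Multiplicative.ofAdd c
  · rw [if_pos hc, hc]; simp
  · rw [if_neg hc, Pi.single_eq_of_ne, map_zero]
    intro h0
    apply hc
    rw [sub_eq_zero.1 h0]; rfl

/-- If the identity of `V` is a trace from each fibre of `pr` over `U`, then `Fun(C, V)` is acyclic:
cutting off at `0` picks out one fibre at a time. -/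
lemma acyc_x_of_trace [Fintype U] (Ψ : V →ₗ[k] V)
    (h : ∀ c, ∀ x, (∑ l : U, if pr (l : Γ) = c then ρ (l : Γ) (Ψ (ρ (l : Γ)⁻¹ x)) else 0) = x) :
    Acyc (xRep p pr ρ) U ⊤ :=
  acyc_of_trace (fun _ _ _ _ => trivial) (xCut p Ψ) (fun _ _ => trivial)
    (fun f _ => xCut_trace p pr Ψ h f)

/-- If `Γ = R × C` with `C` acting trivially on `V`, then the cohomology of `Γ` in `Fun(C, V)` is that
of `R` in `V`; so acyclicity for `R` gives acyclicity for `Γ`. -/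
lemma acyc_x [Fintype U] (hR : Acyc ρ R ⊤) (hRU : ∀ r ∈ R, ∀ u ∈ U, r * u = u * r)
    (hprod : ∀ γ : Γ, ∃ r ∈ R, ∃ u ∈ U, r * u = γ) (hprR : ∀ r ∈ R, pr r = 1)
    (hprU : ∀ c, ∃! u : U, pr (u : Γ) = c) (htriv : ∀ u ∈ U, ∀ x, ρ u x = x) :
    Acyc (xRep p pr ρ) ⊤ ⊤ := by
  classical
  intro n f hf hdf
  have hz : ∀ c : ZMod p, ∃ z, IsC ρ R n ⊤ z ∧ cobd n z = fun g => f g c := by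
    intro c
    refine hR n _ ((hf.mono (U' := R) le_top).map (LinearMap.proj c) (fun u hu x _ => ?_)
      (fun _ _ => trivial)) ?_
    · simp [xRep_apply, hprR u hu]
    · have := cobd_map (n + 1) f (LinearMap.proj (R := k) (φ := fun _ : ZMod p => V) c)
      rw [hdf] at this
      exact this
  choose z hz hdz using hz
  have hcut : ∀ r ∈ R, ∀ f : ZMod p → V, xCut (k := k) p LinearMap.id (xRep p pr ρ r f) =
      xRep p pr ρ r (xCut (k := k) p LinearMap.id f) := by
    intro r hr f
    funext c
    simp only [xCut, LinearMap.comp_apply, LinearMap.proj_apply, xRep_apply,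
      LinearMap.single_apply, hprR r hr, toAdd_one, sub_zero, LinearMap.id_apply]
    by_cases hc : c = 0
    · subst hc; simp
    · rw [Pi.single_eq_of_ne hc, Pi.single_eq_of_ne hc, map_zero]
  have htr : ∀ c, ∀ x, (∑ u : U, if pr (u : Γ) = c then
      ρ (u : Γ) (LinearMap.id (R := k) (ρ (u : Γ)⁻¹ x)) else 0) = x := by
    intro c x
    obtain ⟨u, hu, hu'⟩ := hprU c
    rw [Finset.sum_eq_single u]
    · rw [if_pos hu, htriv _ u.2, LinearMap.id_apply, htriv _ (inv_mem u.2)]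
    · intro v _ hv
      rw [if_neg]
      exact fun h => hv (hu' v h)
    · simp
  have hzC : IsC (xRep p pr ρ) R n ⊤ (fun g c => z c g) := by
    refine ⟨fun g g' hg => ?_, fun r hr g => ?_, fun _ => trivial⟩
    · funext c; exact (hz c).dep g g' hg
    · funext c
      rw [xRep_apply, hprR r hr, toAdd_one, sub_zero]
      exact (hz c).eqv r hr g
  have hzd : cobd n (fun g c => z c g) = f := by
    funext g c
    rw [← congrFun (hdz c) g]
    exact (congrFun (cobd_map n (fun g c => z c g)
      (LinearMap.proj (R := k) (φ := fun _ : ZMod p => V) c)) g).symm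
  obtain ⟨z', h1, h2, h3⟩ := transfer (ρ := xRep p pr ρ) (A := ⊤) U
    (fun u hu r hr => (hRU r hr u hu).symm) (fun _ _ _ _ => trivial) (xCut p LinearMap.id)
    (fun _ _ => trivial) hcut (fun f _ => xCut_trace p pr _ htr f) (hf.mono le_top) hzC hzd
  exact ⟨z', h1.top_of_prod hprod h2, h3⟩

lemma xA_zero : xA p k V 0 = ⊤ := by simp [xA]

/-- Every class of even degree is the product of a power of `x` with an invariant, if the cohomology
in `Fun(C, V)` vanishes. -/
lemma exists_it_x (hac : Acyc (xRep p pr ρ) U ⊤) (j : ℕ) {y : (ℕ → Γ) → V}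
    (hy : IsZ ρ U (j * 2) y) :
    ∃ v, (∀ u ∈ U, ρ u v = v) ∧ IsB ρ U (j * 2) (y - it 2 (xC p k pr) j (fun _ => v)) := by
  refine exists_it ⟨(xC_isC p k pr).mono le_top, xC_cobd p k pr⟩ (fun n y hy => ?_) j y hy
  obtain ⟨B, ι, π, P⟩ := xPairing p pr ρ (k := k) U
  obtain ⟨c, r, hc, hdc, hr, hcr⟩ := P.exists_eq_act (n := n) (fun j hj => by
    rw [xA, if_pos hj]; exact hac) hy.isC hy.cobd_eq
  refine ⟨c, ⟨hc, hdc⟩, ?_⟩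
  rw [← hcr, add_sub_cancel_left]
  exact IsB.mk hr

/-- If the cohomology in `Fun(C, V)` vanishes, then `x` is a non-zero-divisor in positive degree. -/
lemma isB_of_act_x (hac : Acyc (xRep p pr ρ) U ⊤) {b : (ℕ → Γ) → V} (hb : IsZ ρ U (n + 1) b)
    (h : IsB ρ U (2 + (n + 1)) (act 2 (xC p k pr) b)) : IsB ρ U (n + 1) b := by
  obtain ⟨B, ι, π, P⟩ := xPairing p pr ρ (k := k) U
  rw [show 2 + (n + 1) = (n + 1 + 1) + 1 by ring] at h
  obtain ⟨r, hr, hdr⟩ := h.exists_eq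
  obtain ⟨f, hf, hdf, hfb⟩ := P.lift_of_act (n := n + 1) (fun j hj => by
    rw [xA, if_pos hj]; exact hac) hb.isC hb.cobd_eq hr hdr
  rw [xA_zero] at hf
  obtain ⟨z, hz, hdz⟩ := hac n f hf hdf
  have hz' := (hz.map (σ := ρ) (B := ⊤) (xψ p k V) (fun u hu x _ => (xTower p pr ρ).ψ_eqv _ _)
    (fun _ _ => trivial))
  have := IsB.mk hz'
  rw [cobd_map, hdz] at this
  rwa [show (fun g => (xψ p k V) (f g)) = b from funext hfb] at this

lemma isB_of_it_x (hac : Acyc (xRep p pr ρ) U ⊤) (j : ℕ) {b : (ℕ → Γ) → V}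
    (hb : IsZ ρ U (n + 1) b)
    (h : IsB ρ U (j * 2 + (n + 1)) (it 2 (xC p k pr) j b)) : IsB ρ U (n + 1) b := by
  have hx : IsZ (Representation.trivial k Γ k) U 2 (xC p k pr) :=
    ⟨(xC_isC p k pr).mono le_top, xC_cobd p k pr⟩
  induction j with
  | zero => rwa [zero_mul, zero_add] at h
  | succ j ih =>
    apply ih
    rw [show (j + 1) * 2 + (n + 1) = 2 + (j * 2 + n + 1) by ring] at h
    exact isB_of_act_x p pr hac (n := j * 2 + n) (hx.it j hb) h

/-- If the cohomology in `Fun(C, V)` vanishes and an invariant is annihilated by a power of `x`, then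
it is the sum of the values of an invariant function. -/
lemma exists_sum_of_it_x (hac : Acyc (xRep p pr ρ) U ⊤) (j : ℕ) {v : V}
    (hv : ∀ u ∈ U, ρ u v = v) (h : IsB ρ U ((j + 1) * 2) (it 2 (xC p k pr) (j + 1) (fun _ => v))) :
    ∃ F : ZMod p → V, (∀ u ∈ U, xRep p pr ρ u F = F) ∧ ∑ c, F c = v := by
  have hx : IsZ (Representation.trivial k Γ k) U 2 (xC p k pr) :=
    ⟨(xC_isC p k pr).mono le_top, xC_cobd p k pr⟩
  have hc := IsZ.const hv
  have h1 : IsB ρ U (1 + 1) (act 2 (xC p k pr) (fun _ => v)) := by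
    refine isB_of_it_x p pr hac j (n := 1) (hx.act hc) ?_
    rw [it_act]
    rwa [Nat.succ_mul] at h
  obtain ⟨r, hr, hdr⟩ := h1.exists_eq
  obtain ⟨B, ι, π, P⟩ := xPairing p pr ρ (k := k) U
  obtain ⟨f, hf, hdf, hfb⟩ := P.lift_of_act (n := 0) (r := r) (fun j hj => by
    rw [xA, if_pos hj]; exact hac) hc.isC hc.cobd_eq (by simpa using hr) (by simpa using hdr)
  rw [xA_zero] at hf
  obtain ⟨F, hF, rfl⟩ := IsZ.eq_const ⟨hf, hdf⟩
  exact ⟨F, hF, hfb 1⟩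

end Functions

/-! ### A scalar class that vanishes over `U` -/

section Scalar
variable {k : Type*} [Field k] {Γ : Type*} [Group Γ]

/-- `Γ = R × U`, the homomorphism `pr` is trivial on `R` and identifies `U` with the group of order `p`,
and `L` is a `p`-subgroup which meets `U` trivially. -/
structure IsSplit (p : ℕ) (pr : Γ →* Multiplicative (ZMod p)) (R U L : Subgroup Γ) : Prop where
  comm : ∀ r ∈ R, ∀ u ∈ U, r * u = u * r
  prod : ∀ γ : Γ, ∃ r ∈ R, ∃ u ∈ U, r * u = γ
  pr_left : ∀ r ∈ R, pr r = 1
  pr_right : ∀ c, ∃! u : U, pr (u : Γ) = c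
  isPGroup : IsPGroup p L
  disj : ∀ u ∈ U, u ∈ L → u = 1

variable {p : ℕ} [Fact p.Prime] {pr : Γ →* Multiplicative (ZMod p)} {R U L : Subgroup Γ}

lemma IsSplit.normal (h : IsSplit p pr R U L) : U.Normal := by
  refine ⟨fun u hu g => ?_⟩
  obtain ⟨r, hr, v, hv, rfl⟩ := h.prod g
  have h1 := mul_mem (mul_mem hv hu) (inv_mem hv)
  have h2 := h.comm r hr _ h1
  have : r * v * u * (r * v)⁻¹ = v * u * v⁻¹ := by
    rw [mul_inv_rev, show r * v * u * (v⁻¹ * r⁻¹) = r * (v * u * v⁻¹) * r⁻¹ by group, h2]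
    group
  rw [this]; exact h1

lemma IsSplit.card (h : IsSplit p pr R U L) : Nat.card U = p := by
  have hb : Function.Bijective (fun u : U => pr (u : Γ)) := by
    refine ⟨fun u v huv => ?_, fun c => ?_⟩
    · exact (h.pr_right (pr (u : Γ))).unique rfl huv.symm
    · exact (h.pr_right c).exists
  rw [Nat.card_congr (Equiv.ofBijective _ hb)]
  exact Nat.card_zmod p

lemma it_eqv {m : ℕ} {e : (ℕ → Γ) → k} {ε : Γ → k}
    (he : ∀ γ g, e (fun j => γ * g j) = ε γ * e g) (j : ℕ) (γ : Γ) (g : ℕ → Γ) :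
    it m e j (fun _ => (1 : k)) (fun i => γ * g i) = ε γ ^ j * it m e j (fun _ => (1 : k)) g := by
  induction j generalizing g with
  | zero => simp [it]
  | succ j ih =>
    simp only [it, cup, LinearMap.lsmul_apply, smul_eq_mul] at ih ⊢
    rw [he, ih (fun i => g (m + i)), pow_succ]
    ring

/-- There is a power of `x` which is cohomologous over `L` to a class that vanishes over `U`: one
subtracts from the power of `x` a multiple of a power of the Euler class of a sphere on which `U` acts
freely and `L` has a fixed point. -/
lemma IsSplit.exists_scalar [Finite Γ] [CharP k p] (h : IsSplit p pr R U L) :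
    ∃ (r : ℕ) (a : (ℕ → Γ) → k), 0 < r ∧ IsZ (Representation.trivial k Γ k) ⊤ (r * 2) a ∧
      IsB (Representation.trivial k Γ k) U (r * 2) a ∧
      IsB (Representation.trivial k Γ k) L (r * 2)
        (it 2 (xC p k pr) r (fun _ => (1 : k)) - a) := by
  classical
  have hn := h.normal
  -- the vertices are the points of `Γ ⧸ L`, whose base point is fixed by `L`
  have : Fintype (Γ ⧸ L) := Fintype.ofFinite _
  have hfree : ∀ u ∈ U, ∀ t : Γ ⧸ L, u • t = t → u = 1 := by
    intro u hu t ht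
    obtain ⟨g, rfl⟩ := QuotientGroup.mk_surjective t
    have h1 : g⁻¹ * (u * g) ∈ L := by
      have h2 : ((u * g : Γ) : Γ ⧸ L) = (g : Γ ⧸ L) := ht
      exact QuotientGroup.eq.1 h2.symm
    have h2 : g⁻¹ * u * g⁻¹⁻¹ ∈ U := hn.conj_mem u hu g⁻¹
    rw [inv_inv, mul_assoc] at h2
    have h3 := h.disj _ h2 h1
    have : u = g * (g⁻¹ * (u * g)) * g⁻¹ := by group
    rw [this, h3]; group
  obtain ⟨m, e, ε, heC, heε, hε, hde, ⟨r', hr', hdr'⟩, honto⟩ := exists_euler (k := k) (p := p)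
    (T := Γ ⧸ L) U L h.card hfree h.isPGroup ((1 : Γ) : Γ ⧸ L) (fun l hl => by
      have : ((l * 1 : Γ) : Γ ⧸ L) = ((1 : Γ) : Γ ⧸ L) := by
        rw [QuotientGroup.eq]; simpa using hl
      exact this)
  have hcard : 0 < Nat.card Γ := Nat.card_pos
  -- the exponent `2 * N` makes the sign character `ε` trivial, so that the power of `e` is
  -- `Γ`-equivariant, and it makes the degree even
  set N := Nat.card Γ
  have hx : IsZ (Representation.trivial k Γ k) ⊤ 2 (xC p k pr) := ⟨xC_isC p k pr, xC_cobd p k pr⟩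
  have hone : IsZ (Representation.trivial k Γ k) ⊤ 0 (fun _ => (1 : k)) := IsZ.const (by simp)
  have he : IsZ (Representation.trivial k Γ k) U (m + 1) e := ⟨heC, hde⟩
  have heL : IsZ (Representation.trivial k Γ k) L (m + 1) e := ⟨hdr' ▸ hr'.cobd, hde⟩
  have hdeg : (N * 2) * (m + 1) = (N * (m + 1)) * 2 := by ring
  -- over `U` the power of `x` is a multiple of the power of `e`, as dividing by `e` repeatedly
  -- ends in a degree-zero cocycle, a scalar `μ`
  obtain ⟨μ, -, hμ⟩ := exists_it (ρ := Representation.trivial k Γ k) he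
    (fun n y hy => by
      obtain ⟨c, r, hc, hdc, hr, hcr⟩ := honto n y hy.isC hy.cobd_eq
      refine ⟨c, ⟨hc, hdc⟩, ?_⟩
      rw [← hcr, add_sub_cancel_left]
      exact IsB.mk hr) (N * 2) (it 2 (xC p k pr) (N * (m + 1)) (fun _ => (1 : k)))
    (by rw [hdeg]; exact (hx.it _ hone).mono le_top)
  have hE : IsZ (Representation.trivial k Γ k) ⊤ (N * (m + 1) * 2)
      (it (m + 1) e (N * 2) (fun _ => (1 : k))) := by
    have := he.it (N * 2) (hone.mono le_top)
    rw [hdeg, add_zero] at this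
    refine ⟨⟨this.isC.dep, fun γ _ g => ?_, fun _ => trivial⟩, this.cobd_eq⟩
    rw [it_eqv heε, pow_mul, hε, one_pow, one_mul]
    rfl
  have hμE : it (m + 1) e (N * 2) (fun _ => μ) = μ • it (m + 1) e (N * 2) (fun _ => (1 : k)) := by
    have := it_map (m := m + 1) (μ • LinearMap.id (R := k) (M := k)) e (N * 2) (fun _ : ℕ → Γ => (1 : k))
    simp only [LinearMap.smul_apply, LinearMap.id_apply, smul_eq_mul, mul_one] at this
    exact this
  have hEL : IsB (Representation.trivial k Γ k) L (N * (m + 1) * 2)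
      (it (m + 1) e (N * 2) (fun _ => μ)) := by
    obtain ⟨j, hj⟩ : ∃ j, N * 2 = j + 1 := ⟨N * 2 - 1, by omega⟩
    rw [← hdeg, hj, Nat.succ_mul, add_comm]
    exact IsB.act_right (by rw [← hdr']; exact IsB.mk hr')
      (heL.it j (n := 0) (IsZ.const (by simp)))
  rw [hdeg] at hμ
  refine ⟨N * (m + 1), _, by positivity, ?_, hμ, ?_⟩
  · refine (hx.it _ hone).sub ?_
    rw [hμE]
    exact ⟨hE.isC.smul μ, by rw [cobd_smul, add_zero, hE.cobd_eq, smul_zero]⟩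
  · rwa [sub_sub_cancel]

end Scalar

/-! ### Spliced exact sequences -/

section Splice
variable {k : Type*} [Field k] {Γ : Type*} [Group Γ]

/-- Short exact sequences `0 → V i → Q i → V (i + 1) → 0` of representations of `Γ`, such that `U` acts
trivially, the identity of `Q i` is a trace from `R`, and invariants of `R` lift from `V (i + 1)` to
`Q i` when `i ≥ N`. -/
structure Splice (R U : Subgroup Γ) [Fintype R] (V Q : ℕ → Type*) [∀ i, AddCommGroup (V i)]
    [∀ i, Module k (V i)] [∀ i, AddCommGroup (Q i)] [∀ i, Module k (Q i)]
    (ρV : ∀ i, Representation k Γ (V i)) (ρQ : ∀ i, Representation k Γ (Q i))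
    (ι : ∀ i, V i →ₗ[k] Q i) (q : ∀ i, Q i →ₗ[k] V (i + 1)) (N : ℕ) : Prop where
  inj : ∀ i, Function.Injective (ι i)
  surj : ∀ i, Function.Surjective (q i)
  comp : ∀ i v, q i (ι i v) = 0
  exact : ∀ i x, q i x = 0 → ∃ v, ι i v = x
  ι_eqv : ∀ i γ v, ι i (ρV i γ v) = ρQ i γ (ι i v)
  q_eqv : ∀ i γ x, q i (ρQ i γ x) = ρV (i + 1) γ (q i x)
  V_triv : ∀ i, ∀ u ∈ U, ∀ v, ρV i u v = v
  Q_triv : ∀ i, ∀ u ∈ U, ∀ x, ρQ i u x = x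
  trace : ∀ i, ∃ θ : Q i →ₗ[k] Q i, ∀ x, ∑ r : R, ρQ i (r : Γ) (θ (ρQ i (r : Γ)⁻¹ x)) = x
  lift_inv : ∀ i ≥ N, ∀ v, (∀ r ∈ R, ρV (i + 1) r v = v) →
    ∃ x, (∀ r ∈ R, ρQ i r x = x) ∧ q i x = v

variable {R U : Subgroup Γ} [Fintype R] {V Q : ℕ → Type*} [∀ i, AddCommGroup (V i)]
    [∀ i, Module k (V i)] [∀ i, AddCommGroup (Q i)] [∀ i, Module k (Q i)]
    {ρV : ∀ i, Representation k Γ (V i)} {ρQ : ∀ i, Representation k Γ (Q i)}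
    {ι : ∀ i, V i →ₗ[k] Q i} {q : ∀ i, Q i →ₗ[k] V (i + 1)} {N : ℕ}

/-- The connecting map kills coboundaries. -/
lemma Splice.connect (S : Splice R U V Q ρV ρQ ι q N) {W : Subgroup Γ} {i m : ℕ}
    {z : (ℕ → Γ) → Q i} {w : (ℕ → Γ) → V i} (hz : IsC (ρQ i) W m ⊤ z)
    (hq : IsB (ρV (i + 1)) W m (fun g => q i (z g))) (hw : cobd m z = fun g => ι i (w g)) :
    IsB (ρV i) W (m + 1) w := by
  have key : ∀ z : (ℕ → Γ) → Q i, IsC (ρQ i) W m ⊤ z → (∀ g, q i (z g) = 0) →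
      (cobd m z = fun g => ι i (w g)) → IsB (ρV i) W (m + 1) w := by
    intro z hz hq hw
    choose z' hz' using fun g => S.exact i _ (hq g)
    have hC : IsC (ρV i) W m ⊤ z' := by
      refine ⟨fun g g' hg => S.inj i ?_, fun u hu g => S.inj i ?_, fun _ => trivial⟩
      · rw [hz', hz', hz.dep g g' hg]
      · rw [S.ι_eqv, hz', hz', hz.eqv u hu]
    have : cobd m z' = w := by
      funext g
      apply S.inj i
      rw [← congrFun hw g, ← congrFun (cobd_map m z' (ι i)) g]
      congr 1
      funext g
      exact hz' g
    rw [← this]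
    exact IsB.mk hC
  rcases hq with h0 | ⟨j, y, rfl, hy, hdy⟩
  · exact key z hz (fun g => congrFun h0 g) hw
  · obtain ⟨y', hy', hqy⟩ := lift (A := ⊤) (fun _ _ _ _ => trivial) (q i)
      (fun u _ x => S.q_eqv i u x) hy (fun g => by
        obtain ⟨x, hx⟩ := S.surj i (y g); exact ⟨x, trivial, hx⟩)
    refine key (z - cobd j y') (hz.sub hy'.cobd) (fun g => ?_) ?_
    · have := congrFun (cobd_map j y' (q i)) g
      rw [hqy, congrFun hdy g] at this
      rw [Pi.sub_apply, map_sub, this, sub_self]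
    · rw [cobd_sub, cobd_cobd, sub_zero, hw]

/-- Far out in the sequence `V i` has no cohomology over `R`: invariants lift, so degree one vanishes,
and the other degrees follow by dimension shifting, since `Q i` is acyclic. -/
lemma Splice.acyc (S : Splice R U V Q ρV ρQ ι q N) {i : ℕ} (hi : N ≤ i) :
    Acyc (ρV i) R ⊤ := by
  intro n
  induction n generalizing i with
  | zero =>
    intro f hf hdf
    obtain ⟨θ, hθ⟩ := S.trace i
    obtain ⟨z, hz, hdz⟩ := acyc_of_trace (A := ⊤) (fun _ _ _ _ => trivial) θ (fun _ _ => trivial)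
      (fun x _ => hθ x) 0 _ (hf.map (ι i) (fun u _ x _ => S.ι_eqv i u x) (fun _ _ => trivial))
      (by rw [cobd_map, hdf]; funext g; simp)
    obtain ⟨v, hv, hzv⟩ := IsZ.eq_const (ρ := ρV (i + 1)) (U := R) (f := fun g => q i (z g))
      ⟨hz.map (q i) (fun u _ x _ => S.q_eqv i u x) (fun _ _ => trivial), by
        rw [cobd_map, hdz]; funext g; simp [S.comp]⟩
    obtain ⟨x, hx, rfl⟩ := S.lift_inv i hi v hv
    have hc := IsZ.const hx
    refine IsB.exists_eq (S.connect (z := z - fun _ => x) (hz.sub hc.isC) (Or.inl ?_) ?_)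
    · funext g
      rw [Pi.sub_apply, map_sub, congrFun hzv g, sub_self]; rfl
    · rw [cobd_sub, hdz, hc.cobd_eq, sub_zero]
  | succ n ih =>
    intro f hf hdf
    obtain ⟨θ, hθ⟩ := S.trace i
    obtain ⟨z, hz, hdz⟩ := acyc_of_trace (A := ⊤) (fun _ _ _ _ => trivial) θ (fun _ _ => trivial)
      (fun x _ => hθ x) _ _ (hf.map (ι i) (fun u _ x _ => S.ι_eqv i u x) (fun _ _ => trivial))
      (by rw [cobd_map, hdf]; funext g; simp)
    obtain ⟨y, hy, hdy⟩ := ih (i := i + 1) (by omega) (fun g => q i (z g))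
      (hz.map (q i) (fun u _ x _ => S.q_eqv i u x) (fun _ _ => trivial))
      (by rw [cobd_map, hdz]; funext g; simp [S.comp])
    exact IsB.exists_eq (S.connect hz (by rw [← hdy]; exact IsB.mk hy) hdz)

variable {p : ℕ} [Fact p.Prime] {pr : Γ →* Multiplicative (ZMod p)} {L : Subgroup Γ}

/-- If the scalar class `a` vanishes over `U`, then its action on `b` comes from the connecting map. -/
lemma Splice.exists_connect (S : Splice R U V Q ρV ρQ ι q N) (h : IsSplit p pr R U L) {s : ℕ}
    {a : (ℕ → Γ) → k} (ha : IsZ (Representation.trivial k Γ k) ⊤ (s + 1) a)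
    (haU : IsB (Representation.trivial k Γ k) U (s + 1) a) {i n : ℕ} {b : (ℕ → Γ) → V i}
    (hb : IsZ (ρV i) ⊤ n b) :
    ∃ z, IsC (ρQ i) ⊤ (s + n) ⊤ z ∧ cobd (s + n) z = fun g => ι i (act (s + 1) a b g) := by
  obtain ⟨v, hv, rfl⟩ := haU.exists_eq
  have hιb : IsZ (ρQ i) ⊤ n (fun g => ι i (b g)) := hb.map (ι i) (fun u _ x => S.ι_eqv i u x)
  have h1 := cobd_act' hv hιb.cobd_eq
  have h2 : act (s + 1) (cobd s v) (fun g => ι i (b g)) =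
      fun g => ι i (act (s + 1) (cobd s v) b g) := by
    funext g; simp [cup]
  obtain ⟨θ, hθ⟩ := S.trace i
  obtain ⟨z, hz, hz', hdz⟩ := transfer (ρ := ρQ i) (A := ⊤) R h.comm (fun _ _ _ _ => trivial) θ
    (fun _ _ => trivial) (fun u hu x => by rw [S.Q_triv i u hu, S.Q_triv i u hu])
    (fun x _ => hθ x) (n := s + n) (f := act (s + 1) (cobd s v) (fun g => ι i (b g)))
    (by
      have := (ha.act hιb).isC.mono (U' := R) le_top
      rwa [show s + 1 + n = s + n + 1 by ring] at this)
    (hv.act (hιb.isC.mono le_top)) h1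
  exact ⟨z, hz'.top_of_prod h.prod hz, hdz.trans h2⟩

/-- If the scalar class `a` vanishes over `U`, then `t + 1` powers of `a` kill every class `b` of
suitable parity with values in `V i`, once `i + t ≥ N`.  Each factor `a` moves the class from `V i` to
`V (i + 1)`; the class reached at the end comes from `Q`, so that its connecting image vanishes. -/
lemma Splice.isB_it [Finite Γ] (S : Splice R U V Q ρV ρQ ι q N) (h : IsSplit p pr R U L) {s : ℕ}
    (hs : Even (s + 1))
    {a : (ℕ → Γ) → k} (ha : IsZ (Representation.trivial k Γ k) ⊤ (s + 1) a)
    (haU : IsB (Representation.trivial k Γ k) U (s + 1) a) (t : ℕ) :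
    ∀ {i n : ℕ} {b : (ℕ → Γ) → V i}, N ≤ i + t → Even (n + (t + 1) * s) → IsZ (ρV i) ⊤ n b →
      IsB (ρV i) ⊤ ((t + 1) * (s + 1) + n) (it (s + 1) a (t + 1) b) := by
  induction t with
  | zero =>
    intro i n b hi hn hb
    obtain ⟨z, hz, hdz⟩ := S.exists_connect h ha haU hb
    have hqz : IsZ (ρV (i + 1)) ⊤ (s + n) (fun g => q i (z g)) :=
      ⟨hz.map (q i) (fun u _ x _ => S.q_eqv i u x) (fun _ _ => trivial), by
        rw [cobd_map, hdz]; funext g; simp [S.comp]⟩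
    obtain ⟨j, hj⟩ : ∃ j, s + n = j * 2 := by
      obtain ⟨j, hj⟩ := hn
      exact ⟨j, by omega⟩
    have : Fintype U := Fintype.ofFinite _
    have hac := acyc_x p pr (S.acyc (i := i + 1) (by omega)) h.comm h.prod h.pr_left h.pr_right
      (S.V_triv (i + 1))
    rw [hj] at hqz hz
    -- in even degree the class is `x ^ j` times an invariant `f`, and `f` lifts to `Q i`
    obtain ⟨f, hf, hB⟩ := exists_it_x p pr hac j hqz
    obtain ⟨F, hF, rfl⟩ := S.lift_inv i (by omega) f (fun r _ => hf r trivial)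
    have hF' : ∀ γ ∈ (⊤ : Subgroup Γ), ρQ i γ F = F := by
      intro γ _
      obtain ⟨r, hr, u, hu, rfl⟩ := h.prod γ
      rw [map_mul, Module.End.mul_apply, S.Q_triv i u hu, hF r hr]
    have hx : IsZ (Representation.trivial k Γ k) ⊤ 2 (xC p k pr) :=
      ⟨xC_isC p k pr, xC_cobd p k pr⟩
    have hxF := hx.it j (IsZ.const hF')
    rw [add_zero] at hxF
    rw [hj] at hdz
    have := S.connect (w := act (s + 1) a b) (hz.sub hxF.isC) (by
      convert hB using 1
      rw [it_map (q i) _ j (fun _ => F)]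
      funext g
      simp) (by rw [cobd_sub, hxF.cobd_eq, sub_zero, hdz])
    rwa [show (0 + 1) * (s + 1) + n = j * 2 + 1 by omega]
  | succ t ih =>
    intro i n b hi hn hb
    obtain ⟨z, hz, hdz⟩ := S.exists_connect h ha haU hb
    have hqz : IsZ (ρV (i + 1)) ⊤ (s + n) (fun g => q i (z g)) :=
      ⟨hz.map (q i) (fun u _ x _ => S.q_eqv i u x) (fun _ _ => trivial), by
        rw [cobd_map, hdz]; funext g; simp [S.comp]⟩
    have hB := ih (i := i + 1) (by omega) (by
      rwa [show s + n + (t + 1) * s = n + (t + 1 + 1) * s by ring]) hqz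
    rw [it_map (q i)] at hB
    have := S.connect (ha.isC.it (t + 1) hz) hB (by
      rw [cobd_it ha hs, hdz, it_map (ι i), it_act])
    rwa [show (t + 1 + 1) * (s + 1) + n = (t + 1) * (s + 1) + (s + n) + 1 by ring]

/-- An invariant of `V 0` is a trace from `L`, provided the identity of `V 0` is a trace from the
kernel of `pr` on `L`. -/
theorem Splice.exists_trace [Finite Γ] [CharP k p] [Fintype L] (S : Splice R U V Q ρV ρQ ι q N)
    (h : IsSplit p pr R U L) (v : V 0) (hv : ∀ γ, ρV 0 γ v = v) (Ψ : V 0 →ₗ[k] V 0)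
    (hΨ : ∀ c, ∀ x, (∑ l : L, if pr (l : Γ) = c then
      ρV 0 (l : Γ) (Ψ (ρV 0 (l : Γ)⁻¹ x)) else 0) = x) :
    ∃ φ, ∑ l : L, ρV 0 (l : Γ) φ = v := by
  obtain ⟨r, a, hr, ha, haU, haL⟩ := h.exists_scalar (k := k)
  have hc := IsZ.const (ρ := ρV 0) (U := ⊤) (v := v) (fun γ _ => hv γ)
  have hx : IsZ (Representation.trivial k Γ k) ⊤ 2 (xC p k pr) :=
    ⟨xC_isC p k pr, xC_cobd p k pr⟩
  have hxr := hx.it r (n := 0) (IsZ.const (ρ := Representation.trivial k Γ k) (v := 1) (by simp))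
  rw [add_zero] at hxr
  have h1 : IsB (ρV 0) ⊤ ((2 * N + 1 + 1) * (r * 2) + 0)
      (it (r * 2) a (2 * N + 1 + 1) (fun _ => v)) := by
    obtain ⟨s, hs⟩ : ∃ s, r * 2 = s + 1 := ⟨r * 2 - 1, by omega⟩
    rw [hs] at ha haU ⊢
    refine S.isB_it h ⟨r, by omega⟩ ha haU (2 * N + 1) (by omega) ?_ hc
    -- the number `2 * N + 2` of factors is even, as the parity condition requires
    exact ⟨(N + 1) * s, by ring⟩
  -- over `L` the class `a` may be replaced by `x ^ r`, so a power of `x` kills `v`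
  have h2 := it_sub (hxr.mono le_top) (ha.mono le_top) haL (hc.mono le_top) (2 * N + 1 + 1)
  have h3 := h2.add (h1.mono le_top)
  rw [sub_add_cancel, it_it] at h3
  obtain ⟨j, hj⟩ : ∃ j, (2 * N + 1 + 1) * r = j + 1 :=
    ⟨(2 * N + 1 + 1) * r - 1, by have : 0 < (2 * N + 1 + 1) * r := by positivity
                                 omega⟩
  rw [show (2 * N + 1 + 1) * (r * 2) + 0 = ((2 * N + 1 + 1) * r) * 2 by ring, hj] at h3
  obtain ⟨F, hF, rfl⟩ := exists_sum_of_it_x p pr (acyc_x_of_trace p pr Ψ hΨ) j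
    (fun l _ => hv l) h3
  -- `F` is the trace over `L` of its cut-off, and summation sends this cut-off to `Ψ (F 0)`
  refine ⟨Ψ (F 0), ?_⟩
  have h4 := congrArg (xψ p k (V 0)) (xCut_trace p pr Ψ hΨ F)
  rw [map_sum] at h4
  refine Eq.trans (Finset.sum_congr rfl fun l _ => ?_) h4
  rw [hF _ (inv_mem l.2), (xTower p pr (ρV 0)).ψ_eqv]
  congr 1
  simp [xψ, xCut]

end Splice

/-! ### Traces over the group algebra -/

section GroupAlgebra
variable {k : Type*} [Field k] {G : Type*} [Group G]

/-- The representation of `G` on a module over the group algebra. -/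
abbrev rep (k G : Type*) [Field k] [Group G] (X : Type*) [AddCommGroup X] [Module k X]
    [Module (MonoidAlgebra k G) X] [IsScalarTower k (MonoidAlgebra k G) X] :
    Representation k G X := Representation.ofModule' X

variable {X : Type*} [AddCommGroup X] [Module k X]
    [Module (MonoidAlgebra k G) X] [IsScalarTower k (MonoidAlgebra k G) X]
variable {N : Type*} [AddCommGroup N] [Module k N]
    [Module (MonoidAlgebra k G) N] [IsScalarTower k (MonoidAlgebra k G) N]

lemma rep_apply (g : G) (x : X) : rep k G X g x = MonoidAlgebra.single g (1 : k) • x := by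
  simp [rep, Representation.ofModule', MonoidAlgebra.lift_symm_apply]

lemma rep_map (f : X →ₗ[MonoidAlgebra k G] N) (g : G) (x : X) :
    f (rep k G X g x) = rep k G N g (f x) := by
  rw [rep_apply, rep_apply, map_smul]

/-- The identity of `X` is a trace from `H`: the sum of the conjugates of some linear endomorphism `θ`
by the elements of `H`. -/
def IsTr (ρ : Representation k G X) (H : Subgroup G) : Prop :=
  ∃ θ : X →ₗ[k] X, ∀ x, ∑ᶠ h : H, ρ (h : G) (θ (ρ (h : G)⁻¹ x)) = x

/-- The identity of a projective module is a trace from the trivial subgroup. -/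
lemma exists_trace_of_projective [Fintype G] [Module.Projective (MonoidAlgebra k G) X] :
    ∃ θ : X →ₗ[k] X, ∀ x, ∑ g : G, rep k G X g (θ (rep k G X g⁻¹ x)) = x := by
  classical
  obtain ⟨s, hs⟩ := (Module.projective_def' (P := X) (R := MonoidAlgebra k G)).1 inferInstance
  -- the coefficient of `1` on the group algebra, as an endomorphism
  let e : MonoidAlgebra k G →ₗ[k] MonoidAlgebra k G :=
    { toFun := fun a => MonoidAlgebra.single 1 (a.coeff 1)
      map_add' := fun a b => by simp
      map_smul' := fun c a => by simp }
  have he : ∀ a : MonoidAlgebra k G, ∑ g : G, MonoidAlgebra.single g (1 : k) *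
      e (MonoidAlgebra.single g⁻¹ (1 : k) * a) = a := by
    intro a
    ext g
    have h1 : ∀ h : G, MonoidAlgebra.single h (1 : k) * e (MonoidAlgebra.single h⁻¹ (1 : k) * a) =
        MonoidAlgebra.single h (a.coeff h) := by
      intro h
      change _ * MonoidAlgebra.single 1 ((MonoidAlgebra.single h⁻¹ (1 : k) * a).coeff 1) = _
      rw [MonoidAlgebra.single_mul_single, MonoidAlgebra.coeff_single_mul_eq_mul_coeff h]
      · simp
      · intro g _; rw [inv_mul_eq_one, eq_comm]
    simp only [h1, MonoidAlgebra.coeff_sum, Finsupp.finsetSum_apply, MonoidAlgebra.coeff_single,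
      Finsupp.single_apply, Finset.sum_ite_eq', Finset.mem_univ, if_true]
  let F : (X →₀ MonoidAlgebra k G) →ₗ[k] (X →₀ MonoidAlgebra k G) := Finsupp.mapRange.linearMap e
  have hF : ∀ a : X →₀ MonoidAlgebra k G, ∑ g : G, MonoidAlgebra.single g (1 : k) •
      F (MonoidAlgebra.single g⁻¹ (1 : k) • a) = a := by
    intro a
    ext1 x
    rw [Finsupp.finsetSum_apply]
    conv_rhs => rw [← he (a x)]
    rfl
  refine ⟨(Finsupp.linearCombination (MonoidAlgebra k G) id).restrictScalars k ∘ₗ F ∘ₗ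
    s.restrictScalars k, fun x => ?_⟩
  simp only [rep_apply, LinearMap.comp_apply, LinearMap.restrictScalars_apply, map_smul]
  have h1 : ∀ g : G, s (MonoidAlgebra.single g (1 : k) • x) = MonoidAlgebra.single g (1 : k) • s x :=
    fun g => map_smul s _ _
  have h2 : ∀ (g : G) y, MonoidAlgebra.single g (1 : k) •
      Finsupp.linearCombination (MonoidAlgebra k G) (id : X → X) y =
      Finsupp.linearCombination (MonoidAlgebra k G) id (MonoidAlgebra.single g (1 : k) • y) :=
    fun g y => (map_smul _ _ _).symm
  simp only [h2, ← map_sum]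
  rw [hF]
  exact LinearMap.congr_fun hs x

end GroupAlgebra

/-! ### Syzygies -/

section Step
variable {k : Type*} [Field k] {G : Type*} [Group G]

/-- Short exact sequences `0 → W (i + 1) → X i → W i → 0` of `kG`-modules with `X i` projective, such
that maps `W (i + 1) → N` extend to `X i` when `i ≥ n`. -/
structure Syz (k G : Type*) [Field k] [Group G] (X W : ℕ → Type*) [∀ i, AddCommGroup (X i)]
    [∀ i, Module (MonoidAlgebra k G) (X i)] [∀ i, AddCommGroup (W i)]
    [∀ i, Module (MonoidAlgebra k G) (W i)]
    (N : Type*) [AddCommGroup N] [Module (MonoidAlgebra k G) N]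
    (d : ∀ i, X i →ₗ[MonoidAlgebra k G] W i) (j : ∀ i, W (i + 1) →ₗ[MonoidAlgebra k G] X i)
    (n : ℕ) : Prop where
  proj : ∀ i, Module.Projective (MonoidAlgebra k G) (X i)
  surj : ∀ i, Function.Surjective (d i)
  inj : ∀ i, Function.Injective (j i)
  comp : ∀ i w, d i (j i w) = 0
  exact : ∀ i x, d i x = 0 → ∃ w, j i w = x
  extend : ∀ i ≥ n, ∀ f : W (i + 1) →ₗ[MonoidAlgebra k G] N,
    ∃ g : X i →ₗ[MonoidAlgebra k G] N, g ∘ₗ j i = f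

variable {X W : ℕ → Type*} [∀ i, AddCommGroup (X i)] [∀ i, Module k (X i)]
    [∀ i, Module (MonoidAlgebra k G) (X i)] [∀ i, IsScalarTower k (MonoidAlgebra k G) (X i)]
    [∀ i, AddCommGroup (W i)] [∀ i, Module k (W i)]
    [∀ i, Module (MonoidAlgebra k G) (W i)] [∀ i, IsScalarTower k (MonoidAlgebra k G) (W i)]
    {N : Type*} [AddCommGroup N] [Module k N] [Module (MonoidAlgebra k G) N]
    [IsScalarTower k (MonoidAlgebra k G) N]
    {d : ∀ i, X i →ₗ[MonoidAlgebra k G] W i} {j : ∀ i, W (i + 1) →ₗ[MonoidAlgebra k G] X i}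
    {n : ℕ}

/-- The representation of `G × C` on `Hom(Y, N)`, by conjugation and through the first factor. -/
abbrev homRep (C Y N : Type*) [Group C] [AddCommGroup Y] [Module k Y]
    [Module (MonoidAlgebra k G) Y] [IsScalarTower k (MonoidAlgebra k G) Y]
    [AddCommGroup N] [Module k N]
    [Module (MonoidAlgebra k G) N] [IsScalarTower k (MonoidAlgebra k G) N] :
    Representation k (G × C) (Y →ₗ[k] N) :=
  (Representation.linHom (rep k G Y) (rep k G N)).comp (MonoidHom.fst G C)

lemma homRep_apply {C Y : Type*} [Group C] [AddCommGroup Y] [Module k Y]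
    [Module (MonoidAlgebra k G) Y] [IsScalarTower k (MonoidAlgebra k G) Y] (γ : G × C)
    (f : Y →ₗ[k] N) (y : Y) :
    homRep C Y N γ f y = rep k G N γ.1 (f (rep k G Y γ.1⁻¹ y)) := rfl

/-- Applying `Hom(-, N)` gives short exact sequences of representations of `G × C`.  Invariants of `G`
are `kG`-linear maps, and they lift by the extension property. -/
lemma Syz.splice [Finite G] (S : Syz k G X W N d j n) (C : Type*) [Group C]
    [Fintype (MonoidHom.snd G C).ker] :
    Splice (k := k) (MonoidHom.snd G C).ker (MonoidHom.fst G C).ker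
      (fun i => W i →ₗ[k] N) (fun i => X i →ₗ[k] N)
      (fun i => homRep C (W i) N) (fun i => homRep C (X i) N)
      (fun i => LinearMap.lcomp k N ((d i).restrictScalars k))
      (fun i => LinearMap.lcomp k N ((j i).restrictScalars k)) n where
  inj i f g hfg := by
    ext w
    obtain ⟨x, rfl⟩ := S.surj i w
    exact LinearMap.congr_fun hfg x
  surj i f := by
    obtain ⟨s, hs⟩ := LinearMap.exists_leftInverse_of_injective ((j i).restrictScalars k)
      (LinearMap.ker_eq_bot.2 (S.inj i))
    refine ⟨f ∘ₗ s, ?_⟩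
    ext w
    exact congrArg f (LinearMap.congr_fun hs w)
  comp i f := by
    ext w
    simp [LinearMap.lcomp_apply, S.comp]
  exact i f hf := by
    obtain ⟨s, hs⟩ := LinearMap.exists_rightInverse_of_surjective ((d i).restrictScalars k)
      (LinearMap.range_eq_top.2 (S.surj i))
    refine ⟨f ∘ₗ s, ?_⟩
    ext x
    have h1 : d i (s (d i x) - x) = 0 := by
      rw [map_sub, sub_eq_zero]
      exact LinearMap.congr_fun hs (d i x)
    obtain ⟨w, hw⟩ := S.exact i _ h1
    have h2 : f (j i w) = 0 := LinearMap.congr_fun hf w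
    rw [hw, map_sub, sub_eq_zero] at h2
    exact h2
  ι_eqv i γ f := by
    ext x
    simp only [LinearMap.lcomp_apply, homRep_apply, LinearMap.restrictScalars_apply]
    rw [← rep_map]
  q_eqv i γ f := by
    ext x
    simp only [LinearMap.lcomp_apply, homRep_apply, LinearMap.restrictScalars_apply]
    rw [← rep_map]
  V_triv i u hu f := by
    have h : u.1 = 1 := hu
    ext x
    rw [homRep_apply, h, inv_one, map_one, map_one]; rfl
  Q_triv i u hu f := by
    have h : u.1 = 1 := hu
    ext x
    rw [homRep_apply, h, inv_one, map_one, map_one]; rfl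
  trace i := by
    have := S.proj i
    have : Fintype G := Fintype.ofFinite G
    obtain ⟨θ, hθ⟩ := exists_trace_of_projective (k := k) (G := G) (X := X i)
    refine ⟨LinearMap.lcomp k N θ, fun f => ?_⟩
    ext x
    rw [LinearMap.sum_apply]
    simp only [homRep_apply, LinearMap.lcomp_apply, Prod.fst_inv, inv_inv]
    have h1 : ∀ (g : G) y, rep k G N g (rep k G N g⁻¹ y) = y := by
      intro g y
      rw [← Module.End.mul_apply, ← map_mul, mul_inv_cancel, map_one]; rfl
    simp only [h1]
    conv_rhs => rw [← hθ x, map_sum]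
    refine Fintype.sum_bijective (fun r : (MonoidHom.snd G C).ker => (r : G × C).1) ⟨?_, ?_⟩ _ _ ?_
    · rintro ⟨⟨g, c⟩, hc⟩ ⟨⟨g', c'⟩, hc'⟩ h
      obtain rfl : c = 1 := hc
      obtain rfl : c' = 1 := hc'
      obtain rfl : g = g' := h
      rfl
    · intro g
      exact ⟨⟨(g, 1), rfl⟩, rfl⟩
    · intro r
      rfl
  lift_inv i hi f hf := by
    let f' : W (i + 1) →ₗ[MonoidAlgebra k G] N := MonoidAlgebra.equivariantOfLinearOfComm f
      (fun g w => by
        have h := LinearMap.congr_fun (hf (g, 1) rfl) (rep k G _ g w)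
        rw [homRep_apply, ← Module.End.mul_apply, ← map_mul, inv_mul_cancel, map_one] at h
        rw [← rep_apply, ← rep_apply]
        exact h.symm)
    obtain ⟨g, hg⟩ := S.extend i hi f'
    refine ⟨g.restrictScalars k, fun r hr => ?_, ?_⟩
    · ext x
      rw [homRep_apply, LinearMap.restrictScalars_apply, LinearMap.restrictScalars_apply,
        ← rep_map, ← Module.End.mul_apply, ← map_mul, mul_inv_cancel, map_one]
      rfl
    · ext w
      exact LinearMap.congr_fun hg w

end Step

/-! ### Induction over `p`-subgroups -/

section Induct
variable {k : Type*} [Field k] {G : Type*} [Group G]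
variable {X W : ℕ → Type*} [∀ i, AddCommGroup (X i)] [∀ i, Module k (X i)]
    [∀ i, Module (MonoidAlgebra k G) (X i)] [∀ i, IsScalarTower k (MonoidAlgebra k G) (X i)]
    [∀ i, AddCommGroup (W i)] [∀ i, Module k (W i)]
    [∀ i, Module (MonoidAlgebra k G) (W i)] [∀ i, IsScalarTower k (MonoidAlgebra k G) (W i)]
    {N : Type*} [AddCommGroup N] [Module k N] [Module (MonoidAlgebra k G) N]
    [IsScalarTower k (MonoidAlgebra k G) N]
    {d : ∀ i, X i →ₗ[MonoidAlgebra k G] W i} {j : ∀ i, W (i + 1) →ₗ[MonoidAlgebra k G] X i}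
    {n : ℕ} {p : ℕ} [Fact p.Prime]

/-- The fibres of `χ` are cosets of its kernel, so a trace from the kernel may be taken over any of
them. -/
lemma IsTr.sum_fiber [Finite G] {H : Subgroup G} [Fintype H] (χ : H →* Multiplicative (ZMod p))
    (hχ : Function.Surjective χ) {ρ : Representation k G N} {θ : N →ₗ[k] N}
    (hθ : ∀ x, ∑ᶠ h : χ.ker.map H.subtype, ρ (h : G) (θ (ρ (h : G)⁻¹ x)) = x)
    (c : Multiplicative (ZMod p)) (x : N) :
    (∑ h : H, if χ h = c then ρ (h : G) (θ (ρ (h : G)⁻¹ x)) else 0) = x := by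
  classical
  have : Fintype (χ.ker.map H.subtype) := Fintype.ofFinite _
  have h1 : ∀ y, (∑ h : H, if χ h = 1 then ρ (h : G) (θ (ρ (h : G)⁻¹ y)) else 0) = y := by
    intro y
    conv_rhs => rw [← hθ y, finsum_eq_sum_of_fintype]
    rw [← Finset.sum_filter]
    refine Finset.sum_bij (fun h hh => ⟨(h : G), h, (Finset.mem_filter.1 hh).2, rfl⟩) ?_ ?_ ?_ ?_
    · intro h hh; exact Finset.mem_univ _
    · intro h hh h' hh' he
      exact Subtype.ext (Subtype.mk.inj he)
    · rintro ⟨g, h, hh, rfl⟩ _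
      exact ⟨h, Finset.mem_filter.2 ⟨Finset.mem_univ _, hh⟩, rfl⟩
    · intro h hh; rfl
  obtain ⟨h0, rfl⟩ := hχ c
  have h2 := congrArg (ρ (h0 : G)) (h1 (ρ (h0 : G)⁻¹ x))
  rw [← Module.End.mul_apply, ← map_mul, mul_inv_cancel, map_one, Module.End.one_apply, map_sum]
    at h2
  rw [← Equiv.sum_comp (Equiv.mulLeft h0)]
  refine Eq.trans (Finset.sum_congr rfl fun h _ => ?_) h2
  rw [Equiv.coe_mulLeft, map_mul]
  by_cases hh : χ h = 1
  · rw [if_pos hh, if_pos (by rw [hh, mul_one]), Subgroup.coe_mul, map_mul, mul_inv_rev, map_mul]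
    rfl
  · rw [if_neg hh, if_neg, map_zero]
    intro he
    exact hh (mul_eq_left.1 he)

/-- The step from the kernel of a character to a `p`-subgroup `H`: the group `H` embeds into the
product of `G` with the cyclic group of order `p` as a complement of the second factor. -/
lemma Syz.isTr_step [Finite G] [CharP k p] (S : Syz k G X W N d j n)
    (e : W 0 ≃ₗ[MonoidAlgebra k G] N) {H : Subgroup G} (hH : IsPGroup p H)
    (χ : H →* Multiplicative (ZMod p)) (hχ : Function.Surjective χ)
    (hK : IsTr (rep k G N) (χ.ker.map H.subtype)) : IsTr (rep k G N) H := by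
  classical
  let C := Multiplicative (ZMod p)
  have : Finite C := inferInstanceAs (Finite (ZMod p))
  have : Fintype H := Fintype.ofFinite _
  have : Fintype (MonoidHom.snd G C).ker := Fintype.ofFinite _
  let emb : H →* G × C := H.subtype.prod χ
  have hinj : Function.Injective emb := fun a b hab => Subtype.ext (congrArg Prod.fst hab)
  have : Fintype emb.range := Fintype.ofFinite _
  have hbij : Function.Bijective (fun h : H => (⟨emb h, h, rfl⟩ : emb.range)) :=
    ⟨fun a b hab => hinj (congrArg Subtype.val hab), fun ⟨_, h, hh⟩ => ⟨h, Subtype.ext hh⟩⟩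
  have hs : IsSplit p (MonoidHom.snd G C) (MonoidHom.snd G C).ker (MonoidHom.fst G C).ker
      emb.range := by
    refine ⟨?_, ?_, fun r hr => hr, ?_, ?_, ?_⟩
    · rintro ⟨r, c⟩ hc ⟨r', c'⟩ hr'
      obtain rfl : c = 1 := hc
      obtain rfl : r' = 1 := hr'
      simp
    · rintro ⟨g, c⟩
      exact ⟨(g, 1), rfl, (1, c), rfl, by simp⟩
    · intro c
      refine ⟨⟨(1, c), rfl⟩, rfl, ?_⟩
      rintro ⟨⟨g, c'⟩, hg⟩ hc
      obtain rfl : g = 1 := hg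
      obtain rfl : c' = c := hc
      rfl
    · exact hH.of_surjective emb.rangeRestrict emb.rangeRestrict_surjective
    · rintro ⟨g, c⟩ hg ⟨h, hh⟩
      obtain rfl : g = 1 := hg
      have h1 : h = 1 := Subtype.ext (congrArg Prod.fst hh)
      rw [← hh, h1, map_one]
  obtain ⟨θ, hθ⟩ := hK
  have hcancel : ∀ {Y : Type _} [AddCommGroup Y] [Module k Y] (ρ : Representation k G Y) (g : G) y,
      ρ g (ρ g⁻¹ y) = y := by
    intro Y _ _ ρ g y
    rw [← Module.End.mul_apply, ← map_mul, mul_inv_cancel, map_one]; rfl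
  have hS := S.splice C
  obtain ⟨φ, hφ⟩ := hS.exists_trace hs ((e : W 0 →ₗ[MonoidAlgebra k G] N).restrictScalars k)
    (fun γ => by
      ext w
      rw [homRep_apply, LinearMap.restrictScalars_apply, LinearMap.restrictScalars_apply, ← rep_map,
        hcancel])
    (LinearMap.llcomp k _ _ _ θ) (fun c f => by
      ext w
      conv_rhs => rw [← IsTr.sum_fiber χ hχ hθ c (f w)]
      rw [LinearMap.sum_apply]
      refine (Fintype.sum_bijective _ hbij _ _ fun h => ?_).symm
      change _ = (if χ h = c then _ else 0 : W 0 →ₗ[k] N) w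
      split_ifs with hc
      · rw [homRep_apply, LinearMap.llcomp_apply, homRep_apply]
        change _ = rep k G N (h : G) (θ (rep k G N (h : G)⁻¹ (f (rep k G (W 0) (h : G)⁻¹⁻¹ _))))
        rw [← Module.End.mul_apply (rep k G (W 0) _), ← map_mul, inv_inv]
        change _ = rep k G N (h : G) (θ (rep k G N (h : G)⁻¹ (f (rep k G (W 0) (h * (h : G)⁻¹) w))))
        rw [mul_inv_cancel, map_one]; rfl
      · rfl)
  refine ⟨φ ∘ₗ (e.symm : N →ₗ[MonoidAlgebra k G] W 0).restrictScalars k, fun x => ?_⟩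
  have h1 := LinearMap.congr_fun hφ (e.symm x)
  rw [LinearMap.sum_apply] at h1
  rw [finsum_eq_sum_of_fintype]
  refine Eq.trans (Fintype.sum_bijective _ hbij _ _ fun h => ?_)
    (h1.trans (LinearEquiv.apply_symm_apply e x))
  rw [homRep_apply, LinearMap.comp_apply, LinearMap.restrictScalars_apply, rep_map]
  rfl

/-- A nontrivial `p`-group has a normal subgroup of index `p`. -/
lemma exists_character {H : Type*} [Group H] [Finite H] [Nontrivial H] (hH : IsPGroup p H) :
    ∃ χ : H →* Multiplicative (ZMod p), Function.Surjective χ := by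
  have hp : p.Prime := Fact.out
  obtain ⟨m, hm⟩ := IsPGroup.iff_card.1 hH
  have hm0 : m ≠ 0 := by
    rintro rfl
    have := Finite.one_lt_card (α := H)
    rw [hm] at this
    simp at this
  obtain ⟨m, rfl⟩ := Nat.exists_eq_succ_of_ne_zero hm0
  obtain ⟨K, hK⟩ := Sylow.exists_subgroup_card_pow_prime (G := H) p (n := m)
    (by rw [hm]; exact pow_dvd_pow p (Nat.le_succ m))
  have hidx : K.index = p := by
    have := K.card_mul_index
    rw [hK, hm, pow_succ] at this
    exact Nat.eq_of_mul_eq_mul_left (pow_pos hp.pos m) this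
  have : K.Normal := by
    apply Subgroup.normal_of_index_eq_minFac_card
    rw [hidx, hm, hp.pow_minFac (Nat.succ_ne_zero m)]
  have hcard : Nat.card (H ⧸ K) = p := hidx
  let e : H ⧸ K ≃* Multiplicative (ZMod p) := mulEquivOfPrimeCardEq (p := p) hcard (Nat.card_zmod p)
  exact ⟨e.toMonoidHom.comp (QuotientGroup.mk' K),
    e.surjective.comp (QuotientGroup.mk'_surjective K)⟩

lemma isTr_bot (ρ : Representation k G N) : IsTr ρ ⊥ := by
  refine ⟨LinearMap.id, fun x => ?_⟩
  rw [finsum_eq_sum_of_fintype, Fintype.sum_unique]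
  have : ((default : (⊥ : Subgroup G)) : G) = 1 := rfl
  rw [this]
  simp

/-- Induction on the order of the `p`-subgroup, passing to the kernel of a character. -/
lemma Syz.isTr [Finite G] [CharP k p] (S : Syz k G X W N d j n)
    (e : W 0 ≃ₗ[MonoidAlgebra k G] N) (H : Subgroup G) (hH : IsPGroup p H) :
    IsTr (rep k G N) H := by
  induction hc : Nat.card H using Nat.strong_induction_on generalizing H with
  | _ c ih =>
    rcases H.bot_or_nontrivial with rfl | hn
    · exact isTr_bot _
    · obtain ⟨χ, hχ⟩ := exists_character hH
      have hp : p.Prime := Fact.out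
      refine S.isTr_step e hH χ hχ (ih _ ?_ _ ?_ rfl)
      · rw [Subgroup.card_map_of_injective H.subtype_injective, ← hc]
        refine lt_of_le_of_ne (Subgroup.card_le_card_group _) fun h => ?_
        have h1 : χ.ker = ⊤ := Subgroup.eq_top_of_card_eq _ h
        obtain ⟨x, hx⟩ := hχ (Multiplicative.ofAdd 1)
        have h2 : χ x = 1 := by
          rw [← MonoidHom.mem_ker, h1]; trivial
        rw [hx] at h2
        have : (1 : ZMod p) = 0 := h2
        exact one_ne_zero this
      · exact hH.to_le (Subgroup.map_subtype_le _)

end Induct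

/-! ### Higman's criterion -/

section Retract
variable {k : Type*} [Field k] {G : Type*} [Group G]
variable {X : Type*} [AddCommGroup X] [Module k X]
    [Module (MonoidAlgebra k G) X] [IsScalarTower k (MonoidAlgebra k G) X]
    {N : Type*} [AddCommGroup N] [Module k N] [Module (MonoidAlgebra k G) N]
    [IsScalarTower k (MonoidAlgebra k G) N]

/-- A trace from a subgroup of invertible index is a trace from the trivial subgroup. -/
lemma IsTr.exists_sum [Fintype G] {ρ : Representation k G N} {H : Subgroup G} (h : IsTr ρ H)
    (hi : (H.index : k) ≠ 0) : ∃ θ : N →ₗ[k] N, ∀ x, ∑ g : G, ρ g (θ (ρ g⁻¹ x)) = x := by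
  classical
  obtain ⟨θ, hθ⟩ := h
  have : Fintype H := Fintype.ofFinite _
  have : Fintype (G ⧸ H) := Fintype.ofFinite _
  refine ⟨(H.index : k)⁻¹ • θ, fun x => ?_⟩
  have h1 : ∑ g : G, ρ g (θ (ρ g⁻¹ x)) = (H.index : k) • x := by
    have hbij : Function.Bijective (fun c : (G ⧸ H) × H => c.1.out * (c.2 : G)) := by
      constructor
      · rintro ⟨q, h⟩ ⟨q', h'⟩ hc
        have hc : q.out * (h : G) = q'.out * (h' : G) := hc
        have hq : q = q' := by
          have := congrArg (QuotientGroup.mk : G → G ⧸ H) hc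
          rwa [QuotientGroup.mk_mul_of_mem _ h.2, QuotientGroup.mk_mul_of_mem _ h'.2,
            QuotientGroup.out_eq', QuotientGroup.out_eq'] at this
        subst hq
        rw [Subtype.ext (mul_left_cancel hc)]
      · intro g
        refine ⟨((g : G ⧸ H), ⟨(g : G ⧸ H).out⁻¹ * g, ?_⟩), mul_inv_cancel_left _ _⟩
        rw [← QuotientGroup.eq, QuotientGroup.out_eq']
    rw [← Fintype.sum_bijective _ hbij _ _ fun _ => rfl, Fintype.sum_prod_type]
    have h2 : ∀ q : G ⧸ H, ∑ h : H, ρ (q.out * (h : G)) (θ (ρ (q.out * (h : G))⁻¹ x)) = x := by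
      intro q
      have h3 := congrArg (ρ q.out) (hθ (ρ q.out⁻¹ x))
      rw [finsum_eq_sum_of_fintype, map_sum, ← Module.End.mul_apply, ← map_mul, mul_inv_cancel,
        map_one, Module.End.one_apply] at h3
      refine Eq.trans (Finset.sum_congr rfl fun h _ => ?_) h3
      rw [map_mul, mul_inv_rev, map_mul]
      rfl
    rw [Finset.sum_congr rfl fun q _ => h2 q, Finset.sum_const, Finset.card_univ,
      ← Nat.card_eq_fintype_card, ← Nat.cast_smul_eq_nsmul k]
    rfl
  simp only [LinearMap.smul_apply, map_smul]
  rw [← Finset.smul_sum, h1, smul_smul, inv_mul_cancel₀ hi, one_smul]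

/-- Higman's criterion: averaging a linear section of `f` gives an equivariant one. -/
lemma IsTr.projective [Finite G] {H : Subgroup G} (h : IsTr (rep k G N) H)
    (hi : (H.index : k) ≠ 0) [Module.Projective (MonoidAlgebra k G) X]
    (f : X →ₗ[MonoidAlgebra k G] N) (hf : Function.Surjective f) :
    Module.Projective (MonoidAlgebra k G) N := by
  have : Fintype G := Fintype.ofFinite G
  obtain ⟨θ, hθ⟩ := h.exists_sum hi
  obtain ⟨s, hs⟩ := LinearMap.exists_rightInverse_of_surjective (f.restrictScalars k)
    (LinearMap.range_eq_top.2 hf)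
  let σ : N →ₗ[k] X := ∑ g : G, rep k G X g ∘ₗ s ∘ₗ θ ∘ₗ rep k G N g⁻¹
  have hσ : ∀ x, σ x = ∑ g : G, rep k G X g (s (θ (rep k G N g⁻¹ x))) := fun x => by
    simp only [σ, LinearMap.sum_apply, LinearMap.comp_apply]
  let σ' : N →ₗ[MonoidAlgebra k G] X := MonoidAlgebra.equivariantOfLinearOfComm σ (fun g x => by
    rw [← rep_apply, ← rep_apply, hσ, hσ, map_sum, ← Equiv.sum_comp (Equiv.mulLeft g)]
    refine Finset.sum_congr rfl fun h _ => ?_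
    rw [Equiv.coe_mulLeft, ← Module.End.mul_apply (rep k G N _), ← map_mul, mul_inv_rev,
      inv_mul_cancel_right, map_mul]
    rfl)
  refine Module.Projective.of_split σ' f (LinearMap.ext fun x => ?_)
  change f (σ x) = x
  rw [hσ, map_sum]
  conv_rhs => rw [← hθ x]
  refine Finset.sum_congr rfl fun g _ => ?_
  rw [rep_map]
  exact congrArg _ (LinearMap.congr_fun hs _)

/-- Higman's criterion applies to a Sylow subgroup, or to the trivial subgroup in characteristic
zero. -/
theorem Syz.projective {X W : ℕ → Type*} [∀ i, AddCommGroup (X i)] [∀ i, Module k (X i)]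
    [∀ i, Module (MonoidAlgebra k G) (X i)] [∀ i, IsScalarTower k (MonoidAlgebra k G) (X i)]
    [∀ i, AddCommGroup (W i)] [∀ i, Module k (W i)]
    [∀ i, Module (MonoidAlgebra k G) (W i)] [∀ i, IsScalarTower k (MonoidAlgebra k G) (W i)]
    {d : ∀ i, X i →ₗ[MonoidAlgebra k G] W i} {j : ∀ i, W (i + 1) →ₗ[MonoidAlgebra k G] X i}
    {n : ℕ} [Finite G] (S : Syz k G X W N d j n) (e : W 0 ≃ₗ[MonoidAlgebra k G] N) :
    Module.Projective (MonoidAlgebra k G) N := by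
  have := S.proj 0
  have hf : Function.Surjective ((e : W 0 →ₗ[MonoidAlgebra k G] N) ∘ₗ d 0) :=
    e.surjective.comp (S.surj 0)
  obtain ⟨p, hp⟩ := CharP.exists k
  rcases CharP.char_is_prime_or_zero k p with hpp | rfl
  · have : Fact p.Prime := ⟨hpp⟩
    let P : Sylow p G := default
    refine (S.isTr (p := p) e P P.isPGroup').projective ?_ _ hf
    rw [Ne, CharP.cast_eq_zero_iff k p]
    exact P.not_dvd_index
  · have := CharP.charP_to_charZero k
    exact (isTr_bot (rep k G N)).projective (Nat.cast_ne_zero.2 Subgroup.index_ne_zero_of_finite)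
      _ hf

end Retract

/-! ### Ext groups -/

section ExtGroups
variable {k : Type} [Field k] {G : Type} [Group G]

attribute [local instance] ModuleCat.moduleOfAlgebraModule
  ModuleCat.isScalarTower_of_algebra_moduleCat

/-- If `Ext^(i+1)(M, M)` vanishes, then cocycles of degree `i + 1` extend to `P i`. -/
lemma exists_extension {M : ModuleCat.{0} (MonoidAlgebra k G)} (P : ProjectiveResolution M) {i : ℕ}
    (h : Subsingleton (((Ext k (ModuleCat (MonoidAlgebra k G)) (i + 1)).obj (op M)).obj M))
    (z : P.complex.X (i + 1) ⟶ M) (hz : P.complex.d (i + 2) (i + 1) ≫ z = 0) :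
    ∃ g : P.complex.X i ⟶ M, P.complex.d (i + 1) i ≫ g = z := by
  have h1 := (ModuleCat.isZero_of_subsingleton _).of_iso (P.isoExt (R := k) (i + 1) M).symm
  rw [← HomologicalComplex.exactAt_iff_isZero_homology,
    HomologicalComplex.exactAt_iff' _ i (i + 1) (i + 2) (by simp) (by simp),
    ShortComplex.moduleCat_exact_iff] at h1
  obtain ⟨g, hg⟩ := h1 z hz
  exact ⟨g, hg⟩

end ExtGroups

/-- A module without self-extensions in high degrees is projective: `W i`, the cokernel of
`P (i + 1) → P i`, is the `i`-th syzygy of `M`. -/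
theorem projective_of_subsingleton (k : Type) [Field k] (G : Type) [Group G] [Finite G]
    (M : ModuleCat.{0} (MonoidAlgebra k G)) (n : ℕ)
    (h : ∀ i ≥ n, Subsingleton (((Ext k (ModuleCat (MonoidAlgebra k G)) (i + 1)).obj (op M)).obj M)) :
    Projective M := by
  let P : ProjectiveResolution M := projectiveResolution M
  let _ : ∀ A : ModuleCat.{0} (MonoidAlgebra k G), Module k A := fun A =>
    Module.compHom A (algebraMap k (MonoidAlgebra k G))
  have _ : ∀ A : ModuleCat.{0} (MonoidAlgebra k G), IsScalarTower k (MonoidAlgebra k G) A := fun A =>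
    ⟨fun c a x => by rw [Algebra.smul_def, mul_smul]; rfl⟩
  let D : ∀ i, P.complex.X (i + 1) →ₗ[MonoidAlgebra k G] P.complex.X i := fun i =>
    (P.complex.d (i + 1) i).hom
  have hD : ∀ i x, D i x = 0 → ∃ y, D (i + 1) y = x := fun i x hx =>
    (ShortComplex.moduleCat_exact_iff _).1 (P.exact_succ i) x hx
  have hDD : ∀ i x, D i (D (i + 1) x) = 0 := fun i x =>
    LinearMap.congr_fun (congrArg ModuleCat.Hom.hom (P.complex.d_comp_d (i + 2) (i + 1) i)) x
  let W : ℕ → Type := fun i => P.complex.X i ⧸ LinearMap.range (D i)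
  let d : ∀ i, P.complex.X i →ₗ[MonoidAlgebra k G] W i := fun i => (LinearMap.range (D i)).mkQ
  let j : ∀ i, W (i + 1) →ₗ[MonoidAlgebra k G] P.complex.X i := fun i =>
    (LinearMap.range (D (i + 1))).liftQ (D i) (by
      rintro _ ⟨x, rfl⟩
      exact hDD i x)
  have S : Syz k G (fun i => P.complex.X i) W M d j n :=
    { proj := fun i => (IsProjective.iff_projective (P.complex.X i)).2 (P.projective i)
      surj := fun i => Submodule.mkQ_surjective _
      inj := fun i => by
        rw [← LinearMap.ker_eq_bot, Submodule.ker_liftQ_eq_bot']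
        apply le_antisymm
        · rintro _ ⟨x, rfl⟩
          exact hDD i x
        · intro x hx
          exact hD i x hx
      comp := fun i w => by
        obtain ⟨x, rfl⟩ := Submodule.mkQ_surjective _ w
        exact (Submodule.Quotient.mk_eq_zero _).2 ⟨x, rfl⟩
      exact := fun i x hx => by
        obtain ⟨y, rfl⟩ := (Submodule.Quotient.mk_eq_zero _).1 hx
        exact ⟨Submodule.Quotient.mk y, rfl⟩
      extend := fun i hi f => by
        obtain ⟨g, hg⟩ := exists_extension P (h i hi) (ModuleCat.ofHom (f ∘ₗ d (i + 1))) (by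
          ext x
          change f (d (i + 1) (D (i + 1) x)) = 0
          have h0 : d (i + 1) (D (i + 1) x) = 0 := (Submodule.Quotient.mk_eq_zero _).2 ⟨x, rfl⟩
          rw [h0, map_zero])
        refine ⟨g.hom, LinearMap.ext fun w => ?_⟩
        obtain ⟨x, rfl⟩ := Submodule.mkQ_surjective _ w
        exact LinearMap.congr_fun (congrArg ModuleCat.Hom.hom hg) x }
  let π : P.complex.X 0 →ₗ[MonoidAlgebra k G] M := (P.π.f 0).hom
  have hπ : Function.Surjective π := (ModuleCat.epi_iff_surjective (P.π.f 0)).1 inferInstance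
  have hker : LinearMap.range (D 0) = LinearMap.ker π := by
    apply le_antisymm
    · rintro _ ⟨x, rfl⟩
      exact LinearMap.congr_fun (congrArg ModuleCat.Hom.hom P.complex_d_comp_π_f_zero) x
    · intro x hx
      exact (ShortComplex.moduleCat_exact_iff _).1 P.exact₀ x hx
  let e : W 0 ≃ₗ[MonoidAlgebra k G] M :=
    (Submodule.quotEquivOfEq _ _ hker).trans (π.quotKerEquivOfSurjective hπ)
  exact (IsProjective.iff_projective M).1 (S.projective e)

end SelfExt


/-- Let `G` be a finite group, `k` a field and `M` a finitely
generated non-projective module over the group algebra `kG`.  Then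
`Ext_{kG}^n(M, M) ≠ 0` for infinitely many integers `n ≥ 0`. -/
theorem ext_self_infinitely_nonzero_of_not_projective
    (k : Type) [Field k] (G : Type) [Group G] [Finite G]
    (M : ModuleCat (MonoidAlgebra k G))
    (hfg : Module.Finite (MonoidAlgebra k G) M)
    (hnp : ¬ Projective M) :
    {n : ℕ | Nontrivial (((Ext k (ModuleCat (MonoidAlgebra k G)) n).obj (op M)).obj
      M)}.Infinite := by
  intro hfin
  obtain ⟨n, hn⟩ := hfin.bddAbove
  refine hnp (SelfExt.projective_of_subsingleton k G M n fun i hi => ?_)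
  rw [← not_nontrivial_iff_subsingleton]
  intro h
  have := hn h
  omega
end
end

section
/- Let A be a finite-dimensional self-injective k-algebra of finite representation type. Then for every finitely generated non-projective A-module M there are infinitely many integers n with Ext_A^n(M, M) ≠ 0. -/
/-!
Fix short exact sequences `0 → K (n + 1) → P n → K n → 0` with `K 0 = M` and every `P n` free of
finite rank. Over a self-injective algebra each `P n` is also injective, so every `K n` is again
finitely generated and non-projective (`not_projective_fgSyzygy`), and hence has an indecomposable
non-projective direct summand (`exists_indecomposable_retract`). Finite representation type and
the pigeonhole principle give one such summand `Y` shared by `K n` for infinitely many `n`.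

If `Y` is a summand of both `K n` and `K (n + d)` with `d ≥ 1`, the composite
`K (n + d) → Y → K n` does not factor through a projective module, since otherwise `Y` would be
projective. As `P` consists of projective-injective objects, the syzygy operator is full and
reflects zero on morphisms modulo projectives (`SyzygySequence.exists_shift`), so there is a
morphism `K d → K 0 = M` which does not factor through a projective. It therefore does not extend
along `K d → P (d - 1)`, which means that it represents a nonzero class in `Ext^d(M, M)`
(`SyzygySequence.nontrivial_ext`). Fixing `n`, infinitely many `d` occur. This uses neither minimal
resolutions nor the uniqueness part of the Krull-Schmidt theorem.

The universe of the modules classified by the finiteness hypothesis is independent of that of `M`;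
`finite_rep_type_descend` transports the hypothesis along `ULift`.
-/

open CategoryTheory Opposite

noncomputable section

/-! ### Syzygies and Ext in an abelian category -/

section AbelianPart

open Limits

universe v u

variable {C : Type u} [Category.{v} C] [Abelian C]

/-- A sequence of short exact sequences `0 ⟶ K (n + 1) ⟶ P n ⟶ K n ⟶ 0` with all `P n`
projective: `K n` is an `n`-th syzygy of `K 0`, not necessarily the minimal one. -/
structure SyzygySequence (C : Type u) [Category.{v} C] [Abelian C] where
  K : ℕ → C
  P : ℕ → C
  i : ∀ n, K (n + 1) ⟶ P n
  p : ∀ n, P n ⟶ K n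
  w : ∀ n, i n ≫ p n = 0
  shortExact : ∀ n, (ShortComplex.mk (i n) (p n) (w n)).ShortExact
  proj : ∀ n, Projective (P n)

namespace SyzygySequence

variable (S : SyzygySequence C)

instance (n : ℕ) : Projective (S.P n) := S.proj n

instance (n : ℕ) : Epi (S.p n) := (S.shortExact n).epi_g

instance (n : ℕ) : Mono (S.i n) := (S.shortExact n).mono_f

/-- The complex `⋯ ⟶ P 2 ⟶ P 1 ⟶ P 0` obtained by splicing. -/
abbrev complex : ChainComplex C ℕ :=
  ChainComplex.of S.P (fun n ↦ S.p (n + 1) ≫ S.i n) (fun n ↦ by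
    rw [Category.assoc, reassoc_of% (S.w (n + 1)), zero_comp, comp_zero])

lemma complex_d (n : ℕ) : S.complex.d (n + 1) n = S.p (n + 1) ≫ S.i n :=
  ChainComplex.of_d S.P (fun n ↦ S.p (n + 1) ≫ S.i n) n

lemma splice_p (n : ℕ) : (S.p (n + 1) ≫ S.i n) ≫ S.p n = 0 := by
  simp [S.w]

lemma splice_splice (n : ℕ) : (S.p (n + 2) ≫ S.i (n + 1)) ≫ S.p (n + 1) ≫ S.i n = 0 := by
  rw [← Category.assoc, S.splice_p (n + 1), zero_comp]

lemma exact_splice (n : ℕ) :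
    (ShortComplex.mk (S.p (n + 1) ≫ S.i n) (S.p n) (S.splice_p _)).Exact := by
  let φ : ShortComplex.mk (S.p (n + 1) ≫ S.i n) (S.p n) (S.splice_p _) ⟶
      ShortComplex.mk (S.i n) (S.p n) (S.w n) :=
    { τ₁ := S.p (n + 1), τ₂ := 𝟙 _, τ₃ := 𝟙 _ }
  have : Epi φ.τ₁ := by dsimp [φ]; infer_instance
  have : IsIso φ.τ₂ := by dsimp [φ]; infer_instance
  have : Mono φ.τ₃ := by dsimp [φ]; infer_instance
  exact (ShortComplex.exact_iff_of_epi_of_isIso_of_mono φ).2 (S.shortExact n).exact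

/-- Exactness at `P (n + 1)` of the spliced complex: the monomorphism `K (n + 1) ⟶ P n` does not
change the kernel. -/
lemma exact_splice_succ (n : ℕ) :
    (ShortComplex.mk (S.p (n + 2) ≫ S.i (n + 1)) (S.p (n + 1) ≫ S.i n)
      (S.splice_splice n)).Exact := by
  let φ : ShortComplex.mk (S.p (n + 2) ≫ S.i (n + 1)) (S.p (n + 1)) (S.splice_p _) ⟶
      ShortComplex.mk (S.p (n + 2) ≫ S.i (n + 1)) (S.p (n + 1) ≫ S.i n)
        (S.splice_splice n) :=
    { τ₁ := 𝟙 _, τ₂ := 𝟙 _, τ₃ := S.i n }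
  have : Epi φ.τ₁ := by dsimp [φ]; infer_instance
  have : IsIso φ.τ₂ := by dsimp [φ]; infer_instance
  have : Mono φ.τ₃ := by dsimp [φ]; infer_instance
  exact (ShortComplex.exact_iff_of_epi_of_isIso_of_mono φ).1 (S.exact_splice (n + 1))

lemma complex_exactAt_succ (n : ℕ) : S.complex.ExactAt (n + 1) := by
  rw [HomologicalComplex.exactAt_iff' _ (n + 1 + 1) (n + 1) n (by simp) (by simp)]
  refine (ShortComplex.exact_iff_of_iso ?_).2 (S.exact_splice_succ n)
  exact ShortComplex.isoMk (Iso.refl (S.P (n + 2))) (Iso.refl (S.P (n + 1))) (Iso.refl (S.P n))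
    ((Category.id_comp _).trans ((S.complex_d (n + 1)).symm.trans (Category.comp_id _).symm))
    ((Category.id_comp _).trans ((S.complex_d n).symm.trans (Category.comp_id _).symm))

set_option maxHeartbeats 400000 in
/-- The spliced complex, as a projective resolution of `K 0`. -/
def resolution : ProjectiveResolution (S.K 0) where
  complex := S.complex
  projective n := S.proj n
  π := (ChainComplex.toSingle₀Equiv _ _).symm ⟨S.p 0, by
    rw [complex_d]; exact S.splice_p 0⟩
  quasiIso := ⟨fun n => by
    cases n
    · rw [ChainComplex.quasiIsoAt₀_iff, ShortComplex.quasiIso_iff_of_zeros']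
      · refine (ShortComplex.exact_and_epi_g_iff_of_iso ?_).2
          ⟨S.exact_splice 0, by dsimp; infer_instance⟩
        exact ShortComplex.isoMk (Iso.refl (S.P 1)) (Iso.refl (S.P 0)) (Iso.refl (S.K 0))
          ((Category.id_comp _).trans ((S.complex_d 0).symm.trans (Category.comp_id _).symm))
          ((Category.id_comp _).trans ((ChainComplex.toSingle₀Equiv_symm_apply_f_zero (C := S.complex)
            (S.p 0) (by rw [complex_d]; exact S.splice_p 0)).symm.trans
            (Category.comp_id _).symm))
      all_goals rfl
    · rw [quasiIsoAt_iff_exactAt']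
      · apply complex_exactAt_succ
      · apply ChainComplex.exactAt_succ_single_obj⟩

/-- A morphism `K (n + 1) ⟶ Y` which does not extend along `K (n + 1) ⟶ P n` defines
a nonzero class in `Ext^(n + 1) (K 0) Y`. -/
lemma nontrivial_ext (k : Type*) [Ring k] [Linear k C] [EnoughProjectives C]
    (n : ℕ) {Y : C} (g : S.K (n + 1) ⟶ Y) (hg : ¬ ∃ t, S.i n ≫ t = g) :
    Nontrivial (((Ext k C (n + 1)).obj (op (S.K 0))).obj Y) := by
  by_contra h
  rw [not_nontrivial_iff_subsingleton] at h
  have h0 : IsZero ((S.complex.linearYonedaObj k Y).homology (n + 1)) :=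
    (ModuleCat.isZero_of_subsingleton _).of_iso (S.resolution.isoExt (R := k) (n + 1) Y).symm
  rw [← HomologicalComplex.exactAt_iff_isZero_homology,
    HomologicalComplex.exactAt_iff' _ n (n + 1) (n + 1 + 1) (by simp) (by simp),
    ShortComplex.moduleCat_exact_iff] at h0
  obtain ⟨t, ht⟩ := h0 (S.p (n + 1) ≫ g : S.P (n + 1) ⟶ Y) (by
    change S.complex.d (n + 1 + 1) (n + 1) ≫ (S.p (n + 1) ≫ g) = 0
    rw [complex_d]
    exact (Category.assoc _ _ _).symm.trans
      ((congrArg (· ≫ g) (S.splice_p (n + 1))).trans zero_comp))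
  refine hg ⟨t, ?_⟩
  rw [← cancel_epi (S.p (n + 1))]
  replace ht : S.complex.d (n + 1) n ≫ t = S.p (n + 1) ≫ g := ht
  rw [complex_d] at ht
  exact (Category.assoc _ _ _).symm.trans ht

/-- A morphism `K (m + 1) ⟶ K n` extends to the projective-injective object `P m` iff
it lifts to `P n`: both say that it is stably zero. -/
lemma extends_iff_lifts [∀ n, Injective (S.P n)] {m n : ℕ} (g : S.K (m + 1) ⟶ S.K n) :
    (∃ t, S.i m ≫ t = g) ↔ ∃ h, h ≫ S.p n = g := by
  constructor
  · rintro ⟨t, rfl⟩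
    exact ⟨S.i m ≫ Projective.factorThru t (S.p n), by simp⟩
  · rintro ⟨h, rfl⟩
    exact ⟨Injective.factorThru h (S.i m) ≫ S.p n, by simp⟩

/-- The stable syzygy functor is full and reflects zero: a stably nonzero morphism
`K (m + 1) ⟶ K (n + 1)` descends to a stably nonzero morphism `K m ⟶ K n`. -/
lemma exists_shift [∀ n, Injective (S.P n)] {m n : ℕ} (g : S.K (m + 1) ⟶ S.K (n + 1))
    (hg : ¬ ∃ h, h ≫ S.p (n + 1) = g) :
    ∃ g' : S.K m ⟶ S.K n, ¬ ∃ h, h ≫ S.p n = g' := by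
  let u : S.P m ⟶ S.P n := Injective.factorThru (g ≫ S.i n) (S.i m)
  have hu : S.i m ≫ u = g ≫ S.i n := Injective.comp_factorThru _ _
  obtain ⟨g', hg'⟩ : ∃ g' : S.K m ⟶ S.K n, S.p m ≫ g' = u ≫ S.p n :=
    ⟨(S.shortExact m).exact.desc (u ≫ S.p n) (by
      dsimp; rw [reassoc_of% hu, S.w, comp_zero]), (S.shortExact m).exact.g_desc _ _⟩
  refine ⟨g', fun ⟨h, hh⟩ ↦ hg ((S.extends_iff_lifts g).1 ?_)⟩
  obtain ⟨t, ht⟩ : ∃ t : S.P m ⟶ S.K (n + 1), t ≫ S.i n = u - S.p m ≫ h :=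
    ⟨(S.shortExact n).exact.lift (u - S.p m ≫ h) (by simp [hh, hg']),
      (S.shortExact n).exact.lift_f _ _⟩
  refine ⟨t, ?_⟩
  rw [← cancel_mono (S.i n), Category.assoc, ht, Preadditive.comp_sub, hu,
    reassoc_of% (S.w m), zero_comp, sub_zero]

/-- The `n`-fold iterate of `exists_shift`. -/
lemma exists_shift_add [∀ n, Injective (S.P n)] (m n : ℕ) (g : S.K (m + n) ⟶ S.K n)
    (hg : ¬ ∃ h, h ≫ S.p n = g) :
    ∃ g' : S.K m ⟶ S.K 0, ¬ ∃ h, h ≫ S.p 0 = g' := by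
  induction n with
  | zero => exact ⟨g, hg⟩
  | succ n ih =>
    obtain ⟨g', hg'⟩ := S.exists_shift (m := m + n) g hg
    exact ih g' hg'

/-- If `K (m + 1 + n)` and `K n` have a common non-projective retract, then
`Ext^(m + 1) (K 0) (K 0)` is nonzero. -/
lemma nontrivial_ext_of_retract [∀ n, Injective (S.P n)]
    (k : Type*) [Ring k] [Linear k C] [EnoughProjectives C] (m n : ℕ) {Y : C}
    (hY : ¬ Projective Y) (r : Retract Y (S.K (m + 1 + n))) (s : Retract Y (S.K n)) :
    Nontrivial (((Ext k C (m + 1)).obj (op (S.K 0))).obj (S.K 0)) := by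
  obtain ⟨g, hg⟩ := S.exists_shift_add (m + 1) n (r.r ≫ s.i) (by
    rintro ⟨h, hh⟩
    refine hY (Retract.projective (X := Y) (Y := S.P n) ⟨r.i ≫ h, S.p n ≫ s.r, ?_⟩)
    rw [Category.assoc, reassoc_of% hh]
    simp)
  exact S.nontrivial_ext k m g (fun h ↦ hg ((S.extends_iff_lifts g).1 h))

end SyzygySequence

end AbelianPart

/-! ### Finitely generated modules over a self-injective ring -/

section ModulePart

open Limits

universe u

variable {A : Type} [Ring A]

/-- Over an Artinian ring, a finitely generated non-projective module has an indecomposable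
non-projective direct summand, by induction on the length. -/
lemma exists_indecomposable_retract [IsArtinianRing A] (X : ModuleCat.{0} A)
    (hX : Module.Finite A X) (hnp : ¬ Projective X) :
    ∃ Y : ModuleCat.{0} A, Module.Finite A Y ∧ Indecomposable Y ∧ ¬ Projective Y ∧
      Nonempty (Retract Y X) := by
  induction hl : Module.length A X using WellFoundedLT.induction generalizing X with
  | ind l ih =>
  subst hl
  have hX0 : ¬ IsZero X := fun h ↦ hnp h.projective
  by_cases hind : ∀ Y Z : ModuleCat.{0} A, (X ≅ Y ⊞ Z) → IsZero Y ∨ IsZero Z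
  · exact ⟨X, hX, ⟨hX0, hind⟩, hnp, ⟨Retract.refl X⟩⟩
  push Not at hind
  obtain ⟨Y, Z, e, hY, hZ⟩ := hind
  rw [ModuleCat.isZero_iff_subsingleton, not_subsingleton_iff_nontrivial] at hY hZ
  let e' : X ≃ₗ[A] Y × Z := (e ≪≫ ModuleCat.biprodIsoProd Y Z).toLinearEquiv
  have hfYZ : Module.Finite A (Y × Z) := Module.Finite.equiv e'
  have hfY : Module.Finite A Y := Module.Finite.of_surjective (LinearMap.fst A Y Z)
    LinearMap.fst_surjective
  have hfZ : Module.Finite A Z := Module.Finite.of_surjective (LinearMap.snd A Y Z)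
    LinearMap.snd_surjective
  have hlen : Module.length A X = Module.length A Y + Module.length A Z := by
    rw [e'.length_eq, Module.length_prod]
  have hYt : Module.length A Y ≠ ⊤ := Module.length_ne_top
  have hZt : Module.length A Z ≠ ⊤ := Module.length_ne_top
  have hYp : 0 < Module.length A Y := Module.length_pos
  have hZp : 0 < Module.length A Z := Module.length_pos
  by_cases hYP : Projective Y
  · have hZP : ¬ Projective Z := fun h ↦ hnp (Projective.of_iso e.symm inferInstance)
    obtain ⟨W, h1, h2, h3, ⟨r⟩⟩ := ih (Module.length A Z)
      (by rw [hlen]; exact ENat.lt_add_left hZt hYp) Z hfZ hZP rfl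
    exact ⟨W, h1, h2, h3, ⟨r.trans ⟨biprod.inr ≫ e.inv, e.hom ≫ biprod.snd, by simp⟩⟩⟩
  · obtain ⟨W, h1, h2, h3, ⟨r⟩⟩ := ih (Module.length A Y)
      (by rw [hlen, add_comm]; exact ENat.lt_add_left hYt hZp) Y hfY hYP rfl
    exact ⟨W, h1, h2, h3, ⟨r.trans ⟨biprod.inl ≫ e.inv, e.hom ≫ biprod.fst, by simp⟩⟩⟩

lemma injective_free (hA : Injective (ModuleCat.of A A)) (n : ℕ) :
    Injective (ModuleCat.of A (Fin n → A)) := by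
  rw [← Module.injective_iff_injective_object] at hA ⊢
  infer_instance

lemma injective_of_finite_projective (hA : Injective (ModuleCat.of A A)) (X : ModuleCat.{0} A)
    (hX : Module.Finite A X) [Projective X] : Injective X := by
  obtain ⟨n, f, hf⟩ := Module.Finite.exists_fin' A X
  have : Epi (ModuleCat.ofHom f) := (ModuleCat.epi_iff_surjective _).2 hf
  have := injective_free hA n
  exact Retract.injective (Y := ModuleCat.of A (Fin n → A))
    ⟨Projective.factorThru (𝟙 X) (ModuleCat.ofHom f), ModuleCat.ofHom f, by simp⟩

/-- The rank of a chosen finite free cover. -/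
def coverRank (X : {X : ModuleCat.{0} A // Module.Finite A X}) : ℕ :=
  have := X.2; (Module.Finite.exists_fin' A X.1).choose

/-- A chosen finite free cover `A ^ n → X` of a finitely generated module. -/
def coverMap (X : {X : ModuleCat.{0} A // Module.Finite A X}) :
    (Fin (coverRank X) → A) →ₗ[A] X.1 :=
  have := X.2; (Module.Finite.exists_fin' A X.1).choose_spec.choose

lemma coverMap_surjective (X : {X : ModuleCat.{0} A // Module.Finite A X}) :
    Function.Surjective (coverMap X) :=
  have := X.2; (Module.Finite.exists_fin' A X.1).choose_spec.choose_spec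

/-- The iterated kernels of chosen finite free covers, starting from `X`. -/
def fgSyzygy [IsNoetherianRing A] (X : {X : ModuleCat.{0} A // Module.Finite A X}) :
    ℕ → {X : ModuleCat.{0} A // Module.Finite A X}
  | 0 => X
  | n + 1 => ⟨ModuleCat.of A (LinearMap.ker (coverMap (fgSyzygy X n))), by
      dsimp; infer_instance⟩

/-- The syzygy sequence of a finitely generated module given by finite free covers. -/
def fgSyzygySequence [IsNoetherianRing A] (X : {X : ModuleCat.{0} A // Module.Finite A X}) :
    SyzygySequence (ModuleCat.{0} A) where
  K n := (fgSyzygy X n).1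
  P n := ModuleCat.of A (Fin (coverRank (fgSyzygy X n)) → A)
  i n := (coverMap (fgSyzygy X n)).shortComplexKer.f
  p n := (coverMap (fgSyzygy X n)).shortComplexKer.g
  w _ := (coverMap (fgSyzygy X _)).shortComplexKer.zero
  shortExact _ := LinearMap.shortExact_shortComplexKer (coverMap_surjective _)
  proj _ := ModuleCat.projective_of_free (Pi.basisFun A _)

/-- Over a self-injective ring, syzygies preserve non-projectivity: a finitely generated
projective kernel is injective, so the covering sequence splits. -/
lemma not_projective_fgSyzygy [IsNoetherianRing A] (hA : Injective (ModuleCat.of A A))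
    (X : {X : ModuleCat.{0} A // Module.Finite A X}) (hX : ¬ Projective X.1) (n : ℕ) :
    ¬ Projective (fgSyzygy X n).1 := by
  induction n with
  | zero => exact hX
  | succ n ih =>
    intro h
    let S := fgSyzygySequence X
    have hinj : Injective (S.K (n + 1)) :=
      injective_of_finite_projective hA (fgSyzygy X (n + 1)).1 (fgSyzygy X (n + 1)).2
    have s := (S.shortExact n).splittingOfInjective
    exact ih (Retract.projective (X := S.K n) (Y := S.P n) ⟨s.s, S.p n, s.s_g⟩)

/-- Enlarging the universe of a module preserves indecomposability: a decomposition of the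
lifted module is carried by two submodules of the original one. -/
lemma indecomposable_ulift (Y : ModuleCat.{0} A) (hY : Indecomposable Y) :
    Indecomposable (ModuleCat.of.{u} A (ULift.{u} Y)) := by
  obtain ⟨h0, hdec⟩ := hY
  rw [ModuleCat.isZero_iff_subsingleton, not_subsingleton_iff_nontrivial] at h0
  refine ⟨fun h ↦ ?_, fun Z W e ↦ ?_⟩
  · have := ModuleCat.subsingleton_of_isZero h
    exact not_subsingleton (ULift.{u} Y) this
  · let e' : Y ≃ₗ[A] Z × W := ULift.moduleEquiv.symm ≪≫ₗ
      (e ≪≫ ModuleCat.biprodIsoProd Z W).toLinearEquiv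
    let z : Z ≃ₗ[A] LinearMap.range (e'.symm.toLinearMap ∘ₗ LinearMap.inl A Z W) :=
      LinearEquiv.ofInjective _ (e'.symm.injective.comp LinearMap.inl_injective)
    let w : W ≃ₗ[A] LinearMap.range (e'.symm.toLinearMap ∘ₗ LinearMap.inr A Z W) :=
      LinearEquiv.ofInjective _ (e'.symm.injective.comp LinearMap.inr_injective)
    let Z' := ModuleCat.of A (LinearMap.range (e'.symm.toLinearMap ∘ₗ LinearMap.inl A Z W))
    let W' := ModuleCat.of A (LinearMap.range (e'.symm.toLinearMap ∘ₗ LinearMap.inr A Z W))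
    let e'' : Y ≃ₗ[A] Z' × W' := e' ≪≫ₗ z.prodCongr w
    have := hdec Z' W' (e''.toModuleIso ≪≫ (ModuleCat.biprodIsoProd Z' W').symm)
    simp only [ModuleCat.isZero_iff_subsingleton] at this ⊢
    exact this.imp (fun (_ : Subsingleton Z') ↦ z.toEquiv.subsingleton_congr.2 ‹_›)
      (fun (_ : Subsingleton W') ↦ w.toEquiv.subsingleton_congr.2 ‹_›)

/-- Finite representation type, tested on modules in an arbitrary universe, implies finite
representation type for modules in `Type`. -/
lemma finite_rep_type_descend
    (h : ∃ (ι : Type) (_ : Finite ι) (f : ι → ModuleCat.{u} A),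
      ∀ M : ModuleCat.{u} A, Module.Finite A M → Indecomposable M →
        ∃ i : ι, Nonempty (M ≅ f i)) :
    ∃ (ι : Type) (_ : Finite ι) (f : ι → ModuleCat.{0} A),
      ∀ M : ModuleCat.{0} A, Module.Finite A M → Indecomposable M →
        ∃ i : ι, Nonempty (M ≅ f i) := by
  obtain ⟨ι, hι, f, hf⟩ := h
  have key : ∀ i, ∃ Y : ModuleCat.{0} A, ∀ M : ModuleCat.{0} A,
      Nonempty (ModuleCat.of.{u} A (ULift.{u} M) ≅ f i) → Nonempty (M ≅ Y) := by
    intro i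
    by_cases h : ∃ Y : ModuleCat.{0} A, Nonempty (ModuleCat.of.{u} A (ULift.{u} Y) ≅ f i)
    · obtain ⟨Y, ⟨e⟩⟩ := h
      exact ⟨Y, fun M ⟨e'⟩ ↦ ⟨(ULift.moduleEquiv.symm ≪≫ₗ (e' ≪≫ e.symm).toLinearEquiv ≪≫ₗ
        ULift.moduleEquiv).toModuleIso⟩⟩
    · exact ⟨ModuleCat.of A PUnit, fun M hM ↦ (h ⟨M, hM⟩).elim⟩
  choose Y hY using key
  refine ⟨ι, hι, Y, fun M hM hind ↦ ?_⟩
  obtain ⟨i, hi⟩ := hf (ModuleCat.of.{u} A (ULift.{u} M))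
    (Module.Finite.equiv (ULift.moduleEquiv (R := A) (M := M)).symm) (indecomposable_ulift M hind)
  exact ⟨i, hY i M hi⟩

end ModulePart

theorem ext_self_infinitely_nonzero_of_finite_rep_type
    (k A : Type) [Field k] [Ring A] [Algebra k A] [FiniteDimensional k A]
    (hselfinj : Injective (ModuleCat.of A A))
    (hfinrep : ∃ (ι : Type) (_ : Finite ι) (f : ι → ModuleCat A),
      ∀ M : ModuleCat A, Module.Finite A M → Indecomposable M →
        ∃ i : ι, Nonempty (M ≅ f i))
    (M : ModuleCat A) (hfg : Module.Finite A M) (hnp : ¬ Projective M) :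
    {n : ℕ | Nontrivial (((Ext k (ModuleCat A) n).obj (op M)).obj M)}.Infinite := by
  obtain ⟨ι, _, f, hf⟩ := finite_rep_type_descend hfinrep
  have : IsArtinianRing A := IsArtinianRing.of_finite k A
  let S := fgSyzygySequence ⟨M, hfg⟩
  have : ∀ n, Injective (S.P n) := fun n ↦ injective_free hselfinj _
  have key : ∀ n, ∃ j : ι, ¬ Projective (f j) ∧ Nonempty (Retract (f j) (S.K n)) := by
    intro n
    obtain ⟨Y, hY, hind, hYp, ⟨r⟩⟩ := exists_indecomposable_retract (S.K n)
      (fgSyzygy ⟨M, hfg⟩ n).2 (not_projective_fgSyzygy hselfinj ⟨M, hfg⟩ hnp n)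
    obtain ⟨j, ⟨e⟩⟩ := hf Y hY hind
    exact ⟨j, fun h ↦ hYp (Projective.of_iso e.symm h),
      ⟨Retract.trans ⟨e.inv, e.hom, by simp⟩ r⟩⟩
  choose j hj r using key
  -- One class `f j₀` occurs as a summand of `K n` for infinitely many `n`; `n₀` is one of them.
  obtain ⟨j₀, hj₀⟩ := Finite.exists_infinite_fiber j
  rw [Set.infinite_coe_iff] at hj₀
  obtain ⟨n₀, hn₀⟩ := hj₀.nonempty
  refine Set.infinite_of_forall_exists_gt fun a ↦ ?_
  obtain ⟨m, hm, ham⟩ := hj₀.exists_gt (a + n₀)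
  obtain ⟨d, rfl⟩ : ∃ d, m = a + d + 1 + n₀ := ⟨m - n₀ - a - 1, by omega⟩
  refine ⟨a + d + 1, ?_, by omega⟩
  simp only [Set.mem_preimage, Set.mem_singleton_iff] at hm hn₀
  obtain ⟨s⟩ := r (a + d + 1 + n₀)
  obtain ⟨t⟩ := r n₀
  have hp := hj n₀
  rw [hm] at s
  rw [hn₀] at t hp
  exact S.nontrivial_ext_of_retract k (a + d) n₀ hp s t
end
end
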